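/- Dwork's rationality theorem (in reciprocal-root form): let p be a prime, q = p^k, let f₁,…,f_r be polynomials in m variables with coefficients in 𝔽_q, let K be an algebraic closure of 𝔽_q, and for each n ≥ 1 let N_n be the (finite) number of tuples x = (x₁,…,x_m) ∈ K^m such that x_j^{q^n} = x_j for all j and f_i(x) = 0 for all i (i.e., the number of 𝔽_{q^n}-points of the affine variety cut out by the f_i). Then there exist complex numbers α₁,…,α_s and β₁,…,β_t such that N_n = Σ_{j=1}^t β_j^n − Σ_{i=1}^s α_i^n for every n ≥ 1. -/

import Mathlib

/-!
Dwork's proof of rationality. Write `q = p ^ k`, and work in an algebraically closed complete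
extension `L` of `ℚ_p`, namely `ℂ_p`.

*Counting through an additive character.* The series `exp (π (T - T ^ p))` with `π ^ (p - 1) = -p`
has coefficients that decay geometrically (`splitCoeff_bound`), because it differs from the
Artin–Hasse exponential, whose coefficients are `p`-integral (`artinHasse_integral_padic`), by
factors that are small. The product of its values over the Frobenius conjugates of a Teichmüller
lift is a nontrivial additive character `psi` of `𝔽_{p^s}` with values in `L` (`psi_add`,
`psi_ne_one`). By orthogonality (`sum_psi_mul`), summing `psi (∑ yᵢ fᵢ(x))` over all `x` and `y`
counts the points `x` up to a power of the cardinality of the field (`sum_psi_pairing`), and the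
affine space of all `(x, y)` is a disjoint union of tori (`sum_torus_decomp`).

*Meromorphy.* On a torus, the sum over points with coordinates in `𝔽_{q^n}` of
`∏_{i<n} G (Z ^ (q ^ i))` is `(q ^ n - 1) ^ d` times the trace of the `n`-th power of Dwork's
operator (`trace_formula`). For polynomials `G` with uniformly geometrically decaying coefficients,
the Fredholm determinants of these operators are bounded on every disc independently of the degree
of `G` (`fredholm_bound`), so a bound survives in the limit where `G` becomes a product of
splitting functions (`mer_of_limit`). No compact operators on infinite dimensional spaces are
needed. Hence the series `Z = exp (∑ N_n T ^ n / n)` is a quotient of two power series that converge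
on all of `L` (`mer_count`).

*Rationality.* The coefficients of `Z` are integers, because `N_n` counts the fixed points of the
`n`-th iterate of Frobenius (`integral_of_locally_finite`), and they are at most `C ^ n` in absolute
value (`zcoeff_le`). Together with `p`-adic meromorphy this forces the product of the archimedean
and the `p`-adic absolute value of large Hankel determinants of the coefficients below `1`, so these
integers vanish (`hankel_vanish`). By Kronecker's criterion (`kronecker_recurrence`) `Z` is
rational. Factoring numerator and denominator over `ℂ` and taking logarithmic derivatives gives the
expression of `N_n` as a difference of power sums (`exists_multiset_of_recurrence`).
-/

/-! ### The series `exp (∑ u n Tⁿ / n)` and `det (1 - T M)` -/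


namespace Dwork
open PowerSeries

section logExp
variable {F : Type*} [Field F]

/-- The `n`-th coefficient of `exp (∑_{n ≥ 1} u n * T ^ n / n)`, computed by the recursion that comes
from its logarithmic derivative. The value `u 0` plays no role. -/
noncomputable def zcoeff (u : ℕ → F) : ℕ → F
  | 0 => 1
  | n + 1 => (∑ i : Fin (n + 1), u (i + 1) * zcoeff u (n - i)) / (n + 1 : F)
decreasing_by omega

/-- The power series `exp (∑_{n ≥ 1} u n * T ^ n / n)`; for `u n` the number of points over the
extension of degree `n` it is the zeta function. -/
noncomputable def zser (u : ℕ → F) : PowerSeries F := PowerSeries.mk (zcoeff u)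

theorem zcoeff_zero (u : ℕ → F) : zcoeff u 0 = 1 := by rw [zcoeff]

@[simp] theorem coeff_zser (u : ℕ → F) (n : ℕ) : coeff n (zser u) = zcoeff u n := by
  simp [zser]

theorem zcoeff_succ' (u : ℕ → F) (n : ℕ) :
    zcoeff u (n + 1) = (∑ i ∈ Finset.range (n + 1), u (i + 1) * zcoeff u (n - i)) / (n + 1 : F) := by
  rw [zcoeff, Finset.sum_range]

theorem zcoeff_succ [CharZero F] (u : ℕ → F) (n : ℕ) :
    ((n : F) + 1) * zcoeff u (n + 1) = ∑ i ∈ Finset.range (n + 1), u (i + 1) * zcoeff u (n - i) := by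
  rw [zcoeff_succ', mul_div_cancel₀]
  exact_mod_cast Nat.succ_ne_zero n

theorem zser_constantCoeff (u : ℕ → F) : constantCoeff (zser u) = 1 := by
  rw [← coeff_zero_eq_constantCoeff_apply, coeff_zser, zcoeff_zero]

theorem zcoeff_congr {u v : ℕ → F} {k : ℕ} (h : ∀ n, 1 ≤ n → n ≤ k → u n = v n) :
    zcoeff u k = zcoeff v k := by
  induction k using Nat.strong_induction_on with
  | _ k ih =>
    cases k with
    | zero => rw [zcoeff_zero, zcoeff_zero]
    | succ k =>
      rw [zcoeff_succ', zcoeff_succ']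
      congr 1
      refine Finset.sum_congr rfl fun i hi => ?_
      rw [Finset.mem_range] at hi
      rw [h (i + 1) (by omega) (by omega), ih (k - i) (by omega) fun n h1 h2 => h n h1 (by omega)]

theorem zser_congr {u v : ℕ → F} (h : ∀ n, 1 ≤ n → u n = v n) : zser u = zser v := by
  ext k
  simp only [coeff_zser]
  exact zcoeff_congr fun n h1 _ => h n h1

variable [CharZero F]

theorem zser_derivative (u : ℕ → F) :
    d⁄dX F (zser u) = zser u * PowerSeries.mk fun n => u (n + 1) := by
  ext n
  rw [coeff_derivative, coeff_zser, mul_comm, zcoeff_succ, mul_comm (zser u), coeff_mul,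
    Finset.Nat.sum_antidiagonal_eq_sum_range_succ_mk]
  simp

/-- `zser u` is characterised by its constant term and its logarithmic derivative. -/
theorem zser_unique {u : ℕ → F} {G : PowerSeries F} (h0 : constantCoeff G = 1)
    (h : d⁄dX F G = G * PowerSeries.mk fun n => u (n + 1)) : G = zser u := by
  ext k
  rw [coeff_zser]
  induction k using Nat.strong_induction_on with
  | _ k ih =>
    cases k with
    | zero => rw [zcoeff_zero, coeff_zero_eq_constantCoeff_apply, h0]
    | succ k =>
      have hk : (k : F) + 1 ≠ 0 := by exact_mod_cast Nat.succ_ne_zero k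
      have h1 := congrArg (coeff k) h
      rw [coeff_derivative, mul_comm G, coeff_mul,
        Finset.Nat.sum_antidiagonal_eq_sum_range_succ_mk] at h1
      apply mul_left_cancel₀ hk
      rw [zcoeff_succ, mul_comm, h1]
      refine Finset.sum_congr rfl fun i hi => ?_
      rw [Finset.mem_range] at hi
      rw [coeff_mk, ih (k - i) (by omega)]

theorem zser_add (u v : ℕ → F) : zser (fun n => u n + v n) = zser u * zser v := by
  symm
  apply zser_unique
  · simp [zser_constantCoeff]
  · rw [Derivation.leibniz, zser_derivative, zser_derivative]
    have : (PowerSeries.mk fun n => u (n + 1) + v (n + 1)) =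
      (PowerSeries.mk fun n => u (n + 1)) + PowerSeries.mk fun n => v (n + 1) := by
      ext; simp
    rw [this]
    simp only [smul_eq_mul]
    ring

theorem zser_zero : zser (fun _ => (0 : F)) = 1 := by
  symm
  apply zser_unique
  · simp
  · rw [Derivation.map_one_eq_zero]
    ext; simp

theorem zser_sum {ι : Type*} (s : Finset ι) (u : ι → ℕ → F) :
    zser (fun n => ∑ i ∈ s, u i n) = ∏ i ∈ s, zser (u i) := by
  classical
  induction s using Finset.induction_on with
  | empty => simpa using zser_zero
  | insert a s ha ih =>
    rw [Finset.prod_insert ha, ← ih, ← zser_add]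
    congr 1
    ext n
    rw [Finset.sum_insert ha]

omit [CharZero F] in
theorem zcoeff_scale (c : F) (u : ℕ → F) (n : ℕ) :
    zcoeff (fun n => c ^ n * u n) n = c ^ n * zcoeff u n := by
  induction n using Nat.strong_induction_on with
  | _ k ih =>
    cases k with
    | zero => simp [zcoeff_zero]
    | succ k =>
      rw [zcoeff_succ', zcoeff_succ', mul_div_assoc', Finset.mul_sum]
      congr 1
      refine Finset.sum_congr rfl fun i hi => ?_
      rw [Finset.mem_range] at hi
      rw [ih (k - i) (by omega), show k + 1 = (i + 1) + (k - i) by omega, pow_add]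
      ring

omit [CharZero F] in
theorem zcoeff_map {F' : Type*} [Field F'] (φ : F →+* F') (u : ℕ → F) (n : ℕ) :
    zcoeff (fun n => φ (u n)) n = φ (zcoeff u n) := by
  induction n using Nat.strong_induction_on with
  | _ k ih =>
    cases k with
    | zero => simp [zcoeff_zero]
    | succ k =>
      rw [zcoeff_succ', zcoeff_succ', map_div₀, map_sum]
      simp only [map_add, map_natCast, map_one, map_mul]
      congr 1
      refine Finset.sum_congr rfl fun i hi => ?_
      rw [ih (k - i) (by omega)]

theorem zser_expand {p : ℕ} (hp : p ≠ 0) (u : ℕ → F) :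
    zser (fun n => if p ∣ n then (p : F) * u (n / p) else 0) = (zser u).expand p hp := by
  symm
  apply zser_unique
  · rw [constantCoeff_expand, zser_constantCoeff]
  · rw [expand_apply, derivative_subst (HasSubst.X_pow hp), zser_derivative,
      subst_mul (HasSubst.X_pow hp), ← expand_apply p hp, ← expand_apply p hp, mul_assoc]
    congr 1
    rw [PowerSeries.derivative_pow]
    ext n
    simp only [coeff_mk, derivative_X, mul_one]
    rw [mul_left_comm, ← map_natCast (C : F →+* PowerSeries F), coeff_C_mul, coeff_mul_X_pow']
    split_ifs with h1 h2 h2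
    · rw [coeff_expand]
      obtain ⟨m, hm⟩ := h2
      have hm1 : n - (p - 1) = p * (m - 1) := by
        rw [Nat.mul_sub]; omega
      rw [if_pos (hm1 ▸ dvd_mul_right _ _), hm1, hm, Nat.mul_div_cancel_left _ (Nat.pos_of_ne_zero hp),
        Nat.mul_div_cancel_left _ (Nat.pos_of_ne_zero hp), coeff_mk]
      congr 2
      have : m ≠ 0 := by rintro rfl; omega
      omega
    · rw [coeff_expand, if_neg, mul_zero]
      intro h3
      apply h2
      have := dvd_add h3 (dvd_refl p)
      rwa [show n - (p - 1) + p = n + 1 by omega] at this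
    · exfalso
      have := Nat.le_of_dvd (by omega) h2
      omega
    · simp

theorem zser_single_one [Algebra ℚ F] (c : F) :
    zser (fun n => if n = 1 then c else 0) = rescale c (PowerSeries.exp F) := by
  symm
  apply zser_unique
  · rw [← coeff_zero_eq_constantCoeff_apply, coeff_rescale]
    simp
  · ext n
    rw [coeff_derivative, coeff_rescale, coeff_exp]
    have : (PowerSeries.mk fun n => if n + 1 = 1 then c else 0) = C c := by
      ext n; simp [coeff_C]
    rw [this, coeff_mul_C, coeff_rescale, coeff_exp, Nat.factorial_succ]
    simp only [map_div₀, map_one, map_natCast, Nat.cast_mul]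
    have h1 : ((n + 1 : ℕ) : F) ≠ 0 := by exact_mod_cast Nat.succ_ne_zero n
    have h2 : ((n.factorial : ℕ) : F) ≠ 0 := by exact_mod_cast n.factorial_ne_zero
    push_cast at h1 ⊢
    field_simp
    ring

theorem zser_single [Algebra ℚ F] {j : ℕ} (hj : j ≠ 0) (c : F) :
    zser (fun n => if n = j then (j : F) * c else 0) = (rescale c (PowerSeries.exp F)).expand j hj := by
  rw [← zser_single_one, ← zser_expand]
  congr 1
  ext n
  by_cases h : n = j
  · subst h; simp [Nat.div_self (Nat.pos_of_ne_zero hj)]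
  · rw [if_neg h]
    split_ifs with h1 h2
    · exfalso
      apply h
      obtain ⟨m, rfl⟩ := h1
      rw [Nat.mul_div_cancel_left _ (Nat.pos_of_ne_zero hj)] at h2
      simp [h2]
    · simp
    · rfl

end logExp

section logdet
open Matrix

theorem deriv_prod {R S ι : Type*} [CommRing R] [CommRing S] [Algebra R S] [DecidableEq ι]
    (d : Derivation R S S) (s : Finset ι) (f : ι → S) :
    d (∏ i ∈ s, f i) = ∑ i ∈ s, (∏ j ∈ s.erase i, f j) • d (f i) := by
  induction s using Finset.induction_on with
  | empty => simp
  | insert a s ha ih =>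
    rw [Finset.prod_insert ha, Derivation.leibniz, ih, Finset.sum_insert ha, Finset.erase_insert ha,
      add_comm, Finset.smul_sum]
    congr 1
    refine Finset.sum_congr rfl fun i hi => ?_
    have hia : a ≠ i := by rintro rfl; exact ha hi
    rw [Finset.erase_insert_of_ne hia, Finset.prod_insert (by simp [ha]), smul_smul]

/-- Jacobi's formula for the derivative of a determinant. -/
theorem derivation_det {R S n : Type*} [CommRing R] [CommRing S] [Algebra R S] [Fintype n]
    [DecidableEq n] (d : Derivation R S S) (A : Matrix n n S) :
    d A.det = (A.adjugate * A.map d).trace := by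
  have h1 : (A.adjugate * A.map d).trace = ∑ i, (A.updateCol i fun r => d (A r i)).det := by
    rw [Matrix.trace]
    refine Finset.sum_congr rfl fun i _ => ?_
    rw [← cramer_apply, cramer_eq_adjugate_mulVec]
    rfl
  rw [h1, det_apply, map_sum]
  simp_rw [det_apply]
  rw [Finset.sum_comm]
  refine Finset.sum_congr rfl fun σ _ => ?_
  rw [← Finset.smul_sum]
  rw [Units.smul_def, map_zsmul, Units.smul_def]
  congr 1
  rw [deriv_prod]
  refine Finset.sum_congr rfl fun i _ => ?_
  rw [← Finset.mul_prod_erase _ _ (Finset.mem_univ i), smul_eq_mul, mul_comm]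
  congr 1
  · simp
  · refine Finset.prod_congr rfl fun j hj => ?_
    rw [updateCol_ne (Finset.ne_of_mem_erase hj)]

/-- `exp (-∑ tr (M ^ n) T ^ n / n) = det (1 - T M)`, by comparing logarithmic derivatives. -/
theorem logdet {F n : Type*} [Field F] [CharZero F] [Fintype n] [DecidableEq n]
    (M : Matrix n n F) :
    zser (fun k => -(M ^ k).trace) = (M.charpolyRev : PowerSeries F) := by
  symm
  let A : Matrix n n (PowerSeries F) := 1 - (PowerSeries.X : PowerSeries F) • M.map C
  let B : Matrix n n (PowerSeries F) := Matrix.of fun i j => PowerSeries.mk fun k => (M ^ k) i j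
  have hdet : (M.charpolyRev : PowerSeries F) = A.det := by
    rw [charpolyRev, ← Polynomial.coeToPowerSeries.ringHom_apply, RingHom.map_det]
    congr 1
    ext1 i j
    by_cases h : i = j <;> simp [A, h, mul_comm (PowerSeries.X : PowerSeries F)]
  have hAB : A * B = 1 := by
    ext i j k
    have : (A * B) i j = B i j - PowerSeries.X * ∑ l, C (M i l) * B l j := by
      rw [show A * B = B - (PowerSeries.X : PowerSeries F) • (M.map C * B) by
        simp only [A, sub_mul, one_mul, smul_mul_assoc]]
      simp only [Matrix.sub_apply, Matrix.smul_apply, smul_eq_mul, Matrix.mul_apply, Matrix.map_apply]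
    rw [this]
    cases k with
    | zero =>
      simp [B, Matrix.one_apply]
    | succ k =>
      rw [map_sub, coeff_succ_X_mul, map_sum]
      simp only [coeff_C_mul, B, Matrix.of_apply, coeff_mk]
      rw [pow_succ', Matrix.mul_apply, sub_self, Matrix.one_apply]
      split_ifs <;> simp [coeff_one]
  have hadj : A.adjugate = A.det • B := by
    calc A.adjugate = A.adjugate * (A * B) := by rw [hAB, mul_one]
      _ = A.det • B := by rw [← mul_assoc, adjugate_mul, smul_mul_assoc, one_mul]
  apply zser_unique
  · rw [← coeff_zero_eq_constantCoeff_apply, Polynomial.coeff_coe, Polynomial.coeff_zero_eq_eval_zero,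
      eval_charpolyRev]
  · rw [hdet, derivation_det, hadj, smul_mul_assoc, trace_smul, smul_eq_mul]
    congr 1
    ext k
    have hA : A.map (d⁄dX F) = - M.map C := by
      ext1 i j
      by_cases h : i = j <;>
      simp [A, h, mul_comm, Derivation.leibniz]
    rw [hA, Matrix.mul_neg, Matrix.trace_neg, map_neg, coeff_mk, pow_succ]
    simp only [Matrix.trace, Matrix.diag, Matrix.mul_apply, map_sum, Matrix.map_apply, coeff_mul_C, B,
      Matrix.of_apply, coeff_mk]

end logdet
end Dwork

/-! ### Kronecker's criterion -/

namespace Dwork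

section kronecker
open Polynomial
variable {k : Type*} [Field k]

/-- The linear form on polynomials with moments `z`, that is, `X ^ i ↦ z i`. -/
noncomputable def momentForm (z : ℕ → k) : k[X] →ₗ[k] k := (Polynomial.basisMonomials k).constr k z

theorem momentForm_X_pow (z : ℕ → k) (i : ℕ) : momentForm z (X ^ i) = z i := by
  have := (Polynomial.basisMonomials k).constr_basis k z i
  simp only [coe_basisMonomials, monomial_one_right_eq_X_pow] at this
  exact this

theorem momentForm_mul_X_pow (z : ℕ → k) (h : k[X]) {n : ℕ} (hn : h.degree < n) (i : ℕ) :
    momentForm z (h * X ^ i) = ∑ j : Fin n, z (i + j) * h.coeff j := by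
  by_cases h0 : h = 0
  · simp [h0]
  have h1 : h = ∑ j ∈ Finset.range n, C (h.coeff j) * X ^ j :=
    h.as_sum_range_C_mul_X_pow' ((Polynomial.natDegree_lt_iff_degree_lt h0).2 hn)
  conv_lhs => rw [h1]
  rw [Finset.sum_mul, map_sum, Finset.sum_range]
  refine Finset.sum_congr rfl fun j _ => ?_
  rw [mul_assoc, ← pow_add, ← smul_eq_C_mul, map_smul, momentForm_X_pow, smul_eq_mul, mul_comm,
    add_comm]

/-- The Hankel matrix `(z (i + j))` of size `n`. -/
def hankel {R : Type*} (z : ℕ → R) (n : ℕ) : Matrix (Fin n) (Fin n) R := Matrix.of fun i j => z (i + j)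

/-- The determinant is the Gram determinant of the form `(f, g) ↦ momentForm z (f * g)` on
polynomials of degree less than `n`, so it vanishes only if this form has a kernel. -/
theorem hankel_det_eq_zero {z : ℕ → k} {n : ℕ} (hd : (hankel z n).det = 0) :
    ∃ h : k[X], h ≠ 0 ∧ h.degree < n ∧ ∀ i < n, momentForm z (h * X ^ i) = 0 := by
  obtain ⟨v, hv, hv0⟩ := Matrix.exists_mulVec_eq_zero_iff.2 hd
  let h : k[X] := ∑ j : Fin n, C (v j) * X ^ (j : ℕ)
  have hc : ∀ j : Fin n, h.coeff j = v j := by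
    intro j
    simp only [h, finsetSum_coeff, coeff_C_mul_X_pow]
    rw [Finset.sum_eq_single j]
    · simp
    · intro b _ hb
      rw [if_neg]
      intro h
      exact hb (Fin.ext h.symm)
    · simp
  have hdeg : h.degree < n := by
    rw [Polynomial.degree_lt_iff_coeff_zero]
    intro m hm
    simp only [h, finsetSum_coeff, coeff_C_mul_X_pow]
    refine Finset.sum_eq_zero fun j _ => ?_
    rw [if_neg]
    have := j.2
    omega
  refine ⟨h, ?_, hdeg, ?_⟩
  · intro h0
    apply hv
    ext j
    rw [← hc j, h0]
    simp
  · intro i hi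
    rw [momentForm_mul_X_pow z h hdeg]
    have := congrFun hv0 ⟨i, hi⟩
    simpa [Matrix.mulVec, dotProduct, hankel, hc] using this

theorem eq_zero_of_hankel_det {z : ℕ → k} {n : ℕ} (hd : (hankel z n).det ≠ 0) {h : k[X]}
    (hdeg : h.degree < n) (h0 : ∀ i < n, momentForm z (h * X ^ i) = 0) : h = 0 := by
  by_contra hne
  apply hd
  rw [← Matrix.exists_mulVec_eq_zero_iff]
  refine ⟨fun j => h.coeff j, ?_, ?_⟩
  · intro hz
    apply hne
    ext j
    by_cases hj : j < n
    · simpa using congrFun hz ⟨j, hj⟩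
    · rw [coeff_eq_zero_of_degree_lt (hdeg.trans_le (by exact_mod_cast not_lt.1 hj)), coeff_zero]
  · ext i
    have := h0 i i.2
    rw [momentForm_mul_X_pow z h hdeg] at this
    simpa [Matrix.mulVec, dotProduct, hankel] using this

/-- Kronecker's criterion: if all large Hankel determinants vanish, the sequence satisfies a linear
recurrence, here `momentForm z (f * X ^ i) = 0`. The polynomial `f` is the orthogonal polynomial whose
degree is the size of the last nonzero Hankel determinant. -/
theorem kronecker_recurrence (z : ℕ → k) (s₀ : ℕ) (hz : ∀ s, s₀ < s → (hankel z s).det = 0) :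
    ∃ f : k[X], f.Monic ∧ ∀ i, momentForm z (f * X ^ i) = 0 := by
  classical
  have hex : ∃ s, ∀ s', s < s' → (hankel z s').det = 0 := ⟨s₀, hz⟩
  let s := Nat.find hex
  have hs : ∀ s', s < s' → (hankel z s').det = 0 := Nat.find_spec hex
  have hs0 : (hankel z s).det ≠ 0 := by
    intro h
    rcases Nat.eq_zero_or_pos s with h0 | h0
    · rw [h0, Matrix.det_fin_zero] at h
      exact one_ne_zero h
    · refine Nat.find_min hex (m := s - 1) (by change s - 1 < s; omega) fun s' hs' => ?_
      rcases Nat.eq_or_lt_of_le (show s ≤ s' by omega) with h1 | h1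
      · rw [← h1]; exact h
      · exact hs s' h1
  obtain ⟨f, hf0, hfdeg, hf⟩ := hankel_det_eq_zero (hs (s + 1) (by omega))
  have hnd : f.natDegree = s := by
    apply le_antisymm
    · have := (natDegree_lt_iff_degree_lt hf0).2 hfdeg
      omega
    · by_contra hlt
      apply hf0
      refine eq_zero_of_hankel_det hs0 ((natDegree_lt_iff_degree_lt hf0).1 (not_le.1 hlt)) fun i hi => ?_
      exact hf i (by omega)
  have hlin : ∀ j : ℕ, (∀ i : ℕ, i < j → momentForm z (f * X ^ i) = 0) →
      ∀ a : k[X], a.degree < (j : WithBot ℕ) →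
      momentForm z (f * a) = 0 := by
    intro j hj a ha
    by_cases ha0 : a = 0
    · simp [ha0]
    rw [a.as_sum_range_C_mul_X_pow' ((natDegree_lt_iff_degree_lt ha0).2 ha), Finset.mul_sum, map_sum]
    refine Finset.sum_eq_zero fun i hi => ?_
    rw [mul_left_comm, ← smul_eq_C_mul, map_smul, hj i (Finset.mem_range.1 hi), smul_zero]
  have key : ∀ j, ∀ i < j, momentForm z (f * X ^ i) = 0 := by
    intro j
    induction j with
    | zero => intro i hi; omega
    | succ j ih =>
      intro i hi
      rcases Nat.lt_or_ge i j with h1 | h1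
      · exact ih i h1
      obtain rfl : i = j := by omega
      rcases Nat.lt_or_ge i (s + 1) with h2 | h2
      · exact hf i h2
      -- `h` is orthogonal to all polynomials of degree at most `i`
      obtain ⟨h, hh0, hhdeg, hh⟩ := hankel_det_eq_zero (hs (i + 1) (by omega))
      have hhd := (natDegree_lt_iff_degree_lt hh0).2 hhdeg
      let f' := f * C (f.leadingCoeff⁻¹)
      have hf'm : f'.Monic := monic_mul_leadingCoeff_inv hf0
      have hf'd : f'.natDegree = s := by
        rw [← hnd]
        exact natDegree_mul_leadingCoeff_inv f hf0
      let a := h /ₘ f'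
      have hdiv : h %ₘ f' + f' * a = h := modByMonic_add_div h f'
      have had : a.natDegree = h.natDegree - s := by
        rw [natDegree_divByMonic h hf'm, hf'd]
      have hr : h %ₘ f' = 0 := by
        refine eq_zero_of_hankel_det hs0 ?_ fun l hl => ?_
        · have := degree_modByMonic_lt h hf'm
          rwa [degree_eq_natDegree hf'm.ne_zero, hf'd] at this
        · have h3 : h %ₘ f' * X ^ l = h * X ^ l - f * (C (f.leadingCoeff⁻¹) * a * X ^ l) := by
            conv_rhs => rw [← hdiv]
            simp only [f']
            ring
          rw [h3, map_sub, hh l (by omega), hlin i ih, sub_zero]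
          by_cases ha0 : a = 0
          · simp only [ha0, mul_zero, zero_mul, degree_zero]
            exact WithBot.bot_lt_coe _
          apply (natDegree_lt_iff_degree_lt _).1
          · refine lt_of_le_of_lt natDegree_mul_le ?_
            rw [natDegree_C_mul (inv_ne_zero (leadingCoeff_ne_zero.2 hf0)), natDegree_X_pow]
            omega
          · simp [ha0, hf0]
      rw [hr, zero_add] at hdiv
      have ha0 : a ≠ 0 := by
        intro h4
        rw [h4, mul_zero] at hdiv
        exact hh0 hdiv.symm
      have hhs : s ≤ h.natDegree := by
        rw [← hdiv, natDegree_mul hf'm.ne_zero ha0, hf'd]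
        omega
      -- pair `h = f' a` with the power of `X` that turns the leading term of `a` into `X ^ i`
      have h5 := hh (i - a.natDegree) (by omega)
      have h6 : h * X ^ (i - a.natDegree) = f * (C (f.leadingCoeff⁻¹) * (a.eraseLead * X ^ (i - a.natDegree)))
          + C (f.leadingCoeff⁻¹ * a.leadingCoeff) * (f * X ^ i) := by
        have h7 : f' * a = f' * (a.eraseLead + C a.leadingCoeff * X ^ a.natDegree) := by
          rw [eraseLead_add_C_mul_X_pow a]
        rw [← hdiv, h7]
        have h8 : (X : k[X]) ^ i = X ^ a.natDegree * X ^ (i - a.natDegree) := by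
          rw [← pow_add]; congr 1; omega
        rw [h8, C_mul]
        simp only [f']
        ring
      rw [h6, map_add, hlin i ih, zero_add, ← smul_eq_C_mul, map_smul, smul_eq_mul] at h5
      · rcases mul_eq_zero.1 h5 with h9 | h9
        · exfalso
          rcases mul_eq_zero.1 h9 with h10 | h10
          · exact inv_ne_zero (leadingCoeff_ne_zero.2 hf0) h10
          · exact ha0 (leadingCoeff_eq_zero.1 h10)
        · exact h9
      · by_cases he0 : a.eraseLead = 0
        · simp only [he0, mul_zero, zero_mul, degree_zero]
          exact WithBot.bot_lt_coe _
        apply (natDegree_lt_iff_degree_lt _).1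
        · rw [natDegree_C_mul (inv_ne_zero (leadingCoeff_ne_zero.2 hf0))]
          refine lt_of_le_of_lt natDegree_mul_le ?_
          rw [natDegree_X_pow]
          have : a.eraseLead.natDegree < a.natDegree :=
            (eraseLead_natDegree_lt_or_eraseLead_eq_zero a).resolve_right he0
          omega
        · simp [he0, hf0]
  refine ⟨f * C (f.leadingCoeff⁻¹), monic_mul_leadingCoeff_inv hf0, fun i => ?_⟩
  rw [mul_right_comm, mul_comm, ← smul_eq_C_mul, map_smul, key (i + 1) i (by omega), smul_zero]

end kronecker
end Dwork

/-! ### Vanishing of Hankel determinants -/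

namespace Dwork

section hankelEstimate
variable {L : Type*} [NormedField L] [IsUltrametricDist L]

/-- Ultrametric bound for a determinant: no factor counting the permutations is needed. -/
theorem norm_det_le {n : Type*} [Fintype n] [DecidableEq n] (M : Matrix n n L) (B : ℝ)
    (h : ∀ σ : Equiv.Perm n, ∏ i, ‖M (σ i) i‖ ≤ B) : ‖M.det‖ ≤ B := by
  rw [Matrix.det_apply]
  have hB : 0 ≤ B := le_trans (Finset.prod_nonneg fun i _ => norm_nonneg _) (h 1)
  refine IsUltrametricDist.norm_sum_le_of_forall_le_of_nonneg hB fun σ _ => ?_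
  refine le_trans (le_of_eq ?_) (h σ)
  rw [← norm_prod]
  rcases Int.units_eq_one_or (Equiv.Perm.sign σ) with h1 | h1 <;> simp [h1]

theorem norm_natCast_le_one' (n : ℕ) : ‖(n : L)‖ ≤ 1 := IsUltrametricDist.norm_natCast_le_one L n

theorem norm_intCast_le_one' (n : ℤ) : ‖(n : L)‖ ≤ 1 := IsUltrametricDist.norm_intCast_le_one L n

theorem exists_prod_lt_one (K : ℝ) (hK : 0 < K) :
    ∃ s₀ : ℕ, ∀ s, s₀ < s → ∏ j ∈ Finset.range s, (K / 2 ^ j) < 1 := by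
  have hpos : ∀ s : ℕ, 0 < ∏ j ∈ Finset.range s, (K / 2 ^ j) := fun s =>
    Finset.prod_pos fun i _ => by positivity
  have hsum : Summable fun s : ℕ => ∏ j ∈ Finset.range s, (K / 2 ^ j) := by
    refine summable_of_ratio_test_tendsto_lt_one (l := 0) zero_lt_one
      (Filter.Eventually.of_forall fun s => (hpos s).ne') ?_
    have : (fun n : ℕ => ‖∏ j ∈ Finset.range (n + 1), (K / 2 ^ j)‖ /
        ‖∏ j ∈ Finset.range n, (K / 2 ^ j)‖) = fun n : ℕ => K * (1 / 2) ^ n := by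
      ext n
      rw [Real.norm_of_nonneg (hpos _).le, Real.norm_of_nonneg (hpos _).le, Finset.prod_range_succ,
        mul_div_cancel_left₀ _ (hpos n).ne', one_div, inv_pow, div_eq_mul_inv]
    rw [this]
    simpa using (tendsto_pow_atTop_nhds_zero_of_lt_one (r := (1 / 2 : ℝ)) (by norm_num)
      (by norm_num)).const_mul K
  have h0 := hsum.tendsto_atTop_zero
  obtain ⟨s₀, hs₀⟩ := Filter.eventually_atTop.1 (h0.eventually (gt_mem_nhds zero_lt_one))
  exact ⟨s₀, fun s hs => hs₀ s hs.le⟩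

/-- Suppose that integers `z n` of at most exponential growth are the coefficients of a quotient
`a / b` of two everywhere convergent power series over `L`. Then large Hankel determinants of `z`
vanish: they are integers for which the product of the two absolute values is less than `1`,
contrary to `hL`. -/
theorem hankel_vanish (z : ℕ → ℤ) (C : ℝ) (hC : 1 ≤ C) (hz : ∀ n, |(z n : ℝ)| ≤ C ^ n)
    (hL : ∀ n : ℤ, n ≠ 0 → 1 ≤ |(n : ℝ)| * ‖(n : L)‖) (a b : ℕ → L) (hb0 : b 0 = 1)
    (ha : ∀ R : ℝ, 1 ≤ R → ∃ K, ∀ k, ‖a k‖ * R ^ k ≤ K)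
    (hb : ∀ R : ℝ, 1 ≤ R → ∃ K, ∀ k, ‖b k‖ * R ^ k ≤ K)
    (hab : ∀ n, ∑ k ∈ Finset.range (n + 1), b k * (z (n - k) : L) = a n) :
    ∃ s₀, ∀ s, s₀ < s → (hankel z s).det = 0 := by
  -- The factor `C ^ 2` of the radius cancels the archimedean size of the entries, and the powers of
  -- `4` outgrow `s!` and `K ^ s`.
  set R : ℝ := 4 * C ^ 2 with hR
  have hR1 : 1 ≤ R := by nlinarith
  obtain ⟨Ka, hKa⟩ := ha R hR1
  obtain ⟨Kb, hKb⟩ := hb R hR1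
  set K := max 1 (max Ka Kb) with hK
  have hK1 : 1 ≤ K := le_max_left _ _
  have hKa' : ∀ k, ‖a k‖ ≤ K / R ^ k := fun k => by
    rw [le_div_iff₀ (by positivity)]
    exact (hKa k).trans ((le_max_left _ _).trans (le_max_right _ _))
  have hKb' : ∀ k, ‖b k‖ ≤ K / R ^ k := fun k => by
    rw [le_div_iff₀ (by positivity)]
    exact (hKb k).trans ((le_max_right _ _).trans (le_max_right _ _))
  obtain ⟨s₀, hs₀⟩ := exists_prod_lt_one K (by positivity)
  refine ⟨s₀, fun s hs => ?_⟩
  by_contra hne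
  -- Multiplication by the unitriangular matrix `U` of coefficients of `b` turns the entries of the
  -- `j`-th row into combinations of coefficients of `a` and `b` of index at least `j`, which are small.
  let H : Matrix (Fin s) (Fin s) L := (hankel z s).map (Int.castRingHom L)
  have hHdet : H.det = ((hankel z s).det : L) := by
    simpa [H] using (RingHom.map_det (Int.castRingHom L) (hankel z s)).symm
  let U : Matrix (Fin s) (Fin s) L := Matrix.of fun j l => if l ≤ j then b (j - l) else 0
  have hU : U.det = 1 := by
    rw [Matrix.det_of_isLowerTriangular]
    · simp [U, hb0]
    · intro i j hij
      have : i < j := hij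
      simp [U, not_le.2 this]
  have hUH : ∀ j i : Fin s, ‖(U * H) j i‖ ≤ K / R ^ (j : ℕ) := by
    intro j i
    have h1 : (U * H) j i = ∑ k ∈ Finset.range (j + 1), b k * (z (i + j - k) : L) := by
      rw [Matrix.mul_apply, ← Finset.sum_range_reflect (fun k => b k * (z (i + j - k) : L)) (j + 1)]
      have : ∀ l : Fin s, U j l * H l i =
          (fun l : ℕ => (if l ≤ j then b (j - l) else 0) * (z (l + i) : L)) l := by
        intro l
        simp only [U, H, hankel, Matrix.of_apply, Matrix.map_apply, Fin.le_def, eq_intCast]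
      refine (Finset.sum_congr rfl fun l _ => this l).trans ?_
      refine (Finset.sum_range
        (fun l : ℕ => (if l ≤ j then b (j - l) else 0) * (z (l + i) : L))).symm.trans ?_
      rw [← Finset.sum_subset (Finset.range_subset_range.2 (show (j : ℕ) + 1 ≤ s by omega))]
      · refine Finset.sum_congr rfl fun l hl => ?_
        rw [Finset.mem_range] at hl
        rw [if_pos (by omega)]
        congr 3 <;> omega
      · intro l _ hl
        rw [Finset.mem_range] at hl
        rw [if_neg (by omega), zero_mul]
    have h2 : (U * H) j i = a (i + j) - ∑ k ∈ Finset.Ico ((j : ℕ) + 1) (i + j + 1),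
        b k * (z (i + j - k) : L) := by
      rw [h1, ← hab, ← Finset.sum_range_add_sum_Ico _ (show (j : ℕ) + 1 ≤ i + j + 1 by omega)]
      ring
    have hmono : ∀ k : ℕ, j ≤ k → K / R ^ k ≤ K / R ^ (j : ℕ) := fun k hk => by
      gcongr
    rw [h2, sub_eq_add_neg]
    refine (IsUltrametricDist.norm_add_le_max _ _).trans (max_le ?_ ?_)
    · exact (hKa' _).trans (hmono _ (by omega))
    · rw [norm_neg]
      refine IsUltrametricDist.norm_sum_le_of_forall_le_of_nonneg (by positivity) fun k hk => ?_
      rw [Finset.mem_Ico] at hk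
      rw [norm_mul]
      calc ‖b k‖ * ‖(z (i + j - k) : L)‖ ≤ ‖b k‖ * 1 := by
            gcongr
            exact norm_intCast_le_one' _
        _ ≤ K / R ^ (j : ℕ) := by
            rw [mul_one]
            exact (hKb' k).trans (hmono k (by omega))
  have hdetL : ‖((hankel z s).det : L)‖ ≤ ∏ j : Fin s, (K / R ^ (j : ℕ)) := by
    rw [← hHdet, ← one_mul H.det, ← hU, ← Matrix.det_mul]
    refine norm_det_le _ _ fun σ => ?_
    rw [← Equiv.prod_comp σ (fun j => K / R ^ (j : ℕ))]
    exact Finset.prod_le_prod (fun i _ => norm_nonneg _) fun i _ => hUH (σ i) i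
  -- Each of the `s!` terms of the determinant is at most `∏ C ^ (σ i + i) = ∏ C ^ (2 j)`.
  have hdetR : |((hankel z s).det : ℝ)| ≤ (s.factorial : ℝ) * ∏ j : Fin s, (C ^ 2) ^ (j : ℕ) := by
    rw [Matrix.det_apply]
    push_cast
    refine (Finset.abs_sum_le_sum_abs _ _).trans ?_
    have hbd : ∀ σ : Equiv.Perm (Fin s), |(((Equiv.Perm.sign σ • ∏ i, hankel z s (σ i) i : ℤ)) : ℝ)|
        ≤ ∏ j : Fin s, (C ^ 2) ^ (j : ℕ) := by
      intro σ
      have h1 : |(((Equiv.Perm.sign σ • ∏ i, hankel z s (σ i) i : ℤ)) : ℝ)| =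
          ∏ i, |(z (σ i + i) : ℝ)| := by
        rw [← Finset.abs_prod]
        rcases Int.units_eq_one_or (Equiv.Perm.sign σ) with h1 | h1 <;> simp [h1, hankel]
      rw [h1]
      calc ∏ i, |(z (σ i + i) : ℝ)| ≤ ∏ i : Fin s, C ^ ((σ i : ℕ) + i) :=
            Finset.prod_le_prod (fun i _ => abs_nonneg _) fun i _ => hz _
        _ = ∏ j : Fin s, (C ^ 2) ^ (j : ℕ) := by
            simp only [pow_add, Finset.prod_mul_distrib]
            rw [Equiv.prod_comp σ (fun i => C ^ (i : ℕ)), ← Finset.prod_mul_distrib]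
            refine Finset.prod_congr rfl fun i _ => ?_
            ring
    refine (Finset.sum_le_sum fun σ _ => hbd σ).trans ?_
    rw [Finset.sum_const, Finset.card_univ, Fintype.card_perm, Fintype.card_fin, nsmul_eq_mul]
  have hfac : ∀ s : ℕ, (s.factorial : ℝ) ≤ ∏ j ∈ Finset.range s, (2 : ℝ) ^ j := by
    intro s
    rw [← Finset.prod_range_add_one_eq_factorial]
    push_cast
    refine Finset.prod_le_prod (fun i _ => by positivity) fun i _ => ?_
    exact_mod_cast (Nat.lt_two_pow_self : i < 2 ^ i)
  have h1 := hL _ hne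
  have h2 : |((hankel z s).det : ℝ)| * ‖((hankel z s).det : L)‖ ≤
      ∏ j ∈ Finset.range s, (K / 2 ^ j) := by
    calc _ ≤ ((∏ j ∈ Finset.range s, (2 : ℝ) ^ j) * ∏ j ∈ Finset.range s, (C ^ 2) ^ (j : ℕ)) *
          ∏ j ∈ Finset.range s, (K / R ^ (j : ℕ)) := by
          refine mul_le_mul ?_ ?_ (norm_nonneg _) (by positivity)
          · refine hdetR.trans ?_
            rw [Finset.prod_range (fun j => (C ^ 2) ^ (j : ℕ))]
            gcongr
            exact hfac s
          · rw [Finset.prod_range (fun j => (K / R ^ (j : ℕ)))]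
            exact hdetL
      _ = _ := by
          rw [← Finset.prod_mul_distrib, ← Finset.prod_mul_distrib]
          refine Finset.prod_congr rfl fun j _ => ?_
          rw [hR, mul_pow, show (4 : ℝ) = 2 * 2 by norm_num, mul_pow]
          field_simp
  linarith [hs₀ s hs]

end hankelEstimate
end Dwork

/-! ### From linear recurrences to power sums -/

namespace Dwork

section rationality
open PowerSeries

/-- The series `zser u` determines `u n` for `n ≥ 1`. -/
theorem zser_injective {F : Type*} [Field F] [CharZero F] {u v : ℕ → F} (h : zser u = zser v)
    {n : ℕ} (hn : 1 ≤ n) : u n = v n := by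
  have h1 := congrArg (d⁄dX F) h
  rw [zser_derivative, zser_derivative, h] at h1
  have hne : zser v ≠ 0 := by
    intro h0
    have := zser_constantCoeff v
    rw [h0] at this
    simp at this
  have h2 := congrArg (coeff (n - 1)) (mul_left_cancel₀ hne h1)
  rw [coeff_mk, coeff_mk, Nat.sub_add_cancel hn] at h2
  exact h2

theorem zser_neg_pow {F : Type*} [Field F] [CharZero F] (α : F) :
    zser (fun n => -α ^ n) = 1 - C α * X := by
  symm
  apply zser_unique
  · simp
  · ext n
    rw [coeff_derivative, sub_mul, one_mul, mul_assoc, map_sub, map_sub, coeff_C_mul, coeff_C_mul]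
    cases n with
    | zero => simp [coeff_one, coeff_X]
    | succ n =>
      rw [coeff_succ_X_mul, coeff_mk, coeff_mk, coeff_X, coeff_one]
      simp
      ring

/-- A complex polynomial with constant term `1` is `∏ (1 - αX)`. -/
theorem exists_multiset_zser (d : ℕ) : ∀ G : Polynomial ℂ, G.natDegree ≤ d → G.coeff 0 = 1 →
    ∃ s : Multiset ℂ, (G : PowerSeries ℂ) = zser fun n => -(s.map (· ^ n)).sum := by
  induction d with
  | zero =>
    intro G hG h0
    refine ⟨0, ?_⟩
    rw [Polynomial.eq_C_of_natDegree_le_zero hG, h0]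
    simpa using (zser_zero (F := ℂ)).symm
  | succ d ih =>
    intro G hG h0
    by_cases hd : G.natDegree = 0
    · exact ih G (by omega) h0
    have hG0 : G ≠ 0 := by rintro rfl; simp at h0
    obtain ⟨r, hr⟩ := IsAlgClosed.exists_root G (by
      rw [Polynomial.degree_eq_natDegree hG0]
      exact_mod_cast hd)
    have hr0 : r ≠ 0 := by
      rintro rfl
      rw [Polynomial.IsRoot, ← Polynomial.coeff_zero_eq_eval_zero, h0] at hr
      exact one_ne_zero hr
    obtain ⟨H, hH⟩ := Polynomial.dvd_iff_isRoot.2 hr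
    have hG' : G = (1 - Polynomial.C r⁻¹ * Polynomial.X) * (Polynomial.C (-r) * H) := by
      have : (1 - Polynomial.C r⁻¹ * Polynomial.X) * (Polynomial.C (-r) * H) =
        (Polynomial.C (r⁻¹ * r) * Polynomial.X - Polynomial.C r) * H := by
        rw [Polynomial.C_mul, Polynomial.C_neg]; ring
      rw [this, inv_mul_cancel₀ hr0, Polynomial.C_1, one_mul, ← hH]
    have hH0 : H ≠ 0 := by rintro rfl; simp at hH; exact hG0 hH
    have hdeg : (Polynomial.C (-r) * H).natDegree ≤ d := by
      rw [Polynomial.natDegree_C_mul (neg_ne_zero.2 hr0)]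
      have := congrArg Polynomial.natDegree hH
      rw [Polynomial.natDegree_mul (Polynomial.X_sub_C_ne_zero r) hH0,
        Polynomial.natDegree_X_sub_C] at this
      omega
    obtain ⟨s, hs⟩ := ih _ hdeg (by
      rw [hG'] at h0
      simpa [Polynomial.mul_coeff_zero] using h0)
    refine ⟨r⁻¹ ::ₘ s, ?_⟩
    rw [hG', Polynomial.coe_mul, hs]
    have : ((1 - Polynomial.C r⁻¹ * Polynomial.X : Polynomial ℂ) : PowerSeries ℂ) =
        zser (fun n => -r⁻¹ ^ n) := by
      rw [zser_neg_pow, Polynomial.coe_sub]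
      simp
    rw [this, ← zser_add]
    congr 1
    ext n
    simp
    ring

/-- The recurrence makes `zser N` a quotient of two polynomials, with denominator the reverse of
`f`. Factoring both over `ℂ` exhibits `N` as a difference of power sums. -/
theorem exists_multiset_of_recurrence (N : ℕ → ℚ) (f : Polynomial ℚ) (hf : f.Monic)
    (h : ∀ i, momentForm (zcoeff N) (f * Polynomial.X ^ i) = 0) :
    ∃ A B : Multiset ℂ, ∀ n, 1 ≤ n → (N n : ℂ) = (B.map (· ^ n)).sum - (A.map (· ^ n)).sum := by
  set d := f.natDegree with hd
  have hrec : ∀ i, ∑ j ∈ Finset.range (d + 1), zcoeff N (i + j) * f.coeff j = 0 := fun i => by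
    rw [← h i, momentForm_mul_X_pow _ _ (n := d + 1), Finset.sum_range]
    rw [← Polynomial.natDegree_lt_iff_degree_lt hf.ne_zero]
    omega
  have hQ0 : f.reverse.coeff 0 = 1 := by rw [Polynomial.coeff_zero_reverse, hf]
  have hQ : ∀ n, d ≤ n → coeff n ((f.reverse : PowerSeries ℚ) * zser N) = 0 := by
    intro n hn
    rw [coeff_mul, Finset.Nat.sum_antidiagonal_eq_sum_range_succ_mk, ← hrec (n - d)]
    rw [← Finset.sum_range_reflect (fun j => zcoeff N (n - d + j) * f.coeff j)]
    rw [← Finset.sum_subset (Finset.range_subset_range.2 (show d + 1 ≤ n + 1 by omega))]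
    · refine Finset.sum_congr rfl fun l hl => ?_
      rw [Finset.mem_range] at hl
      rw [Polynomial.coeff_coe, Polynomial.coeff_reverse, Polynomial.revAt_le (by omega), coeff_zser,
        mul_comm]
      congr 2
      omega
    · intro l hl hl'
      rw [Finset.mem_range] at hl hl'
      rw [Polynomial.coeff_coe, Polynomial.coeff_eq_zero_of_natDegree_lt, zero_mul]
      have := Polynomial.reverse_natDegree_le f
      simp only
      omega
  set P : Polynomial ℚ := trunc d ((f.reverse : PowerSeries ℚ) * zser N) with hP
  have hPQ : (P : PowerSeries ℚ) = (f.reverse : PowerSeries ℚ) * zser N := by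
    ext n
    rw [Polynomial.coeff_coe, hP, coeff_trunc]
    split_ifs with h1
    · rfl
    · exact (hQ n (not_lt.1 h1)).symm
  have hP0 : P.coeff 0 = 1 := by
    rw [← Polynomial.coeff_coe, hPQ]
    simp [zser_constantCoeff, hf]
  let φ := algebraMap ℚ ℂ
  obtain ⟨A, hA⟩ := exists_multiset_zser _ (P.map φ) le_rfl (by simp [hP0])
  obtain ⟨B, hB⟩ := exists_multiset_zser _ (f.reverse.map φ) le_rfl (by
    rw [Polynomial.coeff_map, hQ0, map_one])
  refine ⟨A, B, fun n hn => ?_⟩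
  have hZ : PowerSeries.map φ (zser N) = zser (fun n => φ (N n)) := by
    ext n
    rw [coeff_map, coeff_zser, coeff_zser, zcoeff_map]
  have h1 := congrArg (PowerSeries.map φ) hPQ
  rw [map_mul, ← Polynomial.polynomial_map_coe, ← Polynomial.polynomial_map_coe, hA, hB, hZ,
    ← zser_add] at h1
  have h2 := zser_injective h1 hn
  simp only [φ, eq_ratCast] at h2
  linear_combination -h2

theorem multiset_to_fin (A : Multiset ℂ) : ∃ (s : ℕ) (α : Fin s → ℂ), ∀ n : ℕ,
    (A.map (· ^ n)).sum = ∑ i, α i ^ n := by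
  refine ⟨A.toList.length, fun i => A.toList.get i, fun n => ?_⟩
  conv_lhs => rw [← A.coe_toList]
  rw [Multiset.map_coe, Multiset.sum_coe, ← List.sum_ofFn]
  congr 1
  apply List.ext_get <;> simp

end rationality
end Dwork

/-! ### Integrality and `p`-adic meromorphy -/

namespace Dwork

section integrality
open PowerSeries

theorem funMatrix_pow {Y : Type*} [Fintype Y] [DecidableEq Y] (σ : Y → Y) (k : ℕ) :
    (Matrix.of fun y y' => if σ y = y' then (1 : ℤ) else 0) ^ k =
      Matrix.of fun y y' => if σ^[k] y = y' then (1 : ℤ) else 0 := by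
  induction k with
  | zero => ext y y'; rw [pow_zero, Matrix.one_apply]; rfl
  | succ k ih =>
    rw [pow_succ', ih]
    ext y y'
    rw [Matrix.mul_apply, Finset.sum_eq_single (σ y)]
    · simp
      rfl
    · intro b _ hb
      simp [hb.symm]
    · simp

/-- The zeta series of a self-map of a finite set has integral coefficients: it is the inverse
of the reverse characteristic polynomial of the matrix of the map. -/
theorem integral_of_finite {Y : Type*} [Finite Y] (σ : Y → Y) :
    ∃ z : ℕ → ℤ, ∀ n, zcoeff (fun k => (Nat.card {y // σ^[k] y = y} : ℚ)) n = z n := by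
  classical
  cases nonempty_fintype Y
  let M : Matrix Y Y ℤ := Matrix.of fun y y' => if σ y = y' then (1 : ℤ) else 0
  let φ : ℤ →+* ℚ := Int.castRingHom ℚ
  have htr : ∀ k, (((M.map φ) ^ k).trace : ℚ) = (Nat.card {y // σ^[k] y = y} : ℚ) := by
    intro k
    have : (M.map φ) ^ k = (M ^ k).map φ := by
      simpa using (map_pow (RingHom.mapMatrix φ) M k).symm
    rw [this, funMatrix_pow, Nat.card_eq_fintype_card, Fintype.card_subtype]
    simp [Matrix.trace, Matrix.diag, φ]
  let W : PowerSeries ℤ := invOfUnit (M.charpolyRev : PowerSeries ℤ) 1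
  have hW : (M.charpolyRev : PowerSeries ℤ) * W = 1 := by
    apply mul_invOfUnit
    rw [← coeff_zero_eq_constantCoeff_apply, Polynomial.coeff_coe,
      Polynomial.coeff_zero_eq_eval_zero, Matrix.eval_charpolyRev, Units.val_one]
  refine ⟨fun n => coeff n W, fun n => ?_⟩
  have h1 := logdet (M.map φ)
  have h2 : zser (fun k => -((M.map φ) ^ k).trace) * zser (fun k => ((M.map φ) ^ k).trace) = 1 := by
    rw [← zser_add, ← zser_zero]
    congr 1
    ext
    simp
  have h3 : ((M.map φ).charpolyRev : PowerSeries ℚ) * PowerSeries.map φ W = 1 := by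
    rw [← map_one (PowerSeries.map φ), ← hW, map_mul, ← Polynomial.polynomial_map_coe]
    congr 2
    simp only [Matrix.charpolyRev]
    rw [← Polynomial.coe_mapRingHom, RingHom.map_det]
    congr 1
    ext i j
    by_cases hij : i = j
    · simp [hij]
    · simp [hij]
  rw [h1] at h2
  have h4 : zser (fun k => ((M.map φ) ^ k).trace) = PowerSeries.map φ W := by
    have hne : ((M.map φ).charpolyRev : PowerSeries ℚ) ≠ 0 := left_ne_zero_of_mul_eq_one h2
    exact mul_left_cancel₀ hne (h2.trans h3.symm)
  simp only [htr] at h4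
  rw [← coeff_zser, h4, coeff_map]
  simp [φ]

/-- The zeta series of a self-map all of whose iterates have finitely many fixed points has integral
coefficients: the coefficient of degree `n` involves only the fixed points of the first `n` iterates,
and these all lie in the finite set of fixed points of `σ^[n!]`. -/
theorem integral_of_locally_finite {Y : Type*} (σ : Y → Y)
    (hfin : ∀ n, 1 ≤ n → Finite {y // σ^[n] y = y}) :
    ∃ z : ℕ → ℤ, ∀ n, zcoeff (fun k => (Nat.card {y // σ^[k] y = y} : ℚ)) n = z n := by
  suffices h : ∀ n, ∃ z : ℤ, zcoeff (fun k => (Nat.card {y // σ^[k] y = y} : ℚ)) n = z by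
    choose z hz using h
    exact ⟨z, hz⟩
  intro n
  have := hfin n.factorial n.factorial_pos
  let τ : {y // σ^[n.factorial] y = y} → {y // σ^[n.factorial] y = y} := fun y => ⟨σ y, by
    rw [← Function.iterate_succ_apply, Function.iterate_succ_apply', y.2]⟩
  have hτ : ∀ k y, ((τ^[k] y : {y // σ^[n.factorial] y = y}) : Y) = σ^[k] y := by
    intro k
    induction k with
    | zero => simp
    | succ k ih => intro y; rw [Function.iterate_succ_apply, ih, Function.iterate_succ_apply]
  obtain ⟨z, hz⟩ := integral_of_finite τ
  refine ⟨z n, ?_⟩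
  rw [← hz]
  refine zcoeff_congr fun k h1 h2 => ?_
  congr 1
  refine Nat.card_congr ⟨fun y => ⟨⟨y, ?_⟩, ?_⟩, fun y => ⟨y, ?_⟩, fun y => rfl, fun y => rfl⟩
  · obtain ⟨c, hc⟩ := Nat.dvd_factorial h1 h2
    rw [hc, Function.iterate_mul]
    exact Function.iterate_fixed y.2 c
  · apply Subtype.ext
    rw [hτ]
    exact y.2
  · rw [← hτ, y.2]

theorem zcoeff_le (N : ℕ → ℕ) (C : ℝ) (hC : 0 ≤ C) (hN : ∀ n, 1 ≤ n → (N n : ℝ) ≤ C ^ n) (n : ℕ) :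
    |((zcoeff (fun k => (N k : ℚ)) n : ℚ) : ℝ)| ≤ C ^ n := by
  induction n using Nat.strong_induction_on with
  | _ n ih =>
    cases n with
    | zero => simp [zcoeff_zero]
    | succ n =>
      rw [zcoeff_succ']
      push_cast
      rw [abs_div, abs_of_pos (show (0 : ℝ) < n + 1 by positivity), div_le_iff₀ (by positivity)]
      refine (Finset.abs_sum_le_sum_abs _ _).trans ?_
      have : ∀ i ∈ Finset.range (n + 1), |(N (i + 1) : ℝ) *
          ((zcoeff (fun k => (N k : ℚ)) (n - i) : ℚ) : ℝ)| ≤ C ^ (n + 1) := by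
        intro i hi
        rw [Finset.mem_range] at hi
        rw [abs_mul, show n + 1 = (i + 1) + (n - i) by omega, pow_add, Nat.abs_cast]
        exact mul_le_mul (hN _ (by omega)) (ih _ (by omega)) (abs_nonneg _) (by positivity)
      refine (Finset.sum_le_sum this).trans ?_
      simp [mul_comm]

end integrality

section meromorphy
variable {L : Type*} [NormedField L] [CharZero L] [IsUltrametricDist L]

/-- `zser u` converges on the whole of `L`. -/
def Ent (u : ℕ → L) : Prop := ∀ R : ℝ, 1 ≤ R → ∃ K, ∀ k, ‖zcoeff u k‖ * R ^ k ≤ K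

/-- `zser u` is a quotient of two everywhere convergent series. -/
def Mer (u : ℕ → L) : Prop := ∃ a b : ℕ → L, Ent a ∧ Ent b ∧ ∀ n, 1 ≤ n → u n = a n - b n

theorem Ent.add {u v : ℕ → L} (hu : Ent u) (hv : Ent v) : Ent (fun n => u n + v n) := by
  intro R hR
  obtain ⟨K, hK⟩ := hu R hR
  obtain ⟨K', hK'⟩ := hv R hR
  have hK0 : 0 ≤ K := le_trans (by positivity) (hK 0)
  have hK0' : 0 ≤ K' := le_trans (by positivity) (hK' 0)
  refine ⟨K * K', fun k => ?_⟩
  rw [← coeff_zser, zser_add, PowerSeries.coeff_mul, ← le_div_iff₀ (by positivity)]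
  refine IsUltrametricDist.norm_sum_le_of_forall_le_of_nonneg (by positivity) fun x hx => ?_
  replace hx := Finset.HasAntidiagonal.mem_antidiagonal.1 hx
  rw [le_div_iff₀ (by positivity), norm_mul, ← hx, pow_add, coeff_zser, coeff_zser]
  calc _ = (‖zcoeff u x.1‖ * R ^ x.1) * (‖zcoeff v x.2‖ * R ^ x.2) := by ring
    _ ≤ _ := mul_le_mul (hK _) (hK' _) (by positivity) hK0

omit [CharZero L] [IsUltrametricDist L] in
theorem Ent.scale {u : ℕ → L} (hu : Ent u) (c : L) : Ent (fun n => c ^ n * u n) := by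
  intro R hR
  obtain ⟨K, hK⟩ := hu (max 1 (‖c‖ * R)) (le_max_left _ _)
  refine ⟨K, fun k => ?_⟩
  rw [zcoeff_scale, norm_mul, norm_pow]
  refine le_trans ?_ (hK k)
  calc _ = ‖zcoeff u k‖ * (‖c‖ * R) ^ k := by rw [mul_pow]; ring
    _ ≤ _ := by
      gcongr
      exact le_max_right _ _

omit [IsUltrametricDist L] in
theorem Ent.zero : Ent (fun _ => (0 : L)) := by
  intro R hR
  refine ⟨1, fun k => ?_⟩
  rw [← coeff_zser, zser_zero, PowerSeries.coeff_one]
  split_ifs with h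
  · simp [h]
  · simp

omit [IsUltrametricDist L] in
theorem Ent.mer {u : ℕ → L} (hu : Ent u) : Mer u := ⟨u, _, hu, Ent.zero, fun n _ => by simp⟩

omit [CharZero L] [IsUltrametricDist L] in
theorem Mer.neg {u : ℕ → L} (hu : Mer u) : Mer (fun n => -u n) := by
  obtain ⟨a, b, ha, hb, h⟩ := hu
  exact ⟨b, a, hb, ha, fun n hn => by simp only [h n hn]; ring⟩

theorem Mer.add {u v : ℕ → L} (hu : Mer u) (hv : Mer v) : Mer (fun n => u n + v n) := by
  obtain ⟨a, b, ha, hb, h⟩ := hu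
  obtain ⟨a', b', ha', hb', h'⟩ := hv
  exact ⟨_, _, ha.add ha', hb.add hb', fun n hn => by simp only [h n hn, h' n hn]; ring⟩

omit [CharZero L] [IsUltrametricDist L] in
theorem Mer.scale {u : ℕ → L} (hu : Mer u) (c : L) : Mer (fun n => c ^ n * u n) := by
  obtain ⟨a, b, ha, hb, h⟩ := hu
  exact ⟨_, _, ha.scale c, hb.scale c, fun n hn => by simp only [h n hn]; ring⟩

omit [CharZero L] [IsUltrametricDist L] in
theorem Mer.congr {u v : ℕ → L} (hu : Mer u) (h : ∀ n, 1 ≤ n → v n = u n) : Mer v := by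
  obtain ⟨a, b, ha, hb, h'⟩ := hu
  exact ⟨a, b, ha, hb, fun n hn => by rw [h n hn, h' n hn]⟩

theorem Mer.sum {ι : Type*} (s : Finset ι) {u : ι → ℕ → L} (hu : ∀ i ∈ s, Mer (u i)) :
    Mer (fun n => ∑ i ∈ s, u i n) := by
  classical
  induction s using Finset.induction_on with
  | empty => simpa using (Ent.zero (L := L)).mer
  | insert a s ha ih =>
    simp only [Finset.sum_insert ha]
    exact (hu a (Finset.mem_insert_self _ _)).add
      (ih fun i hi => hu i (Finset.mem_insert_of_mem hi))

/-- An integral zeta series of positive archimedean radius of convergence that is `p`-adically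
meromorphic is rational. -/
theorem exists_multiset_of_mer (N : ℕ → ℕ) (z : ℕ → ℤ)
    (hz : ∀ n, zcoeff (fun k => (N k : ℚ)) n = z n) (C : ℝ) (hC : 1 ≤ C)
    (hN : ∀ n, 1 ≤ n → (N n : ℝ) ≤ C ^ n)
    (hL : ∀ n : ℤ, n ≠ 0 → 1 ≤ |(n : ℝ)| * ‖(n : L)‖) (hmer : Mer fun n => (N n : L)) :
    ∃ A B : Multiset ℂ, ∀ n, 1 ≤ n → (N n : ℂ) = (B.map (· ^ n)).sum - (A.map (· ^ n)).sum := by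
  obtain ⟨a, b, ha, hb, h⟩ := hmer
  have hzL : ∀ n, zcoeff (fun k => (N k : L)) n = (z n : L) := by
    intro n
    have := zcoeff_map (algebraMap ℚ L) (fun k => (N k : ℚ)) n
    rw [hz] at this
    simpa using this
  have hzC : ∀ n, |(z n : ℝ)| ≤ C ^ n := by
    intro n
    have := zcoeff_le N C (by linarith) hN n
    rw [hz] at this
    simpa using this
  have hab : ∀ n, ∑ k ∈ Finset.range (n + 1), zcoeff b k * (z (n - k) : L) = zcoeff a n := by
    intro n
    have h1 : zser b * zser (fun k => (N k : L)) = zser a := by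
      rw [← zser_add]
      exact zser_congr fun n hn => by
        have := h n hn
        simp only at this
        rw [this]; ring
    have h2 := congrArg (PowerSeries.coeff n) h1
    rw [PowerSeries.coeff_mul, Finset.Nat.sum_antidiagonal_eq_sum_range_succ_mk] at h2
    simpa [hzL] using h2
  obtain ⟨s₀, hs₀⟩ := hankel_vanish z C hC hzC hL (zcoeff a) (zcoeff b) (zcoeff_zero b) ha hb hab
  obtain ⟨f, hf, hrec⟩ := kronecker_recurrence (zcoeff fun k => (N k : ℚ)) s₀ fun s hs => by
    have h1 : hankel (zcoeff fun k => (N k : ℚ)) s = (hankel z s).map (Int.castRingHom ℚ) := by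
      ext i j
      simp [hankel, hz]
    have h2 := RingHom.map_det (Int.castRingHom ℚ) (hankel z s)
    rw [hs₀ s hs] at h2
    rw [h1]
    simpa using h2.symm
  obtain ⟨A, B, hAB⟩ := exists_multiset_of_recurrence _ f hf hrec
  exact ⟨A, B, fun n hn => by simpa using hAB n hn⟩

end meromorphy
end Dwork

/-! ### Dwork's trace formula and the Fredholm determinant -/

namespace Dwork

section trace
open MvPolynomial
variable {σ L : Type*} [Fintype σ] [DecidableEq σ] [Field L]

/-- Exponent vectors of total degree at most `D`. -/
abbrev Expo (σ : Type*) (D : ℕ) := {u : σ →₀ ℕ // u.degree ≤ D}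

noncomputable instance (D : ℕ) : Fintype (Expo σ D) :=
  (Finsupp.finite_of_degree_le (σ := σ) D).fintype

/-- The matrix of Dwork's operator `H ↦ ψ_Q (G * H)` on polynomials of degree at most `D`, where
`ψ_Q` sends `Z ^ (Q w)` to `Z ^ w` and kills the other monomials. -/
noncomputable def dworkMatrix (Q D : ℕ) (G : MvPolynomial σ L) : Matrix (Expo σ D) (Expo σ D) L :=
  Matrix.of fun v u => coeff (Q • v.1) (monomial u.1 1 * G)

/-- `∏_{i<n} G(Z ^ (Q ^ i))`. -/
noncomputable def frobProd (Q : ℕ) (G : MvPolynomial σ L) (n : ℕ) : MvPolynomial σ L :=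
  ∏ i ∈ Finset.range n, expand (Q ^ i) G

omit [Fintype σ] [DecidableEq σ] in
/-- Coefficients of `A(Z) B(Z ^ q)` at exponents divisible by `q`. This is the rule
`ψ_q (A(Z) B(Z ^ q)) = ψ_q (A(Z)) B(Z)` for the operator `ψ_q` that keeps the exponents divisible
by `q` and divides them by `q`. -/
theorem coeff_mul_expand {q : ℕ} (hq : q ≠ 0) (A B : MvPolynomial σ L) (m : σ →₀ ℕ)
    (S : Finset (σ →₀ ℕ)) (hS : ∀ w, w ∉ S → coeff (q • w) A = 0) :
    coeff (q • m) (A * expand q B) = ∑ w ∈ S, coeff m (monomial w 1 * B) * coeff (q • w) A := by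
  classical
  induction B using MvPolynomial.induction_on' with
  | add p q hp hq =>
    simp only [map_add, mul_add, coeff_add, hp, hq, add_mul, Finset.sum_add_distrib]
  | monomial a c =>
    rw [expand_monomial, coeff_mul_monomial']
    simp only [monomial_mul, coeff_monomial, one_mul, ite_mul, zero_mul]
    have hle : q • a ≤ q • m ↔ a ≤ m := by
      simp only [Finsupp.le_def, Finsupp.smul_apply, smul_eq_mul]
      exact forall_congr' fun i => Nat.mul_le_mul_left_iff (Nat.pos_of_ne_zero hq)
    by_cases h : a ≤ m
    · rw [if_pos (hle.2 h), ← Finset.sum_filter]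
      have h1 : q • m - q • a = q • (m - a) := by
        ext i; simp [Nat.mul_sub]
      have h2 : ∀ w, w + a = m ↔ w = m - a := by
        intro w
        constructor
        · rintro rfl; simp
        · rintro rfl; exact tsub_add_cancel_of_le h
      by_cases hmem : m - a ∈ S
      · rw [Finset.sum_eq_single (m - a)]
        · rw [h1, mul_comm]
        · intro w hw hne
          exact absurd ((h2 w).1 (Finset.mem_filter.1 hw).2) hne
        · intro hw
          exact absurd (Finset.mem_filter.2 ⟨hmem, (h2 _).2 rfl⟩) hw
      · rw [h1, hS _ hmem, zero_mul, Finset.sum_eq_zero]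
        intro w hw
        obtain ⟨hw1, hw2⟩ := Finset.mem_filter.1 hw
        exact absurd ((h2 w).1 hw2 ▸ hw1) hmem
    · rw [if_neg (fun h' => h (hle.1 h')), Finset.sum_eq_zero]
      intro w _
      rw [if_neg]
      rintro rfl
      exact h le_add_self

omit [Fintype σ] [DecidableEq σ] in
/-- The condition `deg G + D ≤ Q D` says that Dwork's operator maps polynomials of degree at most
`D` to such polynomials; it bounds the degree of `frobProd` accordingly. -/
theorem totalDegree_frobProd {Q D : ℕ} {G : MvPolynomial σ L} (hD : G.totalDegree + D ≤ Q * D)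
    (n : ℕ) : (frobProd Q G n).totalDegree + D ≤ Q ^ n * D := by
  induction n with
  | zero => simp [frobProd]
  | succ n ih =>
    have h1 : (frobProd Q G (n + 1)).totalDegree ≤
        (frobProd Q G n).totalDegree + G.totalDegree * Q ^ n := by
      rw [frobProd, Finset.prod_range_succ, ← totalDegree_expand]
      exact totalDegree_mul _ _
    calc _ ≤ (frobProd Q G n).totalDegree + G.totalDegree * Q ^ n + D := by omega
      _ ≤ Q ^ n * D + G.totalDegree * Q ^ n := by omega
      _ = Q ^ n * (G.totalDegree + D) := by ring
      _ ≤ Q ^ n * (Q * D) := Nat.mul_le_mul_left _ hD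
      _ = Q ^ (n + 1) * D := by ring

/-- The `n`-th power of Dwork's operator for `Q` and `G` is the operator for `Q ^ n` and
`frobProd Q G n`. -/
theorem dworkMatrix_pow {Q D : ℕ} (hQ : Q ≠ 0) {G : MvPolynomial σ L}
    (hD : G.totalDegree + D ≤ Q * D) (n : ℕ) (v u : Expo σ D) :
    (dworkMatrix Q D G ^ n) v u = coeff (Q ^ n • v.1) (monomial u.1 1 * frobProd Q G n) := by
  induction n generalizing v with
  | zero =>
    simp only [frobProd, pow_zero, one_smul, Finset.range_zero, Finset.prod_empty, mul_one,
      coeff_monomial, Matrix.one_apply, Subtype.ext_iff, eq_comm (a := v.1)]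
  | succ n ih =>
    rw [pow_succ', Matrix.mul_apply, frobProd, Finset.prod_range_succ, ← mul_assoc, pow_succ,
      ← smul_smul, ← frobProd, coeff_mul_expand (pow_ne_zero n hQ) _ _ _
        (Finset.univ.map (Function.Embedding.subtype fun u : σ →₀ ℕ => u.degree ≤ D))]
    · rw [Finset.sum_map]
      refine Finset.sum_congr rfl fun w _ => ?_
      rw [ih]
      rfl
    · intro w hw
      have hw' : D < w.degree := by
        by_contra hcon
        exact hw (Finset.mem_map.2 ⟨⟨w, not_lt.1 hcon⟩, Finset.mem_univ _, rfl⟩)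
      apply coeff_eq_zero_of_totalDegree_lt
      rw [← Finsupp.degree_apply, map_nsmul, smul_eq_mul]
      have h1 := totalDegree_frobProd hD n
      have h2 := totalDegree_mul (monomial u.1 (1 : L)) (frobProd Q G n)
      have h3 : (monomial u.1 (1 : L)).totalDegree ≤ D := (totalDegree_monomial_le _ _).trans u.2
      have h4 : Q ^ n * D < Q ^ n * w.degree :=
        Nat.mul_lt_mul_of_pos_left hw' (Nat.pos_of_ne_zero (pow_ne_zero n hQ))
      omega

/-- Orthogonality of the powers of a faithful character of a cyclic group. -/
theorem sum_char_pow {Γ : Type*} [CommGroup Γ] [Fintype Γ] [IsCyclic Γ] (χ : Γ →* L)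
    (hχ : Function.Injective χ) (w : ℕ) :
    ∑ g : Γ, χ g ^ w = if Fintype.card Γ ∣ w then (Fintype.card Γ : L) else 0 := by
  classical
  have h := sum_hom_units (χ ^ w)
  simp only [MonoidHom.pow_apply] at h
  rw [h]
  have : χ ^ w = 1 ↔ Fintype.card Γ ∣ w := by
    rw [← Nat.card_eq_fintype_card, ← IsCyclic.exponent_eq_card, Monoid.exponent_dvd_iff_forall_pow_eq_one]
    constructor
    · intro h1 g
      apply hχ
      rw [map_pow, map_one, ← MonoidHom.pow_apply, h1, MonoidHom.one_apply]
    · intro h1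
      ext g
      rw [MonoidHom.pow_apply, ← map_pow, h1, map_one, MonoidHom.one_apply]
  split_ifs <;> simp_all

/-- Dwork's trace formula on the torus. -/
theorem trace_formula {Q D n : ℕ} (hQ : Q ≠ 0) {G : MvPolynomial σ L}
    (hD : G.totalDegree + D ≤ Q * D) {Γ : Type*} [CommGroup Γ] [Fintype Γ] [IsCyclic Γ]
    (χ : Γ →* L) (hχ : Function.Injective χ) (hΓ : Fintype.card Γ + 1 = Q ^ n) :
    (Fintype.card Γ : L) ^ Fintype.card σ * (dworkMatrix Q D G ^ n).trace =
      ∑ x : σ → Γ, ∏ i ∈ Finset.range n, eval (fun j => χ (x j) ^ Q ^ i) G := by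
  set m := Fintype.card Γ with hm
  have hm0 : m ≠ 0 := Fintype.card_ne_zero
  have h1 : ∀ x : σ → Γ, ∏ i ∈ Finset.range n, eval (fun j => χ (x j) ^ Q ^ i) G =
      eval (fun j => χ (x j)) (frobProd Q G n) := by
    intro x
    rw [frobProd, map_prod]
    refine Finset.prod_congr rfl fun i _ => ?_
    rw [eval_expand]
    rfl
  simp only [h1]
  simp only [eval_eq']
  rw [Finset.sum_comm]
  have h2 : ∀ w : σ →₀ ℕ, ∑ x : σ → Γ, coeff w (frobProd Q G n) * ∏ j, χ (x j) ^ w j =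
      if (∀ j, m ∣ w j) then coeff w (frobProd Q G n) * (m : L) ^ Fintype.card σ else 0 := by
    intro w
    rw [← Finset.mul_sum, ← Fintype.piFinset_univ,
      ← Finset.prod_univ_sum (fun _ => Finset.univ) (fun j g => χ g ^ w j)]
    simp only [sum_char_pow χ hχ, ← hm]
    split_ifs with h
    · rw [Finset.prod_congr rfl fun j _ => if_pos (h j), Finset.prod_const, Finset.card_univ]
    · push Not at h
      obtain ⟨j, hj⟩ := h
      rw [Finset.prod_eq_zero (Finset.mem_univ j) (if_neg hj), mul_zero]
  simp only [h2]
  rw [← Finset.sum_filter, ← Finset.sum_mul, mul_comm]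
  congr 1
  have h3 : ∀ u : Expo σ D, (dworkMatrix Q D G ^ n) u u = coeff (m • u.1) (frobProd Q G n) := by
    intro u
    rw [dworkMatrix_pow hQ hD, ← hΓ, add_comm, add_smul, one_smul, coeff_monomial_mul, one_mul]
  simp only [Matrix.trace, Matrix.diag, h3]
  have hinj : Function.Injective fun u : Expo σ D => m • u.1 := fun u v h =>
    Subtype.ext (nsmul_right_injective hm0 h)
  refine (Finset.sum_map Finset.univ ⟨_, hinj⟩ fun w => coeff w (frobProd Q G n)).symm.trans ?_
  symm
  apply Finset.sum_subset
  · intro w hw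
    obtain ⟨hw1, hw2⟩ := Finset.mem_filter.1 hw
    choose d hd using hw2
    let u : σ →₀ ℕ := Finsupp.equivFunOnFinite.symm d
    have hu : m • u = w := by
      ext j; simp [u, hd]
    refine Finset.mem_map.2 ⟨⟨u, ?_⟩, Finset.mem_univ _, hu⟩
    have h4 := le_totalDegree hw1
    have h5 := totalDegree_frobProd hD n
    rw [← hΓ] at h5
    have h6 : w.degree = m * u.degree := by rw [← hu, map_nsmul, smul_eq_mul]
    change w.degree ≤ _ at h4
    rw [h6] at h4
    have h7 : m * u.degree ≤ m * D := by linarith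
    exact Nat.le_of_mul_le_mul_left h7 (Nat.pos_of_ne_zero hm0)
  · intro w hw hw'
    obtain ⟨u, _, rfl⟩ := Finset.mem_map.1 hw
    by_contra hne
    exact hw' (Finset.mem_filter.2 ⟨mem_support_iff.2 hne, fun j => by simp⟩)

end trace

section fredholm
variable {L : Type*} [NormedField L] [IsUltrametricDist L]

theorem coeff_prod_bound {ι : Type*} (s : Finset ι) (P : ι → Polynomial L) (c : ι → ℝ) {R : ℝ}
    (hR : 0 < R) (hP : ∀ i ∈ s, ∀ k, ‖(P i).coeff k‖ * R ^ k ≤ c i) (k : ℕ) :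
    ‖(∏ i ∈ s, P i).coeff k‖ * R ^ k ≤ ∏ i ∈ s, c i := by
  classical
  induction s using Finset.induction_on generalizing k with
  | empty =>
    rw [Finset.prod_empty, Finset.prod_empty, Polynomial.coeff_one]
    split_ifs with h
    · simp [h]
    · simp
  | insert a s ha ih =>
    rw [Finset.prod_insert ha, Finset.prod_insert ha, Polynomial.coeff_mul,
      ← le_div_iff₀ (by positivity)]
    have hca : 0 ≤ c a := le_trans (by positivity) (hP a (Finset.mem_insert_self _ _) 0)
    have hcs : 0 ≤ ∏ i ∈ s, c i := Finset.prod_nonneg fun i hi =>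
      le_trans (by positivity) (hP i (Finset.mem_insert_of_mem hi) 0)
    refine IsUltrametricDist.norm_sum_le_of_forall_le_of_nonneg (by positivity) fun x hx => ?_
    rw [le_div_iff₀ (by positivity), norm_mul, ← Finset.HasAntidiagonal.mem_antidiagonal.1 hx,
      pow_add]
    calc _ = (‖(P a).coeff x.1‖ * R ^ x.1) * (‖(∏ i ∈ s, P i).coeff x.2‖ * R ^ x.2) := by ring
      _ ≤ _ := mul_le_mul (hP a (Finset.mem_insert_self _ _) _)
        (ih (fun i hi => hP i (Finset.mem_insert_of_mem hi)) _) (by positivity) hca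

/-- A bound for the coefficients of `det (1 - T M)` from bounds `c i j` for the entries of `R M`;
the condition `1 ≤ c i i` lets `c` bound the diagonal entries of the identity as well. -/
theorem charpolyRev_bound {n : Type*} [Fintype n] [DecidableEq n] (M : Matrix n n L) {R B : ℝ}
    (hR : 0 < R) (c : n → n → ℝ) (hc1 : ∀ i, 1 ≤ c i i) (hc0 : ∀ i j, 0 ≤ c i j)
    (hM : ∀ i j, ‖M i j‖ * R ≤ c i j)
    (hB : ∀ τ : Equiv.Perm n, ∏ i, c (τ i) i ≤ B) (k : ℕ) :
    ‖M.charpolyRev.coeff k‖ * R ^ k ≤ B := by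
  have hB0 : 0 ≤ B := le_trans (Finset.prod_nonneg fun i _ => hc0 _ _) (hB 1)
  rw [Matrix.charpolyRev, Matrix.det_apply, Polynomial.finsetSum_coeff,
    ← le_div_iff₀ (by positivity)]
  refine IsUltrametricDist.norm_sum_le_of_forall_le_of_nonneg (by positivity) fun τ _ => ?_
  rw [le_div_iff₀ (by positivity)]
  refine le_trans (le_of_eq ?_) ((coeff_prod_bound Finset.univ
    (fun i => (1 - (Polynomial.X : Polynomial L) • M.map Polynomial.C) (τ i) i)
    (fun i => c (τ i) i) hR ?_ k).trans (hB τ))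
  · rcases Int.units_eq_one_or (Equiv.Perm.sign τ) with h1 | h1 <;> simp [h1]
  · intro i _ k
    have h1 : (1 - (Polynomial.X : Polynomial L) • M.map Polynomial.C) (τ i) i =
        Polynomial.C (if τ i = i then 1 else 0) - Polynomial.C (M (τ i) i) * Polynomial.X := by
      rw [Matrix.sub_apply, Matrix.one_apply, Matrix.smul_apply, Matrix.map_apply, smul_eq_mul,
        mul_comm]
      split_ifs <;> simp
    rw [h1, Polynomial.coeff_sub, Polynomial.coeff_C, Polynomial.coeff_C_mul, Polynomial.coeff_X]
    match k with
    | 0 =>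
      split_ifs with h2 h3 h4 <;> simp_all
    | 1 => simpa using hM (τ i) i
    | k + 2 => simpa using hc0 (τ i) i

variable [CharZero L] {σ : Type*} [Fintype σ] [DecidableEq σ]

/-- The Fredholm determinant of Dwork's operator is bounded on each disc, uniformly in the
degrees of the truncations. -/
theorem fredholm_bound {θ R : ℝ} (hθ : 0 < θ) (hθ1 : θ < 1) (hR : 1 ≤ R) : ∃ K : ℝ,
    ∀ (Q D : ℕ) (G : MvPolynomial σ L), 2 ≤ Q → (∀ w, ‖MvPolynomial.coeff w G‖ ≤ θ ^ w.degree) →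
      ∀ k, ‖zcoeff (fun n => -(dworkMatrix Q D G ^ n).trace) k‖ * R ^ k ≤ K := by
  obtain ⟨d, hd⟩ := exists_pow_lt_of_lt_one (show 0 < 1 / R by positivity) hθ1
  have hfin := Finsupp.finite_of_degree_le (σ := σ) d
  refine ⟨∏ u ∈ hfin.toFinset, R, fun Q D G hQ hG k => ?_⟩
  rw [← coeff_zser, logdet, Polynomial.coeff_coe]
  -- The weights `θ ^ (|v| - |u|)` cancel in a product over a permutation, and the other factors are
  -- `1` except for the finitely many `v` with `R θ ^ |v| > 1`.
  let c : Expo σ D → Expo σ D → ℝ := fun v u =>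
    θ ^ v.1.degree / θ ^ u.1.degree * max 1 (R * θ ^ v.1.degree)
  refine charpolyRev_bound _ (by positivity) c ?_ (fun _ _ => by positivity) ?_ ?_ k
  · intro v
    simp only [c]
    rw [div_self (by positivity), one_mul]
    exact le_max_left _ _
  · intro v u
    simp only [c, dworkMatrix, Matrix.of_apply]
    rw [MvPolynomial.coeff_monomial_mul', one_mul]
    split_ifs with h
    · have h1 : (Q • v.1 - u.1).degree + u.1.degree = Q * v.1.degree := by
        rw [← map_add, tsub_add_cancel_of_le h, map_nsmul, smul_eq_mul]
      have h2 : v.1.degree + v.1.degree ≤ Q * v.1.degree := by nlinarith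
      calc _ ≤ θ ^ (Q • v.1 - u.1).degree * R := by gcongr; exact hG _
        _ = θ ^ (Q * v.1.degree) / θ ^ u.1.degree * R := by
          rw [← h1, pow_add, mul_div_cancel_right₀ _ (by positivity)]
        _ ≤ θ ^ (v.1.degree + v.1.degree) / θ ^ u.1.degree * R := by
          gcongr ?_ / _ * _
          exact pow_le_pow_of_le_one hθ.le hθ1.le h2
        _ = θ ^ v.1.degree / θ ^ u.1.degree * (R * θ ^ v.1.degree) := by rw [pow_add]; ring
        _ ≤ _ := by gcongr; exact le_max_right _ _
    · rw [norm_zero, zero_mul]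
      positivity
  · intro τ
    simp only [c]
    rw [Finset.prod_mul_distrib, Finset.prod_div_distrib,
      Equiv.prod_comp τ (fun v => θ ^ v.1.degree), div_self (by positivity), one_mul,
      Equiv.prod_comp τ (fun v => max 1 (R * θ ^ v.1.degree))]
    calc ∏ v : Expo σ D, max 1 (R * θ ^ v.1.degree)
        = ∏ v ∈ Finset.univ.map (Function.Embedding.subtype fun u : σ →₀ ℕ => u.degree ≤ D),
          max 1 (R * θ ^ v.degree) := by rw [Finset.prod_map]; rfl
      _ ≤ ∏ v ∈ Finset.univ.map (Function.Embedding.subtype fun u : σ →₀ ℕ => u.degree ≤ D) ∪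
          hfin.toFinset, max 1 (R * θ ^ v.degree) := by
          refine Finset.prod_le_prod_of_subset_of_one_le Finset.subset_union_left ?_ ?_
          · intros; positivity
          · intros; exact le_max_left _ _
      _ = ∏ v ∈ hfin.toFinset, max 1 (R * θ ^ v.degree) := by
          symm
          apply Finset.prod_subset Finset.subset_union_right
          intro v _ hv
          simp only [Set.Finite.mem_toFinset, Set.mem_ofPred_eq, not_le] at hv
          apply max_eq_left
          calc R * θ ^ v.degree ≤ R * θ ^ d := by
                gcongr ?_ * ?_
                exact pow_le_pow_of_le_one hθ.le hθ1.le hv.le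
            _ ≤ R * (1 / R) := by gcongr
            _ = 1 := by field_simp
      _ ≤ _ := by
          apply Finset.prod_le_prod
          · intros; positivity
          · intro v _
            apply max_le hR
            have : θ ^ v.degree ≤ 1 := pow_le_one₀ hθ.le hθ1.le
            nlinarith

end fredholm
end Dwork

/-! ### Passage to the limit -/

namespace Dwork

section limits
open Filter Topology
variable {L : Type*} [NormedField L] [CharZero L] [IsUltrametricDist L]

omit [CharZero L] [IsUltrametricDist L] in
theorem tendsto_zcoeff {u : ℕ → ℕ → L} {v : ℕ → L}
    (h : ∀ n, 1 ≤ n → Tendsto (fun N => u N n) atTop (𝓝 (v n))) (k : ℕ) :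
    Tendsto (fun N => zcoeff (u N) k) atTop (𝓝 (zcoeff v k)) := by
  induction k using Nat.strong_induction_on with
  | _ k ih =>
    cases k with
    | zero => simp only [zcoeff_zero]; exact tendsto_const_nhds
    | succ k =>
      simp only [zcoeff_succ']
      refine Tendsto.div_const (tendsto_finsetSum _ fun i hi => ?_) _
      exact (h _ (by omega)).mul (ih _ (by omega))

variable {σ : Type*} [Fintype σ] [DecidableEq σ]

/-- A sum over the torus of a function that is a limit of polynomials with uniformly geometrically
decreasing coefficients is the sequence of a `p`-adically meromorphic zeta series. -/
theorem mer_of_limit {θ : ℝ} (hθ : 0 < θ) (hθ1 : θ < 1) {Q : ℕ} (hQ : 2 ≤ Q)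
    (G : ℕ → MvPolynomial σ L) (hG : ∀ N w, ‖MvPolynomial.coeff w (G N)‖ ≤ θ ^ w.degree)
    (Γ : ℕ → Type*) [∀ n, CommGroup (Γ n)] [∀ n, Fintype (Γ n)] [∀ n, IsCyclic (Γ n)]
    (χ : ∀ n, Γ n →* L) (hχ : ∀ n, Function.Injective (χ n))
    (hΓ : ∀ n, 1 ≤ n → Fintype.card (Γ n) + 1 = Q ^ n) (S : ℕ → L)
    (hS : ∀ n, 1 ≤ n → Tendsto (fun N => ∑ x : σ → Γ n, ∏ i ∈ Finset.range n,
      MvPolynomial.eval (fun j => χ n (x j) ^ Q ^ i) (G N)) atTop (𝓝 (S n))) : Mer S := by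
  let c : ℕ → L := fun n => (Q : L) ^ n - 1
  have hc : ∀ n, 1 ≤ n → c n = (Fintype.card (Γ n) : L) := fun n hn => by
    have := congrArg (Nat.cast : ℕ → L) (hΓ n hn)
    push_cast at this
    simp only [c]
    rw [← this]; ring
  have hc0 : ∀ n, 1 ≤ n → c n ≠ 0 := fun n hn => by
    rw [hc n hn]
    exact_mod_cast Fintype.card_ne_zero
  let T : ℕ → L := fun n => S n / c n ^ Fintype.card σ
  have hD : ∀ N, (G N).totalDegree + (G N).totalDegree ≤ Q * (G N).totalDegree := fun N => by
    nlinarith [Nat.zero_le (G N).totalDegree]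
  have hT : Ent fun n => -T n := by
    intro R hR
    obtain ⟨K, hK⟩ := fredholm_bound (L := L) (σ := σ) hθ hθ1 hR
    refine ⟨K, fun k => ?_⟩
    have hlim := tendsto_zcoeff
      (u := fun N n => -(dworkMatrix Q (G N).totalDegree (G N) ^ n).trace) (v := fun n => -T n)
      (fun n hn => by
        refine Tendsto.neg ?_
        have h1 := (hS n hn).div_const (c n ^ Fintype.card σ)
        refine h1.congr fun N => ?_
        rw [← trace_formula (by omega) (hD N) (χ n) (hχ n) (hΓ n hn), hc n hn,
          mul_div_cancel_left₀]
        rw [← hc n hn]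
        exact pow_ne_zero _ (hc0 n hn)) k
    refine le_of_tendsto (hlim.norm.mul_const _) (Eventually.of_forall fun N => ?_)
    exact hK Q _ (G N) hQ (hG N) k
  -- Multiplication by `c n = Q ^ n - 1` is a rescaling minus the identity, so it preserves meromorphy.
  have hmul : ∀ s : ℕ, Mer fun n => c n ^ s * T n := by
    intro s
    induction s with
    | zero =>
      refine (hT.mer.neg).congr fun n _ => ?_
      simp
    | succ s ih =>
      refine ((ih.scale (Q : L)).add ih.neg).congr fun n _ => ?_
      simp only [c]
      ring
  refine (hmul (Fintype.card σ)).congr fun n hn => ?_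
  simp only [T]
  rw [mul_div_cancel₀]
  exact pow_ne_zero _ (hc0 n hn)

end limits
end Dwork

/-! ### Teichmüller representatives -/

namespace Dwork

section teichmuller
open NNReal
variable {L : Type*} [NormedField L] [IsUltrametricDist L]

/-- The ring of elements of norm at most one. -/
noncomputable def unitBall (L : Type*) [NormedField L] [IsUltrametricDist L] : ValuationSubring L :=
  (NormedField.valuation (K := L)).valuationSubring

theorem mem_unitBall {x : L} : x ∈ unitBall L ↔ ‖x‖ ≤ 1 := by
  rw [unitBall, Valuation.mem_valuationSubring_iff, NormedField.valuation_apply, ← NNReal.coe_le_coe]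
  rfl

theorem residue_eq_zero_iff (x : unitBall L) :
    IsLocalRing.residue (unitBall L) x = 0 ↔ ‖(x : L)‖ < 1 := by
  rw [IsLocalRing.residue_eq_zero_iff, IsLocalRing.mem_maximalIdeal, mem_nonunits_iff]
  have h1 : IsUnit x ↔ 1 ≤ ‖(x : L)‖ := by
    constructor
    · rintro ⟨u, rfl⟩
      have h2 : ((u : unitBall L) : L) * ((u⁻¹ : (unitBall L)ˣ) : unitBall L) = 1 := by
        rw [← MulMemClass.coe_mul, Units.mul_inv]; rfl
      have h3 := congrArg norm h2
      rw [norm_mul, norm_one] at h3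
      have h4 : ‖(((u⁻¹ : (unitBall L)ˣ) : unitBall L) : L)‖ ≤ 1 := mem_unitBall.1 (Subtype.prop _)
      nlinarith [norm_nonneg ((u : unitBall L) : L)]
    · intro h
      have hx0 : (x : L) ≠ 0 := by
        intro h0; rw [h0, norm_zero] at h; linarith
      refine IsUnit.of_mul_eq_one ⟨(x : L)⁻¹, mem_unitBall.2 ?_⟩ (Subtype.ext ?_)
      · rw [norm_inv]; exact inv_le_one_of_one_le₀ h
      · exact mul_inv_cancel₀ hx0
  rw [h1, not_le]

/-- Teichmüller representatives: a multiplicative section of reduction from an algebraic extension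
of `𝔽_p` to an algebraically closed ultrametric field of residue characteristic `p`. -/
theorem exists_teichmuller [IsAlgClosed L] (p : ℕ) [hp : Fact p.Prime] (hpL : ‖(p : L)‖ < 1)
    (K : Type*) [Field K] [Algebra (ZMod p) K] (hK : ∀ x : K, ∃ n, 1 ≤ n ∧ x ^ p ^ n = x) :
    ∃ τ : K →*₀ L, (∀ x, ‖τ x‖ ≤ 1) ∧ ∀ x y, ‖τ (x + y) - τ x - τ y‖ < 1 := by
  classical
  let O := unitBall L
  let k := IsLocalRing.ResidueField O
  let K2 := AlgebraicClosure k
  let red : O →+* K2 := (algebraMap k K2).comp (IsLocalRing.residue O)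
  have hred : ∀ x : O, red x = 0 ↔ ‖(x : L)‖ < 1 := by
    intro x
    rw [← residue_eq_zero_iff]
    exact map_eq_zero (algebraMap k K2)
  have hpred : (p : K2) = 0 := by
    rw [← map_natCast red p, hred]; simpa using hpL
  have : CharP K2 p := by
    obtain ⟨q, hq⟩ := CharP.exists K2
    have h1 := (CharP.cast_eq_zero_iff K2 q p).1 hpred
    have h2 : q ≠ 1 := CharP.char_ne_one K2 q
    have := (Nat.dvd_prime hp.out).1 h1
    rcases this with h | h
    · exact absurd h h2
    · exact h ▸ hq
  let : Algebra (ZMod p) K2 := ZMod.algebra K2 p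
  have : Algebra.IsAlgebraic (ZMod p) K := by
    refine ⟨fun x => ?_⟩
    obtain ⟨n, hn, hx⟩ := hK x
    refine ⟨Polynomial.X ^ p ^ n - Polynomial.X,
      FiniteField.X_pow_card_pow_sub_X_ne_zero _ (by omega) hp.out.one_lt, by simp [hx]⟩
  let ι : K →ₐ[ZMod p] K2 := IsAlgClosed.lift
  -- If `a` and `b` have the same reduction, then `a ^ N - b ^ N = (a - b) * ∑ a ^ i b ^ (N-1-i)` for
  -- `N = p ^ n`, and the sum reduces to `N * (red b) ^ (N-1) = 0`, so its norm is less than `1`.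
  have huniq : ∀ (a b : O) (n : ℕ), 1 ≤ n → a ^ p ^ n = a → b ^ p ^ n = b → red a = red b → a = b := by
    intro a b n hn ha hb hab
    have h1 := Commute.geom_sum₂_mul (Commute.all a b) (p ^ n)
    rw [ha, hb] at h1
    have h2 : ‖((∑ i ∈ Finset.range (p ^ n), a ^ i * b ^ (p ^ n - 1 - i) : O) : L)‖ < 1 := by
      rw [← hred, map_sum, Finset.sum_congr rfl (g := fun _ => red b ^ (p ^ n - 1))]
      · rw [Finset.sum_const, Finset.card_range, nsmul_eq_mul]
        push_cast
        rw [hpred, zero_pow (by omega), zero_mul]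
      · intro i hi
        rw [map_mul, map_pow, map_pow, hab, ← pow_add]
        congr 1
        have := Finset.mem_range.1 hi
        omega
    have h3 := congrArg (fun z : O => ‖(z : L)‖) h1
    simp only [MulMemClass.coe_mul, norm_mul] at h3
    by_contra hne
    have h4 : 0 < ‖((a - b : O) : L)‖ := by
      rw [norm_pos_iff]
      intro h; exact hne (sub_eq_zero.1 (Subtype.ext h))
    nlinarith
  -- `X ^ p ^ n - X` splits over `L` with roots in `O`, so the reduction of one of them is `ι x`.
  have hex : ∀ x : K, ∃ t : O, (∃ n, 1 ≤ n ∧ t ^ p ^ n = t) ∧ red t = ι x := by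
    intro x
    obtain ⟨n, hn, hx⟩ := hK x
    have hM : 1 < p ^ n := Nat.one_lt_pow (by omega) hp.out.one_lt
    let P : Polynomial O := Polynomial.X ^ p ^ n - Polynomial.X
    have hPm : P.Monic := by
      apply Polynomial.monic_X_pow_sub
      rw [Polynomial.degree_X]; exact_mod_cast hM
    have hsp : (P.map (algebraMap O L)).Splits := IsAlgClosed.splits _
    have hroots := hsp.eq_prod_roots_of_monic (hPm.map _)
    have hmem : ∀ t ∈ (P.map (algebraMap O L)).roots, t ^ p ^ n = t := by
      intro t ht
      have := Polynomial.isRoot_of_mem_roots ht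
      simpa [P, sub_eq_zero] using this
    have hle : ∀ t ∈ (P.map (algebraMap O L)).roots, t ∈ O := by
      intro t ht
      have h1 := congrArg norm (hmem t ht)
      rw [norm_pow] at h1
      refine mem_unitBall.2 (not_lt.1 fun h => ?_)
      have := lt_self_pow₀ h hM
      linarith
    obtain ⟨T, hT⟩ : ∃ T : Multiset O, T.map (algebraMap O L) = (P.map (algebraMap O L)).roots := by
      refine ⟨(P.map (algebraMap O L)).roots.pmap (fun t h => (⟨t, h⟩ : O)) hle, ?_⟩
      rw [Multiset.map_pmap]
      exact (Multiset.pmap_eq_map _ _ _ _).trans (Multiset.map_id _)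
    have hP : P = (T.map fun t => Polynomial.X - Polynomial.C t).prod := by
      apply Polynomial.map_injective (algebraMap O L) Subtype.val_injective
      rw [hroots, ← hT, Polynomial.map_multiset_prod, Multiset.map_map, Multiset.map_map]
      congr 1
      refine Multiset.map_congr rfl fun t _ => ?_
      simp
    have h1 : Polynomial.eval₂ red (ι x) P = 0 := by
      simp [P, ← map_pow, hx]
    rw [hP, Polynomial.eval₂_multiset_prod, Multiset.prod_eq_zero_iff, Multiset.map_map] at h1
    obtain ⟨t, ht, h2⟩ := Multiset.mem_map.1 h1
    refine ⟨t, ⟨n, hn, ?_⟩, ?_⟩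
    · apply Subtype.ext
      have := hmem t (by rw [← hT]; exact Multiset.mem_map_of_mem (algebraMap O L) ht)
      simpa using this
    · simp only [Function.comp_apply, Polynomial.eval₂_sub, Polynomial.eval₂_X,
        Polynomial.eval₂_C] at h2
      exact (sub_eq_zero.1 h2).symm
  have hiter : ∀ (a : O) (n j : ℕ), a ^ p ^ n = a → a ^ p ^ (n * j) = a := by
    intro a n j ha
    induction j with
    | zero => simp
    | succ j ih => rw [Nat.mul_succ, pow_add, pow_mul, ih, ha]
  have huniq' : ∀ (a b : O), (∃ n, 1 ≤ n ∧ a ^ p ^ n = a) → (∃ n, 1 ≤ n ∧ b ^ p ^ n = b) →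
      red a = red b → a = b := by
    rintro a b ⟨n, hn, ha⟩ ⟨j, hj, hb⟩ h
    refine huniq a b (n * j) (Nat.mul_pos hn hj) (hiter a n j ha) ?_ h
    rw [mul_comm]; exact hiter b j n hb
  choose t ht htr using hex
  refine ⟨⟨⟨fun x => (t x : L), ?_⟩, ?_, ?_⟩, fun x => mem_unitBall.1 (t x).2, fun x y => ?_⟩
  · show ((t 0 : O) : L) = ((0 : O) : L)
    congr 1
    refine huniq' _ _ (ht 0) ⟨1, le_rfl, ?_⟩ ?_
    · rw [pow_one, zero_pow hp.out.ne_zero]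
    · rw [htr]; simp
  · show ((t 1 : O) : L) = ((1 : O) : L)
    congr 1
    refine huniq' _ _ (ht 1) ⟨1, le_rfl, one_pow _⟩ ?_
    rw [htr]; simp
  · intro x y
    show ((t (x * y) : O) : L) = ((t x * t y : O) : L)
    congr 1
    refine huniq' _ _ (ht _) ?_ ?_
    · obtain ⟨n, hn, h1⟩ := ht x
      obtain ⟨j, hj, h2⟩ := ht y
      refine ⟨n * j, Nat.mul_pos hn hj, ?_⟩
      rw [mul_pow, hiter _ _ _ h1, mul_comm n j, hiter _ _ _ h2]
    · rw [map_mul, htr, htr, htr, map_mul]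
  · show ‖((t (x + y) - t x - t y : O) : L)‖ < 1
    rw [← hred, map_sub, map_sub, htr, htr, htr, map_add]
    ring

end teichmuller
end Dwork

/-! ### The Artin–Hasse exponential -/

namespace Dwork

section artinHasse
open Classical in
/-- The indicator of the powers of `p`, the logarithmic data of the Artin–Hasse exponential. -/
noncomputable def powInd (p : ℕ) (F : Type*) [Field F] (n : ℕ) : F := if ∃ j, n = p ^ j then 1 else 0

theorem powInd_one (p : ℕ) (F : Type*) [Field F] : powInd p F 1 = 1 := if_pos ⟨0, by simp⟩

theorem powInd_eq_zero_or_one (p : ℕ) (F : Type*) [Field F] (n : ℕ) :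
    powInd p F n = 0 ∨ powInd p F n = 1 := by
  rw [powInd]; split_ifs <;> simp

theorem powInd_mul_dvd (p : ℕ) [hp : Fact p.Prime] (F : Type*) [Field F] (n : ℕ) (hn : 1 ≤ n) :
    (p : F) * powInd p F n = (if p ∣ n then (p : F) * powInd p F (n / p) else 0) +
      (if n = 1 then (p : F) else 0) := by
  by_cases h1 : n = 1
  · subst h1
    rw [if_neg (fun h => absurd (Nat.le_of_dvd one_pos h) (not_le.2 hp.out.one_lt)), powInd_one]
    simp
  rw [if_neg h1, add_zero]
  by_cases h : ∃ j, n = p ^ j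
  · obtain ⟨j, rfl⟩ := h
    obtain ⟨i, rfl⟩ : ∃ i, j = i + 1 := Nat.exists_eq_succ_of_ne_zero (by rintro rfl; simp at h1)
    rw [if_pos (dvd_pow_self p (by omega)), powInd, if_pos ⟨_, rfl⟩, pow_succ,
      Nat.mul_div_cancel _ hp.out.pos, powInd, if_pos ⟨_, rfl⟩]
  · rw [powInd, if_neg h]
    split_ifs with hd
    · obtain ⟨c, rfl⟩ := hd
      rw [Nat.mul_div_cancel_left _ hp.out.pos, powInd, if_neg]
      rintro ⟨j, rfl⟩
      exact h ⟨j + 1, by rw [pow_succ, mul_comm]⟩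
    · simp

open PowerSeries in
/-- The functional equation `E(T) ^ p = E(T ^ p) * exp (p T)` of the Artin–Hasse exponential `E`. -/
theorem artinHasse_functional (p : ℕ) [hp : Fact p.Prime] (F : Type*) [Field F] [CharZero F] :
    zser (powInd p F) ^ p = (zser (powInd p F)).expand p hp.out.ne_zero * rescale (p : F) (exp F) := by
  rw [← zser_expand, ← zser_single_one, ← zser_add,
    ← zser_congr (powInd_mul_dvd p F)]
  have h1 := zser_sum (Finset.range p) (fun _ => powInd p F)
  rw [Finset.prod_const, Finset.card_range] at h1
  rw [← h1]
  congr 1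
  ext n; simp

theorem norm_natCast_padic {p : ℕ} [hp : Fact p.Prime] {n : ℕ} (hn : n ≠ 0) :
    ‖(n : ℚ_[p])‖ = (p : ℝ)⁻¹ ^ padicValNat p n := by
  rw [Padic.norm_eq_zpow_neg_valuation (by exact_mod_cast hn), Padic.valuation_natCast,
    zpow_neg, zpow_natCast, inv_pow]

theorem padicValNat_factorial_le {p : ℕ} [hp : Fact p.Prime] {l : ℕ} (hl : 1 ≤ l) :
    (p - 1) * padicValNat p l.factorial ≤ l - 1 := by
  rw [sub_one_mul_padicValNat_factorial]
  have : 1 ≤ (p.digits l).sum := by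
    by_contra h
    have h0 : (p.digits l).sum = 0 := by omega
    have h1 := List.sum_eq_zero_iff.1 h0
    have h2 : p.digits l ≠ [] := Nat.digits_ne_nil_iff_ne_zero.2 (by omega)
    exact Nat.getLast_digit_ne_zero p (m := l) (by omega) (h1 _ (List.getLast_mem h2))
  omega

theorem norm_inv_lt_one {p : ℕ} [hp : Fact p.Prime] : 0 < (p : ℝ)⁻¹ ∧ (p : ℝ)⁻¹ < 1 := by
  have := hp.out.one_lt
  have h : (1 : ℝ) < p := by exact_mod_cast this
  exact ⟨by positivity, inv_lt_one_of_one_lt₀ h⟩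

theorem norm_pow_div_factorial_le (p : ℕ) [hp : Fact p.Prime] {l : ℕ} (hl : 1 ≤ l) :
    ‖(p : ℚ_[p]) ^ l / (l.factorial : ℚ_[p])‖ ≤ (p : ℝ)⁻¹ := by
  obtain ⟨h0, h1⟩ := norm_inv_lt_one (p := p)
  rw [norm_div, norm_pow, Padic.norm_p, norm_natCast_padic (Nat.factorial_ne_zero l)]
  have h2 := padicValNat_factorial_le (p := p) hl
  have h3 : padicValNat p l.factorial ≤ l - 1 := by
    refine le_trans ?_ h2
    exact Nat.le_mul_of_pos_left _ (Nat.sub_pos_of_lt hp.out.one_lt)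
  rw [div_le_iff₀ (by positivity), ← pow_succ']
  exact pow_le_pow_of_le_one h0.le h1.le (by omega)

open Polynomial in
/-- Raising to the `p`-th power and substituting `X ^ p` agree modulo `p` on `ℤ_p[X]`. -/
theorem norm_coeff_pow_sub_expand (p : ℕ) [hp : Fact p.Prime] (g : ℤ_[p][X]) (n : ℕ) :
    ‖((g ^ p).coeff n - (expand ℤ_[p] p g).coeff n : ℤ_[p])‖ ≤ (p : ℝ)⁻¹ := by
  have h1 : (g ^ p - expand ℤ_[p] p g).map (PadicInt.toZMod (p := p)) = 0 := by
    rw [Polynomial.map_sub, Polynomial.map_pow, Polynomial.map_expand, ZMod.expand_card, sub_self]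
  have h2 := congrArg (fun P => Polynomial.coeff P n) h1
  simp only [Polynomial.coeff_map, Polynomial.coeff_zero] at h2
  rw [← RingHom.mem_ker, PadicInt.ker_toZMod, PadicInt.maximalIdeal_eq_span_p] at h2
  have h3 := (PadicInt.norm_le_pow_iff_mem_span_pow _ 1).2 (by rwa [pow_one])
  rw [Polynomial.coeff_sub] at h3
  simpa using h3

open PowerSeries in
/-- The Artin–Hasse exponential has `p`-integral coefficients. This is the Dieudonné–Dwork argument:
the functional equation is compared with the congruence `g ^ p ≡ g(T ^ p)` modulo `p` for the
truncation `g` of the series below degree `n`. -/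
theorem artinHasse_integral_padic (p : ℕ) [hp : Fact p.Prime] (n : ℕ) :
    ‖zcoeff (powInd p ℚ_[p]) n‖ ≤ 1 := by
  induction n using Nat.strong_induction_on with
  | _ n ih =>
  rcases Nat.eq_zero_or_pos n with rfl | hn
  · rw [zcoeff_zero, norm_one]
  set e := zcoeff (powInd p ℚ_[p]) with he
  obtain ⟨hP0, hP1⟩ := norm_inv_lt_one (p := p)
  -- The truncation of the series below degree `n`, with integral coefficients.
  have ha : ∀ i : Fin n, ∃ a : ℤ_[p], (a : ℚ_[p]) = e i := fun i => ⟨⟨e i.1, ih i.1 i.2⟩, rfl⟩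
  choose a ha using ha
  let g : Polynomial ℤ_[p] := ∑ i : Fin n, Polynomial.monomial i.1 (a i)
  have hgc : ∀ i, ((g.coeff i : ℤ_[p]) : ℚ_[p]) = if i < n then e i else 0 := by
    intro i
    simp only [g, Polynomial.finsetSum_coeff, Polynomial.coeff_monomial]
    split_ifs with h
    · rw [Finset.sum_eq_single ⟨i, h⟩]
      · simp [ha]
      · intro j _ hj; rw [if_neg (fun h' => hj (Fin.ext h'))]
      · simp
    · rw [Finset.sum_eq_zero]; · simp
      intro j _; rw [if_neg]; have := j.2; omega
  let G : PowerSeries ℚ_[p] := ((g.map (PadicInt.Coe.ringHom (p := p)) : Polynomial ℚ_[p]) : PowerSeries ℚ_[p])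
  have hG : ∀ i, coeff i G = if i < n then e i else 0 := by
    intro i
    rw [← hgc i]
    simp only [G, Polynomial.coeff_coe, Polynomial.coeff_map]
    rfl
  let H : PowerSeries ℚ_[p] := PowerSeries.mk fun i => e (n + i)
  have hE : zser (powInd p ℚ_[p]) = G + X ^ n * H := by
    ext i
    rw [coeff_zser, map_add, hG, coeff_X_pow_mul']
    by_cases h : i < n
    · rw [if_pos h, if_neg (by omega), add_zero]
    · rw [if_neg h, if_pos (by omega), zero_add, coeff_mk, Nat.add_sub_cancel' (by omega)]
  obtain ⟨k, hk⟩ := Polynomial.powAddExpansion G (X ^ n * H) p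
  have hL : coeff n (zser (powInd p ℚ_[p]) ^ p) = coeff n (G ^ p) + p * e n := by
    rw [hE, hk, map_add, map_add]
    have h1 : coeff n (k * (X ^ n * H) ^ 2) = 0 := by
      rw [show k * (X ^ n * H) ^ 2 = X ^ (2 * n) * (k * H ^ 2) by ring, coeff_X_pow_mul',
        if_neg (by omega)]
    have h2 : (p : PowerSeries ℚ_[p]) * G ^ (p - 1) * (X ^ n * H) =
        X ^ n * (C (p : ℚ_[p]) * (G ^ (p - 1) * H)) := by
      rw [map_natCast]; ring
    rw [h1, add_zero, h2, coeff_X_pow_mul', if_pos le_rfl, Nat.sub_self, coeff_C_mul,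
      coeff_zero_eq_constantCoeff_apply, map_mul (constantCoeff (R := ℚ_[p])),
      map_pow (constantCoeff (R := ℚ_[p])),
      ← coeff_zero_eq_constantCoeff_apply, ← coeff_zero_eq_constantCoeff_apply, hG,
      if_pos hn, coeff_mk, he, zcoeff_zero, one_pow, one_mul, add_zero]
  have hR : coeff n (zser (powInd p ℚ_[p]) ^ p) =
      ∑ x ∈ Finset.HasAntidiagonal.antidiagonal n, coeff x.1 ((zser (powInd p ℚ_[p])).expand p hp.out.ne_zero) *
        coeff x.2 (rescale (p : ℚ_[p]) (exp ℚ_[p])) := by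
    rw [artinHasse_functional, coeff_mul]
  have hexp : ∀ i, coeff i ((zser (powInd p ℚ_[p])).expand p hp.out.ne_zero) =
      if p ∣ i then e (i / p) else 0 := by
    intro i
    rw [coeff_expand]
    split_ifs <;> simp [he]
  have hfac : ∀ l, coeff l (rescale (p : ℚ_[p]) (exp ℚ_[p])) = (p : ℚ_[p]) ^ l / l.factorial := by
    intro l
    rw [coeff_rescale, coeff_exp]
    simp [div_eq_mul_inv]
  have hsplit : coeff n (zser (powInd p ℚ_[p]) ^ p) - (if p ∣ n then e (n / p) else 0) =
      ∑ x ∈ (Finset.HasAntidiagonal.antidiagonal n).erase (n, 0),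
        coeff x.1 ((zser (powInd p ℚ_[p])).expand p hp.out.ne_zero) *
        coeff x.2 (rescale (p : ℚ_[p]) (exp ℚ_[p])) := by
    rw [hR, ← Finset.add_sum_erase _ _ (show (n, 0) ∈ Finset.HasAntidiagonal.antidiagonal n by simp)]
    simp only [hexp, hfac]
    simp
  have hb1 : ‖coeff n (zser (powInd p ℚ_[p]) ^ p) - (if p ∣ n then e (n / p) else 0)‖ ≤ (p : ℝ)⁻¹ := by
    rw [hsplit]
    refine IsUltrametricDist.norm_sum_le_of_forall_le_of_nonneg hP0.le ?_
    rintro ⟨i, j⟩ hx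
    obtain ⟨hne, hx⟩ := Finset.mem_erase.1 hx
    rw [Finset.HasAntidiagonal.mem_antidiagonal] at hx
    simp only at hx
    have hj : 1 ≤ j := by
      by_contra h
      have : j = 0 := by omega
      subst this
      exact hne (by rw [← hx]; simp)
    simp only [hexp, hfac]
    rw [norm_mul, ← one_mul (p : ℝ)⁻¹]
    refine mul_le_mul ?_ (norm_pow_div_factorial_le p hj) (norm_nonneg _) zero_le_one
    split_ifs
    · exact ih _ (lt_of_le_of_lt (Nat.div_le_self _ _) (by omega))
    · simp
  have hb2 : ‖coeff n (G ^ p) - (if p ∣ n then e (n / p) else 0)‖ ≤ (p : ℝ)⁻¹ := by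
    have h1 := norm_coeff_pow_sub_expand p g n
    rw [Polynomial.coeff_expand hp.out.pos] at h1
    have h2 : coeff n (G ^ p) = (((g ^ p).coeff n : ℤ_[p]) : ℚ_[p]) := by
      simp only [G, ← Polynomial.coe_pow, ← Polynomial.map_pow, Polynomial.coeff_coe, Polynomial.coeff_map]
      rfl
    have h3 : (if p ∣ n then e (n / p) else 0) =
        (((if p ∣ n then g.coeff (n / p) else 0 : ℤ_[p])) : ℚ_[p]) := by
      split_ifs
      · rw [hgc, if_pos (Nat.div_lt_self hn hp.out.one_lt)]
      · simp
    rw [h2, h3, ← PadicInt.coe_sub, ← PadicInt.norm_def]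
    exact h1
  have hfin : (p : ℚ_[p]) * e n =
      (coeff n (zser (powInd p ℚ_[p]) ^ p) - (if p ∣ n then e (n / p) else 0)) +
      -(coeff n (G ^ p) - (if p ∣ n then e (n / p) else 0)) := by
    rw [hL]; ring
  have h4 : ‖(p : ℚ_[p]) * e n‖ ≤ (p : ℝ)⁻¹ := by
    rw [hfin]
    exact (IsUltrametricDist.norm_add_le_max _ _).trans (max_le hb1 (by rwa [norm_neg]))
  rw [norm_mul, Padic.norm_p] at h4
  exact le_of_mul_le_mul_left (by simpa using h4) hP0

theorem artinHasse_integral (p : ℕ) [hp : Fact p.Prime] (L : Type*) [NormedField L]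
    [NormedAlgebra ℚ_[p] L] (n : ℕ) : ‖zcoeff (powInd p L) n‖ ≤ 1 := by
  have h : powInd p L = fun n => algebraMap ℚ_[p] L (powInd p ℚ_[p] n) := by
    ext n
    rw [powInd, powInd]; split_ifs <;> simp
  rw [h, zcoeff_map, norm_algebraMap']
  exact artinHasse_integral_padic p n

end artinHasse
end Dwork

/-! ### The splitting function -/

namespace Dwork

section splitting
variable {p : ℕ} [hp : Fact p.Prime] {L : Type*} [NormedField L] [NormedAlgebra ℚ_[p] L]

include hp in
variable (p L) in
theorem norm_p : ‖(p : L)‖ = (p : ℝ)⁻¹ := by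
  rw [← map_natCast (algebraMap ℚ_[p] L), norm_algebraMap', Padic.norm_p]

variable (p L) in
theorem norm_natCast {n : ℕ} (hn : n ≠ 0) : ‖(n : L)‖ = (p : ℝ)⁻¹ ^ padicValNat p n := by
  rw [← map_natCast (algebraMap ℚ_[p] L), norm_algebraMap', norm_natCast_padic hn]

variable {π : L} (hπ : π ^ (p - 1) = -(p : L))
include hπ

theorem norm_pi_pow : ‖π‖ ^ (p - 1) = (p : ℝ)⁻¹ := by
  rw [← norm_pow, hπ, norm_neg, norm_p]

theorem norm_pi_pos : 0 < ‖π‖ := by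
  have h := norm_pi_pow hπ
  rcases (norm_nonneg π).lt_or_eq with h1 | h1
  · exact h1
  · rw [← h1, zero_pow (by have := hp.out.one_lt; omega)] at h
    have := (norm_inv_lt_one (p := p)).1
    linarith

theorem norm_pi_lt_one : ‖π‖ < 1 := by
  have h := norm_pi_pow hπ
  by_contra h1
  have := one_le_pow₀ (not_lt.1 h1) (n := p - 1)
  have := (norm_inv_lt_one (p := p)).2
  linarith

theorem norm_pi_pow_div_factorial {l : ℕ} (hl : 1 ≤ l) : ‖π ^ l / (l.factorial : L)‖ ≤ ‖π‖ := by
  have hp1 : p - 1 ≠ 0 := by have := hp.out.one_lt; omega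
  obtain ⟨hP0, hP1⟩ := norm_inv_lt_one (p := p)
  rw [← pow_le_pow_iff_left₀ (norm_nonneg _) (norm_nonneg _) hp1, norm_div, norm_pow,
    norm_natCast p L (Nat.factorial_ne_zero l), div_pow, ← pow_mul, mul_comm l, pow_mul,
    norm_pi_pow hπ, div_le_iff₀ (by positivity), ← pow_mul, ← pow_succ']
  apply pow_le_pow_of_le_one hP0.le hP1.le
  have := padicValNat_factorial_le (p := p) hl
  rw [mul_comm] at this
  omega

variable {ρ : ℝ} (hρ0 : 0 < ρ) (hρ : ρ ^ p ^ 2 = (p : ℝ)⁻¹)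
include hρ0 hρ

omit [NormedAlgebra ℚ_[p] L] hπ hρ0 in
theorem rho_lt_one : ρ < 1 := by
  by_contra h1
  have := one_le_pow₀ (not_lt.1 h1) (n := p ^ 2)
  have := (norm_inv_lt_one (p := p)).2
  linarith

theorem norm_pi_le_rho : ‖π‖ ≤ ρ := by
  have h2 : p ^ 2 ≠ 0 := pow_ne_zero _ hp.out.ne_zero
  rw [← pow_le_pow_iff_left₀ (norm_nonneg _) hρ0.le h2, hρ, ← norm_pi_pow hπ]
  apply pow_le_pow_of_le_one (norm_nonneg _) (norm_pi_lt_one hπ).le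
  have := hp.out.pos
  nlinarith [Nat.sub_le p 1]

omit hρ0 in
/-- The coefficients `π ^ (p ^ j) / p ^ j` with `j ≥ 2` are negligible, since `p ^ j` grows faster
than `(p - 1) j`. -/
theorem norm_pi_pow_div {j : ℕ} (hj : 2 ≤ j) :
    ‖π ^ p ^ j / (p : L) ^ j‖ ≤ ‖π‖ * ρ ^ p ^ j := by
  obtain ⟨hP0, hP1⟩ := norm_inv_lt_one (p := p)
  have hs : ∃ s, p ^ j = (p - 1) * s + 1 ∧ j + p ^ (j - 2) ≤ s := by
    induction j, hj using Nat.le_induction with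
    | base =>
      obtain ⟨t, ht⟩ : ∃ t, p = t + 2 := ⟨p - 2, by have := hp.out.two_le; omega⟩
      refine ⟨1 + p, ?_, ?_⟩
      · subst ht; simp; ring
      · simp; have := hp.out.two_le; omega
    | succ j hj ih =>
      obtain ⟨s, h1, h2⟩ := ih
      refine ⟨s + p ^ j, ?_, ?_⟩
      · obtain ⟨t, ht⟩ : ∃ t, p = t + 1 := ⟨p - 1, by have := hp.out.two_le; omega⟩
        subst ht
        simp only [Nat.add_sub_cancel] at h1 ⊢
        rw [pow_succ, mul_add]
        linarith [h1]
      · have h3 : 1 ≤ p ^ (j - 2) := Nat.one_le_pow _ _ hp.out.pos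
        have h4 : p ^ (j + 1 - 2) ≤ p ^ j := Nat.pow_le_pow_right hp.out.pos (by omega)
        omega
  obtain ⟨s, h1, h2⟩ := hs
  have h3 : p ^ j = p ^ 2 * p ^ (j - 2) := by rw [← pow_add]; congr 1; omega
  rw [norm_div, norm_pow, norm_pow, norm_p p L, div_le_iff₀ (by positivity)]
  conv_rhs => rw [h3, pow_mul, hρ, mul_assoc, ← pow_add]
  rw [h1, pow_succ, pow_mul, norm_pi_pow hπ, mul_comm]
  refine mul_le_mul_of_nonneg_left ?_ (norm_nonneg _)
  apply pow_le_pow_of_le_one hP0.le hP1.le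
  omega

end splitting

section small
open PowerSeries
variable {L : Type*} [NormedField L] [IsUltrametricDist L]

/-- Power series with constant term `1` whose coefficient of degree `k ≥ 1` is at most `w ρ ^ k`. -/
def IsSmall (w ρ : ℝ) (F : PowerSeries L) : Prop :=
  coeff 0 F = 1 ∧ ∀ k, 1 ≤ k → ‖coeff k F‖ ≤ w * ρ ^ k

theorem IsSmall.mul {w ρ : ℝ} (hw : 0 ≤ w) (hw1 : w ≤ 1) (hρ : 0 ≤ ρ) {F G : PowerSeries L}
    (hF : IsSmall w ρ F) (hG : IsSmall w ρ G) : IsSmall w ρ (F * G) := by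
  refine ⟨?_, fun k hk => ?_⟩
  · have := hF.1
    have := hG.1
    simp_all
  rw [coeff_mul]
  refine IsUltrametricDist.norm_sum_le_of_forall_le_of_nonneg (by positivity) ?_
  rintro ⟨i, j⟩ hij
  rw [Finset.HasAntidiagonal.mem_antidiagonal] at hij
  simp only at hij ⊢
  rw [norm_mul]
  rcases Nat.eq_zero_or_pos i with rfl | hi
  · rw [hF.1, norm_one, one_mul]
    have : j = k := by omega
    exact this ▸ hG.2 j (by omega)
  rcases Nat.eq_zero_or_pos j with rfl | hj
  · rw [hG.1, norm_one, mul_one]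
    have : i = k := by omega
    exact this ▸ hF.2 i (by omega)
  calc _ ≤ (w * ρ ^ i) * (w * ρ ^ j) := by
        gcongr
        · exact hF.2 i hi
        · exact hG.2 j hj
    _ = w * (w * ρ ^ k) := by rw [← hij, pow_add]; ring
    _ ≤ w * ρ ^ k := by
        rw [← mul_assoc]
        apply mul_le_mul_of_nonneg_right _ (by positivity)
        nlinarith

theorem IsSmall.prod {w ρ : ℝ} (hw : 0 ≤ w) (hw1 : w ≤ 1) (hρ : 0 ≤ ρ) {ι : Type*} (s : Finset ι)
    {F : ι → PowerSeries L} (hF : ∀ i ∈ s, IsSmall w ρ (F i)) : IsSmall w ρ (∏ i ∈ s, F i) := by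
  classical
  induction s using Finset.induction_on with
  | empty =>
    refine ⟨by simp, fun k hk => ?_⟩
    rw [Finset.prod_empty, coeff_one, if_neg (by omega), norm_zero]
    positivity
  | insert a s ha ih =>
    rw [Finset.prod_insert ha]
    exact (hF a (Finset.mem_insert_self _ _)).mul hw hw1 hρ
      (ih fun i hi => hF i (Finset.mem_insert_of_mem hi))

end small

section splitting
open PowerSeries
variable {p : ℕ} [hp : Fact p.Prime] {L : Type*} [NormedField L] [NormedAlgebra ℚ_[p] L]
  [IsUltrametricDist L] [CharZero L]

/-- The coefficients of Dwork's splitting function `exp (π (T - T ^ p))`, where `π ^ (p-1) = -p`. -/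
noncomputable def splitCoeff (p : ℕ) (π : L) : ℕ → L :=
  zcoeff fun n => (if n = 1 then π else 0) + if n = p then (p : L) * (-π) else 0

variable {π : L} (hπ : π ^ (p - 1) = -(p : L)) {ρ : ℝ} (hρ0 : 0 < ρ) (hρ : ρ ^ p ^ 2 = (p : ℝ)⁻¹)
include hπ hρ0 hρ

omit [IsUltrametricDist L] in
/-- The factors `exp (-(π T) ^ (p ^ j) / p ^ j)`, `j ≥ 2`, by which the splitting function differs
from the Artin–Hasse exponential of `π T` have small coefficients. -/
theorem isSmall_factor {j : ℕ} (hj : 2 ≤ j) :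
    IsSmall ‖π‖ ρ (zser fun n => if n = p ^ j then ((p ^ j : ℕ) : L) * (-(π ^ p ^ j / (p : L) ^ j)) else 0) := by
  have hpj : p ^ j ≠ 0 := pow_ne_zero _ hp.out.ne_zero
  rw [zser_single hpj]
  have hw := norm_pi_pos hπ
  refine ⟨by simp [coeff_expand], fun k hk => ?_⟩
  rw [coeff_expand]
  split_ifs with hd
  swap
  · rw [norm_zero]; positivity
  obtain ⟨l, rfl⟩ := hd
  have hl : 1 ≤ l := by
    rcases Nat.eq_zero_or_pos l with rfl | h
    · simp at hk
    · exact h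
  rw [Nat.mul_div_cancel_left _ (Nat.pos_of_ne_zero hpj), coeff_rescale, coeff_exp]
  have hπ0 : π ≠ 0 := norm_pos_iff.1 hw
  have h1 : (-(π ^ p ^ j / (p : L) ^ j)) ^ l * (algebraMap ℚ L (1 / (l.factorial : ℚ))) =
      (-1) ^ l * ((π ^ p ^ j / (p : L) ^ j) / π) ^ l * (π ^ l / (l.factorial : L)) := by
    rw [neg_pow, div_pow _ π, map_div₀, map_one, map_natCast]
    field_simp
  rw [h1, norm_mul, norm_mul, norm_pow, norm_pow, norm_neg, norm_one, one_pow, one_mul, norm_div,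
    pow_mul, mul_comm]
  gcongr
  · exact norm_pi_pow_div_factorial hπ hl
  · rw [div_le_iff₀ hw, mul_comm]
    exact norm_pi_pow_div hπ hρ hj

omit [NormedAlgebra ℚ_[p] L] [IsUltrametricDist L] hρ0 hρ in
/-- Up to any given degree, the splitting function is the Artin–Hasse exponential of `π T` times
finitely many factors `exp (-π ^ (p ^ j) T ^ (p ^ j) / p ^ j)` with `j ≥ 2`. -/
theorem splitCoeff_eq (k : ℕ) : splitCoeff p π k =
    coeff k (rescale π (zser (powInd p L)) * ∏ j ∈ Finset.Ico 2 (k + 2),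
      zser fun n => if n = p ^ j then ((p ^ j : ℕ) : L) * (-(π ^ p ^ j / (p : L) ^ j)) else 0) := by
  have h1 : rescale π (zser (powInd p L)) = zser (fun n => π ^ n * powInd p L n) := by
    ext n; rw [coeff_rescale, coeff_zser, coeff_zser, zcoeff_scale]
  rw [h1, ← zser_sum, ← zser_add, coeff_zser, splitCoeff]
  apply zcoeff_congr
  intro n hn hnk
  have hpp : (p : L) ≠ 0 := Nat.cast_ne_zero.2 hp.out.ne_zero
  have hinj := Nat.pow_right_injective hp.out.two_le
  by_cases h : ∃ j, n = p ^ j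
  · obtain ⟨j, rfl⟩ := h
    have h0 : powInd p L (p ^ j) = 1 := if_pos ⟨j, rfl⟩
    rw [h0, mul_one]
    have hjk : j < k + 2 := by
      have := Nat.lt_pow_self (n := j) hp.out.one_lt; omega
    by_cases hj : 2 ≤ j
    · rw [Finset.sum_eq_single j, if_pos rfl, if_neg, if_neg]
      · push_cast; field_simp; ring
      · intro h; have : j = 1 := hinj (by simpa using h)
        omega
      · intro h; have : j = 0 := hinj (by simpa using h)
        omega
      · intro b _ hb; rw [if_neg (fun h => hb (hinj h.symm))]
      · intro h; exact absurd (Finset.mem_Ico.2 ⟨hj, hjk⟩) h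
    · rw [Finset.sum_eq_zero]
      · have : j = 0 ∨ j = 1 := by omega
        rcases this with rfl | rfl
        · have : 1 ≠ p := hp.out.one_lt.ne
          simp [this]
        · have h2 : p ≠ 1 := hp.out.one_lt.ne'
          rw [pow_one, if_neg h2, if_pos rfl, zero_add, add_zero]
          have : π ^ p = π ^ (p - 1) * π := by
            rw [← pow_succ]; congr 1; have := hp.out.pos; omega
          rw [this, hπ]; ring
      · intro b hb
        rw [if_neg (fun h => ?_)]
        have := hinj h
        have := (Finset.mem_Ico.1 hb).1
        omega
  · have h0 : powInd p L n = 0 := if_neg h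
    rw [h0, mul_zero, zero_add, if_neg (fun h' => h ⟨0, by simpa using h'⟩),
      if_neg (fun h' => h ⟨1, by simpa using h'⟩), Finset.sum_eq_zero, add_zero]
    intro j _
    rw [if_neg (fun h' => h ⟨j, h'⟩)]

/-- The coefficients of the splitting function decay geometrically, and those of degree at least `2`
are smaller than `π`. The second bound gives `exp (π (T - T ^ p)) ≡ 1 + π T` modulo elements smaller
than `π` on the closed unit ball. -/
theorem splitCoeff_bound (k : ℕ) : ‖splitCoeff p π k‖ ≤ ρ ^ k ∧
    (2 ≤ k → ‖splitCoeff p π k‖ ≤ ‖π‖ * ρ) := by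
  have hw := norm_pi_pos hπ
  have hw1 := norm_pi_lt_one hπ
  have hwρ := norm_pi_le_rho hπ hρ0 hρ
  have hρ1 := rho_lt_one hρ
  have hs := IsSmall.prod hw.le hw1.le hρ0.le (Finset.Ico 2 (k + 2))
    (fun j hj => isSmall_factor hπ hρ0 hρ (Finset.mem_Ico.1 hj).1)
  rw [splitCoeff_eq hπ, coeff_mul]
  generalize (∏ j ∈ Finset.Ico 2 (k + 2), zser fun n => if n = p ^ j then
    ((p ^ j : ℕ) : L) * (-(π ^ p ^ j / (p : L) ^ j)) else 0) = R at hs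
  have hE : ∀ i, ‖coeff i (rescale π (zser (powInd p L)))‖ ≤ ‖π‖ ^ i := by
    intro i
    rw [coeff_rescale, coeff_zser, norm_mul, norm_pow]
    exact mul_le_of_le_one_right (by positivity) (artinHasse_integral p L i)
  constructor
  · refine IsUltrametricDist.norm_sum_le_of_forall_le_of_nonneg (by positivity) ?_
    rintro ⟨i, j⟩ hij
    rw [Finset.HasAntidiagonal.mem_antidiagonal] at hij
    rw [norm_mul, ← hij, pow_add]
    gcongr
    · exact (hE i).trans (by gcongr)
    · rcases Nat.eq_zero_or_pos j with rfl | hj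
      · rw [hs.1, norm_one, pow_zero]
      · exact (hs.2 j hj).trans (mul_le_of_le_one_left (by positivity) hw1.le)
  · intro hk
    refine IsUltrametricDist.norm_sum_le_of_forall_le_of_nonneg (by positivity) ?_
    rintro ⟨i, j⟩ hij
    rw [Finset.HasAntidiagonal.mem_antidiagonal] at hij
    simp only at hij ⊢
    rw [norm_mul]
    rcases Nat.eq_zero_or_pos j with rfl | hj
    · rw [hs.1, norm_one, mul_one]
      have : i = k := by omega
      subst this
      calc _ ≤ ‖π‖ ^ i := hE i
        _ ≤ ‖π‖ ^ 2 := pow_le_pow_of_le_one hw.le hw1.le hk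
        _ = ‖π‖ * ‖π‖ := sq _
        _ ≤ _ := by gcongr
    · calc _ ≤ 1 * (‖π‖ * ρ) := by
            gcongr
            · exact (hE i).trans (pow_le_one₀ hw.le hw1.le)
            · refine (hs.2 j hj).trans ?_
              gcongr
              exact pow_le_of_le_one hρ0.le hρ1.le (by omega)
        _ = _ := one_mul _

omit hp [CharZero L] [IsUltrametricDist L] hπ hρ0 hρ [NormedAlgebra ℚ_[p] L] in
theorem splitCoeff_zero : splitCoeff p π 0 = 1 := zcoeff_zero _

omit [IsUltrametricDist L] hπ hρ0 hρ [NormedAlgebra ℚ_[p] L] in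
theorem splitCoeff_one : splitCoeff p π 1 = π := by
  have h := zcoeff_succ (F := L)
    (fun n => (if n = 1 then π else 0) + if n = p then (p : L) * (-π) else 0) 0
  simp only [zero_add, Finset.sum_range_one, if_true, if_neg hp.out.one_lt.ne] at h
  simpa [splitCoeff, zcoeff_zero] using h

end splitting
end Dwork

/-! ### The additive character -/

namespace Dwork

section eval
open PowerSeries
variable {L : Type*} [NormedField L] [CompleteSpace L]

/-- The value at `t` of a power series (a junk value if the series diverges). -/
noncomputable def pev (F : PowerSeries L) (t : L) : L := ∑' k, coeff k F * t ^ k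

/-- Power series with absolutely summable coefficients, which therefore converge on the closed
unit disc. -/
def AbsSum (F : PowerSeries L) : Prop := Summable fun k => ‖coeff k F‖

omit [CompleteSpace L] in
theorem AbsSum.norm_summable {F : PowerSeries L} (hF : AbsSum F) {t : L} (ht : ‖t‖ ≤ 1) :
    Summable fun k => ‖coeff k F * t ^ k‖ := by
  refine Summable.of_nonneg_of_le (fun _ => norm_nonneg _) (fun k => ?_) hF
  rw [norm_mul, norm_pow]
  exact mul_le_of_le_one_right (norm_nonneg _) (pow_le_one₀ (norm_nonneg _) ht)

omit [CompleteSpace L] in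
theorem AbsSum.mul {F G : PowerSeries L} (hF : AbsSum F) (hG : AbsSum G) : AbsSum (F * G) := by
  have := summable_norm_sum_mul_antidiagonal_of_summable_norm hF hG
  simpa only [AbsSum, coeff_mul] using this

theorem pev_mul {F G : PowerSeries L} (hF : AbsSum F) (hG : AbsSum G) {t : L} (ht : ‖t‖ ≤ 1) :
    pev (F * G) t = pev F t * pev G t := by
  rw [pev, pev, pev, tsum_mul_tsum_eq_tsum_sum_antidiagonal_of_summable_norm
    (hF.norm_summable ht) (hG.norm_summable ht)]
  congr 1
  ext k
  rw [coeff_mul, Finset.sum_mul]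
  refine Finset.sum_congr rfl fun x hx => ?_
  rw [← Finset.HasAntidiagonal.mem_antidiagonal.1 hx, pow_add]
  ring

omit [CompleteSpace L] in
theorem pev_one (t : L) : pev (1 : PowerSeries L) t = 1 := by
  rw [pev, tsum_eq_single 0]
  · simp
  · intro k hk; rw [coeff_one, if_neg hk, zero_mul]

omit [CompleteSpace L] in
theorem AbsSum.one : AbsSum (1 : PowerSeries L) := by
  refine summable_of_ne_finset_zero (s := {0}) fun k hk => ?_
  rw [coeff_one, if_neg (by simpa using hk), norm_zero]

theorem AbsSum.pow {F : PowerSeries L} (hF : AbsSum F) {t : L} (ht : ‖t‖ ≤ 1) (n : ℕ) :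
    AbsSum (F ^ n) ∧ pev (F ^ n) t = pev F t ^ n := by
  induction n with
  | zero => rw [pow_zero, pow_zero]; exact ⟨AbsSum.one, pev_one t⟩
  | succ n ih => rw [pow_succ, pow_succ, pev_mul ih.1 hF ht, ih.2]; exact ⟨ih.1.mul hF, rfl⟩

omit [CompleteSpace L] in
theorem AbsSum.expand {F : PowerSeries L} (hF : AbsSum F) {n : ℕ} (hn : n ≠ 0) :
    AbsSum (F.expand n hn) := by
  have hi : Function.Injective fun k : ℕ => n * k :=
    fun a b h => Nat.eq_of_mul_eq_mul_left (Nat.pos_of_ne_zero hn) h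
  refine (Function.Injective.summable_iff hi fun x hx => ?_).1 ?_
  · rw [coeff_expand, if_neg, norm_zero]
    rintro ⟨c, rfl⟩; exact hx ⟨c, rfl⟩
  · refine hF.congr fun k => ?_
    simp [coeff_expand, Nat.mul_div_cancel_left _ (Nat.pos_of_ne_zero hn)]

omit [CompleteSpace L] in
theorem pev_expand (F : PowerSeries L) {n : ℕ} (hn : n ≠ 0) (t : L) :
    pev (F.expand n hn) t = pev F (t ^ n) := by
  have hi : Function.Injective fun k : ℕ => n * k :=
    fun a b h => Nat.eq_of_mul_eq_mul_left (Nat.pos_of_ne_zero hn) h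
  rw [pev, pev, ← hi.tsum_eq]
  · congr 1
    ext k
    simp [coeff_expand, Nat.mul_div_cancel_left _ (Nat.pos_of_ne_zero hn), pow_mul]
  · intro x hx
    rw [Function.mem_support, coeff_expand] at hx
    by_contra h
    rw [if_neg, zero_mul] at hx
    · exact hx rfl
    · rintro ⟨c, rfl⟩; exact h ⟨c, rfl⟩

end eval

section roots
variable {p : ℕ} [hp : Fact p.Prime] {L : Type*} [NormedField L] [NormedAlgebra ℚ_[p] L]
  [IsUltrametricDist L]

/-- Distinct `p`-th roots of unity are at distance at least `‖π‖` from each other. -/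
theorem eq_one_of_norm_sub_lt {π : L} (hπ : π ^ (p - 1) = -(p : L)) {ζ : L} (hζ : ζ ^ p = 1)
    (h : ‖1 - ζ‖ < ‖π‖) : ζ = 1 := by
  by_contra hne
  have hord := orderOf_eq_prime hζ hne
  have hprim := IsPrimitiveRoot.orderOf ζ
  obtain ⟨n, hn⟩ : ∃ n, p = n + 1 := ⟨p - 1, by have := hp.out.pos; omega⟩
  have hn0 : n ≠ 0 := by have := hp.out.one_lt; omega
  rw [hord, hn] at hprim
  have h1 := congrArg norm hprim.prod_one_sub_pow_eq_order
  have hz : ‖ζ‖ = 1 := by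
    have := congrArg norm hζ
    rw [norm_pow, norm_one] at this
    exact (pow_eq_one_iff_of_nonneg (norm_nonneg _) hp.out.ne_zero).1 this
  have h2 : ((n : L) + 1) = (p : L) := by rw [hn]; push_cast; rfl
  rw [h2, norm_p p L, norm_prod, ← norm_pi_pow hπ] at h1
  have h3 : ∏ k ∈ Finset.range n, ‖1 - ζ ^ (k + 1)‖ ≤ ∏ k ∈ Finset.range n, ‖1 - ζ‖ := by
    refine Finset.prod_le_prod (fun _ _ => norm_nonneg _) fun k _ => ?_
    rw [← mul_neg_geom_sum ζ (k + 1), norm_mul]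
    refine mul_le_of_le_one_right (norm_nonneg _) ?_
    refine IsUltrametricDist.norm_sum_le_of_forall_le_of_nonneg zero_le_one fun i _ => ?_
    rw [norm_pow, hz, one_pow]
  rw [Finset.prod_const, Finset.card_range, h1] at h3
  have h4 : p - 1 = n := by omega
  rw [h4] at h3
  exact absurd h3 (not_le.2 (pow_lt_pow_left₀ h (norm_nonneg _) hn0))

end roots

section splitval
open PowerSeries
variable {p : ℕ} [hp : Fact p.Prime] {L : Type*} [NormedField L] [NormedAlgebra ℚ_[p] L]
  [IsUltrametricDist L] [CharZero L] [CompleteSpace L]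

/-- The splitting function `exp (π (T - T ^ p))`, evaluated through its power series. -/
noncomputable def splitVal (p : ℕ) (π : L) (t : L) : L := pev (PowerSeries.mk (splitCoeff p π)) t

variable {π : L} (hπ : π ^ (p - 1) = -(p : L)) {ρ : ℝ} (hρ0 : 0 < ρ) (hρ : ρ ^ p ^ 2 = (p : ℝ)⁻¹)
include hπ

include hρ0 hρ in
omit [CompleteSpace L] in
theorem absSum_split : AbsSum (PowerSeries.mk (splitCoeff p π)) := by
  refine Summable.of_nonneg_of_le (fun _ => norm_nonneg _) (fun k => ?_)
    (summable_geometric_of_lt_one hρ0.le (rho_lt_one hρ))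
  rw [coeff_mk]
  exact (splitCoeff_bound hπ hρ0 hρ k).1

include hρ0 hρ in
/-- On the closed unit ball the splitting function is congruent to `1 + π t` modulo elements smaller
than `π`. -/
theorem norm_splitVal_sub {t : L} (ht : ‖t‖ ≤ 1) :
    ‖splitVal p π t - (1 + π * t)‖ ≤ ‖π‖ * ρ := by
  have hs := ((absSum_split hπ hρ0 hρ).norm_summable ht).of_norm
  have h1 := (hs.hasSum.tendsto_sum_nat.sub_const (1 + π * t)).norm
  refine le_of_tendsto h1 (Filter.eventually_atTop.2 ⟨2, fun N hN => ?_⟩)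
  obtain ⟨M, rfl⟩ := Nat.exists_eq_add_of_le hN
  rw [Finset.sum_range_add]
  simp only [coeff_mk, Finset.sum_range_succ, Finset.sum_range_zero, splitCoeff_zero,
    splitCoeff_one]
  rw [show ∀ s : L, 0 + 1 * t ^ 0 + π * t ^ 1 + s - (1 + π * t) = s by intro s; ring]
  refine IsUltrametricDist.norm_sum_le_of_forall_le_of_nonneg
    (mul_nonneg (norm_nonneg _) hρ0.le) fun i _ => ?_
  rw [norm_mul, norm_pow]
  exact (mul_le_of_le_one_right (norm_nonneg _) (pow_le_one₀ (norm_nonneg _) ht)).trans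
    ((splitCoeff_bound hπ hρ0 hρ _).2 (by omega))

omit [IsUltrametricDist L] [CompleteSpace L] in
theorem absSum_exp (ε : L) (hε : ε = π ∨ ε = -π) :
    AbsSum (zser fun n => if n = 1 then (p : L) * ε else 0) := by
  have hw := norm_pi_lt_one hπ
  refine Summable.of_nonneg_of_le (fun _ => norm_nonneg _) (fun k => ?_)
    (summable_geometric_of_lt_one (norm_nonneg π) hw)
  have hε' : ‖ε‖ = ‖π‖ := by rcases hε with rfl | rfl <;> simp
  rw [zser_single_one, coeff_rescale, coeff_exp, mul_pow, map_div₀, map_one, map_natCast,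
    mul_assoc, mul_comm, mul_assoc, norm_mul, norm_pow, hε']
  refine mul_le_of_le_one_right (by positivity) ?_
  rcases Nat.eq_zero_or_pos k with rfl | hk
  · simp
  · have h1 := norm_pow_div_factorial_le p hk
    rw [← norm_algebraMap' L, map_div₀, map_pow, map_natCast, map_natCast] at h1
    rw [mul_comm, mul_one_div]
    exact h1.trans norm_inv_lt_one.2.le

include hρ0 hρ in
/-- The `p`-th power of the splitting function is `exp (p π T) / exp (p π T ^ p)`, where now both
exponentials converge on the closed unit disc. -/
theorem splitVal_pow :
    ∃ U V : L → L, (∀ t, ‖t‖ ≤ 1 → U t * V t = 1) ∧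
      ∀ t, ‖t‖ ≤ 1 → splitVal p π t ^ p = U t * V (t ^ p) := by
  have hU := absSum_exp hπ π (Or.inl rfl)
  have hV := absSum_exp hπ (-π) (Or.inr rfl)
  refine ⟨pev (zser fun n => if n = 1 then (p : L) * π else 0),
    pev (zser fun n => if n = 1 then (p : L) * (-π) else 0), fun t ht => ?_, fun t ht => ?_⟩
  · rw [← pev_mul hU hV ht, ← zser_add]
    have : (fun n => (if n = 1 then (p : L) * π else 0) + if n = 1 then (p : L) * (-π) else 0) =
        fun _ => (0 : L) := by
      ext n; split_ifs <;> ring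
    rw [this, zser_zero, pev_one]
  · rw [splitVal, ← ((absSum_split hπ hρ0 hρ).pow ht p).2, ← pev_expand _ hp.out.ne_zero,
      ← pev_mul hU (hV.expand _) ht, ← zser_expand, ← zser_add]
    congr 1
    have h0 : PowerSeries.mk (splitCoeff p π) = zser fun n =>
        (if n = 1 then π else 0) + if n = p then (p : L) * (-π) else 0 := rfl
    have h1 := zser_sum (Finset.range p) (fun _ n =>
        (if n = 1 then π else 0) + if n = p then (p : L) * (-π) else 0)
    rw [Finset.prod_const, Finset.card_range] at h1
    rw [h0, ← h1]
    congr 1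
    ext n
    rw [Finset.sum_const, Finset.card_range, nsmul_eq_mul, mul_add, mul_ite, mul_zero]
    congr 1
    by_cases h : n = p
    · subst h; simp [Nat.div_self hp.out.pos]
    · rw [if_neg h, mul_zero]
      split_ifs with h2 h3
      · obtain ⟨c, rfl⟩ := h2
        rw [Nat.mul_div_cancel_left _ hp.out.pos] at h3
        exact absurd (by rw [h3, mul_one]) h
      · simp
      · rfl

end splitval

section character
variable {p : ℕ} [hp : Fact p.Prime] {L : Type*} [NormedField L] [NormedAlgebra ℚ_[p] L]
  [IsUltrametricDist L] [CharZero L] [CompleteSpace L]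
  {K : Type*} [Field K] [CharP K p]

/-- Dwork's additive character of `𝔽_{p^s}`: the product of the splitting function over the
Frobenius conjugates of the Teichmüller representative `τ x`. -/
noncomputable def psi (p : ℕ) (π : L) (τ : K →*₀ L) (s : ℕ) (x : K) : L :=
  ∏ i ∈ Finset.range s, splitVal p π (τ x ^ p ^ i)

variable {π : L} (hπ : π ^ (p - 1) = -(p : L)) {ρ : ℝ} (hρ0 : 0 < ρ) (hρ : ρ ^ p ^ 2 = (p : ℝ)⁻¹)
  (τ : K →*₀ L) (hτ : ∀ x, ‖τ x‖ ≤ 1) (hτa : ∀ x y, ‖τ (x + y) - τ x - τ y‖ < 1)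
include hπ hρ0 hρ hτ

omit [CharP K p] in
/-- The values of `psi` are `p`-th roots of unity: by `splitVal_pow` the `p`-th power of the product
telescopes around the Frobenius orbit. -/
theorem psi_pow {s : ℕ} {x : K} (hx : x ^ p ^ s = x) : psi p π τ s x ^ p = 1 := by
  obtain ⟨U, V, h1, h2⟩ := splitVal_pow hπ hρ0 hρ
  have ht : ∀ i, ‖τ x ^ p ^ i‖ ≤ 1 := fun i => by
    rw [norm_pow]; exact pow_le_one₀ (norm_nonneg _) (hτ x)
  rw [psi, ← Finset.prod_pow, Finset.prod_congr rfl
    (g := fun i => U (τ x ^ p ^ i) * V (τ x ^ p ^ (i + 1)))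
    (fun i _ => by rw [h2 _ (ht i), ← pow_mul, ← pow_succ]),
    Finset.prod_mul_distrib]
  have h3 : ∏ i ∈ Finset.range s, V (τ x ^ p ^ (i + 1)) = ∏ i ∈ Finset.range s, V (τ x ^ p ^ i) := by
    cases s with
    | zero => simp
    | succ s =>
      rw [Finset.prod_range_succ, Finset.prod_range_succ', ← map_pow τ x (p ^ (s + 1)), hx]
      simp
  rw [h3, ← Finset.prod_mul_distrib]
  exact Finset.prod_eq_one fun i _ => h1 _ (ht i)

omit [CharP K p] in
include hτa in
/-- Modulo elements smaller than `π`, `psi x` is `1 + π t`, with `t` the Teichmüller lift of the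
trace of `x`. This congruence identifies `psi x` among the `p`-th roots of unity. -/
theorem norm_psi_sub (s : ℕ) (x : K) :
    ‖psi p π τ s x - (1 + π * τ (∑ i ∈ Finset.range s, x ^ p ^ i))‖ < ‖π‖ := by
  have hw := norm_pi_pos hπ
  have hw1 := norm_pi_lt_one hπ
  have hρ1 := rho_lt_one hρ
  have hmax : ∀ {a b : L} {r : ℝ}, ‖a‖ < r → ‖b‖ < r → ‖a + b‖ < r := fun ha hb =>
    (IsUltrametricDist.norm_add_le_max _ _).trans_lt (max_lt ha hb)
  have hmul : ∀ {a b : L}, ‖a‖ < ‖π‖ → ‖b‖ ≤ 1 → ‖a * b‖ < ‖π‖ := by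
    intro a b ha hb
    rw [norm_mul]
    exact (mul_le_of_le_one_right (norm_nonneg _) hb).trans_lt ha
  induction s with
  | zero => simpa [psi] using hw
  | succ s ih =>
    rw [psi, Finset.prod_range_succ, ← psi, Finset.sum_range_succ]
    set A := psi p π τ s x
    set S := ∑ i ∈ Finset.range s, x ^ p ^ i
    have ht : ‖τ x ^ p ^ s‖ ≤ 1 := by
      rw [norm_pow]; exact pow_le_one₀ (norm_nonneg _) (hτ x)
    have hB := norm_splitVal_sub hπ hρ0 hρ ht
    have hB' : ‖splitVal p π (τ x ^ p ^ s) - (1 + π * τ x ^ p ^ s)‖ < ‖π‖ :=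
      hB.trans_lt (mul_lt_of_lt_one_right hw hρ1)
    set B := splitVal p π (τ x ^ p ^ s)
    have hC := hτa S (x ^ p ^ s)
    rw [map_pow] at hC
    set t := τ x ^ p ^ s
    have hπt : ‖π * t‖ ≤ ‖π‖ := by
      rw [norm_mul]; exact mul_le_of_le_one_right hw.le ht
    have hB1 : ‖B‖ ≤ 1 := by
      have : B = (B - (1 + π * t)) + (1 + π * t) := by ring
      rw [this]
      refine (IsUltrametricDist.norm_add_le_max _ _).trans (max_le (by linarith) ?_)
      exact (IsUltrametricDist.norm_add_le_max _ _).trans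
        (max_le (by simp) (by linarith))
    have hdecomp : A * B - (1 + π * τ (S + x ^ p ^ s)) =
        (A - (1 + π * τ S)) * B + ((B - (1 + π * t)) + ((B - (1 + π * t)) * (π * τ S) +
          (π * (π * t * τ S) + -(π * (τ (S + x ^ p ^ s) - τ S - t))))) := by ring
    have hπS : ‖π * τ S‖ ≤ 1 := by
      rw [norm_mul]; exact mul_le_one₀ hw1.le (norm_nonneg _) (hτ S)
    rw [hdecomp]
    refine hmax (hmul ih hB1) (hmax hB' (hmax (hmul hB' hπS) (hmax ?_ ?_)))
    · rw [norm_mul, norm_mul]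
      refine mul_lt_of_lt_one_right hw ?_
      exact (mul_le_of_le_one_right (norm_nonneg _) (hτ S)).trans_lt (hπt.trans_lt hw1)
    · rw [norm_neg, norm_mul]
      exact mul_lt_of_lt_one_right hw hC

include hτa in
/-- Both sides are `p`-th roots of unity and they are closer than `‖π‖` to each other. -/
theorem psi_add {s : ℕ} {x y : K} (hx : x ^ p ^ s = x) (hy : y ^ p ^ s = y) :
    psi p π τ s (x + y) = psi p π τ s x * psi p π τ s y := by
  have hw := norm_pi_pos hπ
  have hw1 := norm_pi_lt_one hπ
  have hxy : (x + y) ^ p ^ s = x + y := by rw [add_pow_char_pow, hx, hy]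
  have hx1 := psi_pow hπ hρ0 hρ τ hτ hx
  have hy1 := psi_pow hπ hρ0 hρ τ hτ hy
  have hxy1 := psi_pow hπ hρ0 hρ τ hτ hxy
  have hx2 := norm_psi_sub hπ hρ0 hρ τ hτ hτa s x
  have hy2 := norm_psi_sub hπ hρ0 hρ τ hτ hτa s y
  have hxy2 := norm_psi_sub hπ hρ0 hρ τ hτ hτa s (x + y)
  have htr : ∑ i ∈ Finset.range s, (x + y) ^ p ^ i =
      (∑ i ∈ Finset.range s, x ^ p ^ i) + ∑ i ∈ Finset.range s, y ^ p ^ i := by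
    rw [← Finset.sum_add_distrib]
    exact Finset.sum_congr rfl fun i _ => add_pow_char_pow ..
  rw [htr] at hxy2
  set A := psi p π τ s x
  set B := psi p π τ s y
  set C := psi p π τ s (x + y)
  set S := ∑ i ∈ Finset.range s, x ^ p ^ i
  set T := ∑ i ∈ Finset.range s, y ^ p ^ i
  have hn : ∀ {z : L}, z ^ p = 1 → ‖z‖ = 1 := fun {z} hz => by
    have := congrArg norm hz
    rw [norm_pow, norm_one] at this
    exact (pow_eq_one_iff_of_nonneg (norm_nonneg _) hp.out.ne_zero).1 this
  have hC0 : A * B ≠ 0 := by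
    rw [← norm_pos_iff, norm_mul, hn hx1, hn hy1]; norm_num
  have hmax : ∀ {a b : L} {r : ℝ}, ‖a‖ < r → ‖b‖ < r → ‖a + b‖ < r := fun ha hb =>
    (IsUltrametricDist.norm_add_le_max _ _).trans_lt (max_lt ha hb)
  have hmul : ∀ {a b : L}, ‖a‖ < ‖π‖ → ‖b‖ ≤ 1 → ‖a * b‖ < ‖π‖ := by
    intro a b ha hb
    rw [norm_mul]
    exact (mul_le_of_le_one_right (norm_nonneg _) hb).trans_lt ha
  have hπS : ‖π * τ S‖ ≤ 1 := by
    rw [norm_mul]; exact mul_le_one₀ hw1.le (norm_nonneg _) (hτ S)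
  have key : ‖A * B - C‖ < ‖π‖ := by
    have hdecomp : A * B - C = (A - (1 + π * τ S)) * B + ((B - (1 + π * τ T)) +
        ((B - (1 + π * τ T)) * (π * τ S) + (π * (π * τ T * τ S) +
          (-(C - (1 + π * τ (S + T))) + -(π * (τ (S + T) - τ S - τ T)))))) := by ring
    rw [hdecomp]
    refine hmax (hmul hx2 (hn hy1).le) (hmax hy2 (hmax (hmul hy2 hπS) (hmax ?_ (hmax ?_ ?_))))
    · rw [norm_mul, norm_mul, norm_mul]
      refine mul_lt_of_lt_one_right hw ?_
      exact (mul_le_of_le_one_right (by positivity) (hτ S)).trans_lt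
        ((mul_le_of_le_one_right (by positivity) (hτ T)).trans_lt hw1)
    · rwa [norm_neg]
    · rw [norm_neg, norm_mul]
      exact mul_lt_of_lt_one_right hw (hτa S T)
  have h1 : C / (A * B) = 1 := by
    apply eq_one_of_norm_sub_lt hπ
    · rw [div_pow, mul_pow, hx1, hy1, hxy1]; norm_num
    · rw [one_sub_div hC0, norm_div, norm_mul, hn hx1, hn hy1]
      simpa using key
  rwa [div_eq_one_iff_eq hC0] at h1

omit [CharP K p] in
include hτa in
/-- `psi` is nontrivial at elements of nonzero trace. -/
theorem psi_ne_one {s : ℕ} {x : K} (h : ∑ i ∈ Finset.range s, x ^ p ^ i ≠ 0) :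
    psi p π τ s x ≠ 1 := by
  intro h1
  have h2 := norm_psi_sub hπ hρ0 hρ τ hτ hτa s x
  rw [h1, show ∀ a : L, (1 : L) - (1 + a) = -a by intro a; ring, norm_neg, norm_mul] at h2
  have h3 : ‖τ (∑ i ∈ Finset.range s, x ^ p ^ i)‖ = 1 := by
    refine le_antisymm (hτ _) ?_
    have h4 := hτ (∑ i ∈ Finset.range s, x ^ p ^ i)⁻¹
    rw [map_inv₀, norm_inv] at h4
    have h5 : 0 < ‖τ (∑ i ∈ Finset.range s, x ^ p ^ i)‖ := norm_pos_iff.2 (by simpa using h)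
    rwa [inv_le_one₀ h5] at h4
  rw [h3, mul_one] at h2
  exact lt_irrefl _ h2

end character
end Dwork

/-! ### Finite fields and orthogonality -/

namespace Dwork

section finite
variable (K : Type*) [Field K] (p : ℕ) [hp : Fact p.Prime] [CharP K p]

/-- The subfield of `K` fixed by the `s`-th power of the Frobenius endomorphism. -/
def fixSub (s : ℕ) : Subfield K :=
  RingHom.eqLocusField (iterateFrobenius K p s) (RingHom.id K)

variable {K p} in
theorem mem_fixSub {s : ℕ} {x : K} : x ∈ fixSub K p s ↔ x ^ p ^ s = x := by
  show iterateFrobenius K p s x = RingHom.id K x ↔ _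
  rw [iterateFrobenius_def, RingHom.id_apply]

theorem finite_sum_pow_eq {s : ℕ} (hs : s ≠ 0) :
    {x : K | ∑ i ∈ Finset.range s, x ^ p ^ i = 0}.Finite ∧
      {x : K | ∑ i ∈ Finset.range s, x ^ p ^ i = 0}.ncard < p ^ s := by
  classical
  obtain ⟨t, rfl⟩ := Nat.exists_eq_succ_of_ne_zero hs
  let P : Polynomial K := ∑ i ∈ Finset.range (t + 1), Polynomial.X ^ p ^ i
  have hinj := Nat.pow_right_injective hp.out.two_le
  have hP : P ≠ 0 := by
    intro h
    have h1 := congrArg (fun Q => Polynomial.coeff Q (p ^ t)) h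
    simp only [P, Polynomial.finsetSum_coeff, Polynomial.coeff_X_pow, Polynomial.coeff_zero] at h1
    rw [Finset.sum_eq_single t] at h1
    · simp at h1
    · intro b _ hb; rw [if_neg (fun h => hb (hinj h.symm))]
    · simp
  have hdeg : P.natDegree ≤ p ^ t := by
    refine Polynomial.natDegree_sum_le_of_forall_le _ _ fun i hi => ?_
    rw [Polynomial.natDegree_X_pow]
    exact Nat.pow_le_pow_right hp.out.pos (by have := Finset.mem_range.1 hi; omega)
  have hset : {x : K | ∑ i ∈ Finset.range (t + 1), x ^ p ^ i = 0} = ↑P.roots.toFinset := by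
    ext x
    simp [P, hP, Polynomial.eval_finsetSum]
  rw [hset]
  refine ⟨Finset.finite_toSet _, ?_⟩
  rw [Set.ncard_coe_finset]
  refine (Multiset.toFinset_card_le _).trans_lt ((Polynomial.card_roots' P).trans_lt (hdeg.trans_lt ?_))
  exact Nat.pow_lt_pow_right hp.out.one_lt (by omega)

theorem fixSub_eq_rootSet {s : ℕ} (hs : s ≠ 0) :
    (fixSub K p s : Set K) = (Polynomial.X ^ p ^ s - Polynomial.X : Polynomial K).rootSet K := by
  ext x
  have h0 : (Polynomial.X ^ p ^ s - Polynomial.X : Polynomial K) ≠ 0 :=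
    FiniteField.X_pow_card_pow_sub_X_ne_zero K hs hp.out.one_lt
  rw [SetLike.mem_coe, mem_fixSub, Polynomial.mem_rootSet_of_ne h0]
  simp [sub_eq_zero]

instance fixSub_finite (s : ℕ) [hs : NeZero s] : Finite (fixSub K p s) := by
  have h := fixSub_eq_rootSet K p hs.out
  have h2 : Finite ((fixSub K p s : Set K)) := by
    rw [h]; infer_instance
  exact h2

noncomputable instance (s : ℕ) [NeZero s] : Fintype (fixSub K p s) := Fintype.ofFinite _

noncomputable instance (s : ℕ) [NeZero s] : Fintype (fixSub K p s)ˣ := Fintype.ofFinite _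

theorem card_fixSub [IsAlgClosed K] (s : ℕ) [hs : NeZero s] : Fintype.card (fixSub K p s) = p ^ s := by
  have h1 := Polynomial.card_rootSet_eq_natDegree (K := K)
    (galois_poly_separable (K := K) p (p ^ s) (dvd_pow_self p hs.out)) (IsAlgClosed.splits _)
  rw [FiniteField.X_pow_card_pow_sub_X_natDegree_eq K hs.out hp.out.one_lt, ← Nat.card_eq_fintype_card,
    ← fixSub_eq_rootSet K p hs.out] at h1
  rw [← h1, ← Nat.card_eq_fintype_card]
  rfl

/-- The trace form `∑ x ^ (p ^ i)` does not vanish identically on `𝔽_{p^s}`, for degree reasons. -/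
theorem exists_trace_ne_zero [IsAlgClosed K] (s : ℕ) [hs : NeZero s] :
    ∃ x : fixSub K p s, ∑ i ∈ Finset.range s, (x : K) ^ p ^ i ≠ 0 := by
  by_contra! h
  obtain ⟨hf, hc⟩ := finite_sum_pow_eq K p hs.out
  have h1 : (fixSub K p s : Set K) ⊆ {x : K | ∑ i ∈ Finset.range s, x ^ p ^ i = 0} :=
    fun x hx => h ⟨x, hx⟩
  have h2 := Set.ncard_le_ncard h1 hf
  have h3 : (fixSub K p s : Set K).ncard = p ^ s := by
    rw [← card_fixSub K p s, ← Nat.card_eq_fintype_card]; rfl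
  omega

end finite

section orthogonality
variable {p : ℕ} [hp : Fact p.Prime] {L : Type*} [NormedField L] [NormedAlgebra ℚ_[p] L]
  [IsUltrametricDist L] [CharZero L] [CompleteSpace L]
  {K : Type*} [Field K] [CharP K p]
variable {π : L} (hπ : π ^ (p - 1) = -(p : L)) {ρ : ℝ} (hρ0 : 0 < ρ) (hρ : ρ ^ p ^ 2 = (p : ℝ)⁻¹)
  (τ : K →*₀ L) (hτ : ∀ x, ‖τ x‖ ≤ 1) (hτa : ∀ x y, ‖τ (x + y) - τ x - τ y‖ < 1)
include hπ hρ0 hρ hτ hτa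

theorem psi_zero (s : ℕ) : psi p π τ s 0 = 1 := by
  have h0 : (0 : K) ^ p ^ s = 0 := zero_pow (pow_ne_zero _ hp.out.ne_zero)
  have h1 := psi_add hπ hρ0 hρ τ hτ hτa h0 h0
  have h2 := psi_pow hπ hρ0 hρ τ hτ h0
  rw [add_zero] at h1
  have h3 : psi p π τ s 0 ≠ 0 := by
    intro h; rw [h, zero_pow hp.out.ne_zero] at h2; exact zero_ne_one h2
  exact (mul_eq_left₀ h3).1 h1.symm

theorem psi_sum {s : ℕ} {ι : Type*} (t : Finset ι) (x : ι → K) (hx : ∀ i ∈ t, x i ∈ fixSub K p s) :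
    psi p π τ s (∑ i ∈ t, x i) = ∏ i ∈ t, psi p π τ s (x i) := by
  classical
  induction t using Finset.induction_on with
  | empty => simpa using psi_zero hπ hρ0 hρ τ hτ hτa s
  | insert a t ha ih =>
    rw [Finset.sum_insert ha, Finset.prod_insert ha,
      psi_add hπ hρ0 hρ τ hτ hτa (mem_fixSub.1 (hx a (Finset.mem_insert_self _ _))),
      ih fun i hi => hx i (Finset.mem_insert_of_mem hi)]
    exact mem_fixSub.1 (sum_mem fun i hi => hx i (Finset.mem_insert_of_mem hi))

variable [IsAlgClosed K]

/-- Orthogonality: the character `y ↦ psi (y * a)` of `𝔽_{p^s}` is nontrivial for `a ≠ 0`. -/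
theorem sum_psi_mul (s : ℕ) [NeZero s] (a : fixSub K p s) [Decidable (a = 0)] :
    ∑ y : fixSub K p s, psi p π τ s ((y : K) * a) = if a = 0 then (p : L) ^ s else 0 := by
  split_ifs with ha
  · subst ha
    simp [psi_zero hπ hρ0 hρ τ hτ hτa, card_fixSub]
  · obtain ⟨x, hx⟩ := exists_trace_ne_zero K p s
    have h1 := psi_ne_one hπ hρ0 hρ τ hτ hτa hx
    have h2 : ∑ y : fixSub K p s, psi p π τ s ((y : K) * a) =
        ∑ y : fixSub K p s, psi p π τ s (y : K) :=
      Fintype.sum_equiv (Equiv.mulRight₀ a ha) _ _ fun y => rfl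
    have h3 : ∑ y : fixSub K p s, psi p π τ s (y : K) =
        psi p π τ s (x : K) * ∑ y : fixSub K p s, psi p π τ s (y : K) := by
      rw [Finset.mul_sum]
      refine Fintype.sum_equiv (Equiv.subRight x) _ _ fun y => ?_
      rw [← psi_add hπ hρ0 hρ τ hτ hτa (mem_fixSub.1 x.2) (mem_fixSub.1 (Subtype.prop _))]
      simp
    rw [h2]
    by_contra hne
    exact h1 ((mul_eq_right₀ hne).1 h3.symm)

end orthogonality
end Dwork

/-! ### Character sums over tori -/

namespace Dwork

section geom
variable {L : Type*} [NormedField L] [IsUltrametricDist L] {σ : Type*}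

/-- Geometric decay, at rate `θ`, of the coefficients of a polynomial in terms of the degree. -/
def GeomDecay (θ : ℝ) (F : MvPolynomial σ L) : Prop :=
  ∀ w, ‖MvPolynomial.coeff w F‖ ≤ θ ^ w.degree

variable {θ : ℝ}

theorem GeomDecay.mul (hθ : 0 ≤ θ) {F G : MvPolynomial σ L} (hF : GeomDecay θ F)
    (hG : GeomDecay θ G) : GeomDecay θ (F * G) := by
  classical
  intro w
  rw [MvPolynomial.coeff_mul]
  refine IsUltrametricDist.norm_sum_le_of_forall_le_of_nonneg (pow_nonneg hθ _) fun x hx => ?_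
  rw [← Finset.HasAntidiagonal.mem_antidiagonal.1 hx, map_add, pow_add, norm_mul]
  exact mul_le_mul (hF _) (hG _) (norm_nonneg _) (pow_nonneg hθ _)

omit [IsUltrametricDist L] in
theorem GeomDecay.one (hθ : 0 ≤ θ) : GeomDecay θ (1 : MvPolynomial σ L) := by
  classical
  intro w
  rw [MvPolynomial.coeff_one]
  split_ifs with h
  · subst h; simp
  · rw [norm_zero]; exact pow_nonneg hθ _

theorem GeomDecay.prod (hθ : 0 ≤ θ) {ι : Type*} (s : Finset ι) {F : ι → MvPolynomial σ L}
    (hF : ∀ i ∈ s, GeomDecay θ (F i)) : GeomDecay θ (∏ i ∈ s, F i) := by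
  classical
  induction s using Finset.induction_on with
  | empty => exact GeomDecay.one hθ
  | insert a s ha ih =>
    rw [Finset.prod_insert ha]
    exact GeomDecay.mul hθ (hF _ (Finset.mem_insert_self _ _))
      (ih fun i hi => hF i (Finset.mem_insert_of_mem hi))

theorem GeomDecay.sum (hθ : 0 ≤ θ) {ι : Type*} (s : Finset ι) {F : ι → MvPolynomial σ L}
    (hF : ∀ i ∈ s, GeomDecay θ (F i)) : GeomDecay θ (∑ i ∈ s, F i) := by
  intro w
  rw [MvPolynomial.coeff_sum]
  exact IsUltrametricDist.norm_sum_le_of_forall_le_of_nonneg (pow_nonneg hθ _) fun i hi => hF i hi w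

omit [IsUltrametricDist L] in
theorem GeomDecay.monomial (hθ : 0 ≤ θ) {w : σ →₀ ℕ} {c : L} (hc : ‖c‖ ≤ θ ^ w.degree) :
    GeomDecay θ (MvPolynomial.monomial w c) := by
  classical
  intro v
  rw [MvPolynomial.coeff_monomial]
  split_ifs with h
  · subst h; exact hc
  · rw [norm_zero]; exact pow_nonneg hθ _

end geom

theorem prod_range_mul_eq {M : Type*} [CommMonoid M] (f : ℕ → M) (k n : ℕ) :
    ∏ b ∈ Finset.range (k * n), f b =
      ∏ a ∈ Finset.range n, ∏ i ∈ Finset.range k, f (k * a + i) := by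
  induction n with
  | zero => simp
  | succ n ih => rw [Nat.mul_succ, Finset.prod_range_add, ih, Finset.prod_range_succ]

/-- The degree over `𝔽_p` of the extension of degree `n` of `𝔽_{p^k}`; the value at `n = 0` is a
positive number so that `fixSub K p (lev k n)` is always finite. -/
def lev (k n : ℕ) : ℕ := k * ((n - 1) + 1)

theorem lev_eq (k : ℕ) {n : ℕ} (hn : 1 ≤ n) : lev k n = k * n := by
  rw [lev]; congr 1; omega

instance (k n : ℕ) [hk : NeZero k] : NeZero (lev k n) :=
  ⟨Nat.mul_ne_zero hk.out (Nat.succ_ne_zero _)⟩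

/-- The Teichmüller map is injective: a nonzero element has a lift of norm one, whereas the
difference of two elements with the same lift has a lift of norm less than one. -/
theorem teichmuller_injective {p : ℕ} [hp : Fact p.Prime] {L : Type*} [NormedField L] {K : Type*}
    [Field K] (τ : K →*₀ L) (hτa : ∀ x y, ‖τ (x + y) - τ x - τ y‖ < 1)
    (hK : ∀ x : K, ∃ n, 1 ≤ n ∧ x ^ p ^ n = x) : Function.Injective τ := by
  intro x y hxy
  by_contra hne
  have h1 := hτa (x - y) y
  rw [sub_add_cancel, hxy, sub_right_comm, sub_self, zero_sub, norm_neg] at h1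
  have h2 : x - y ≠ 0 := sub_ne_zero.2 hne
  obtain ⟨n, hn, hz⟩ := hK (x - y)
  have h3 : ‖τ (x - y)‖ ≠ 0 := by rwa [norm_ne_zero_iff, ne_eq, map_eq_zero]
  have h4 : ‖τ (x - y)‖ ^ p ^ n = ‖τ (x - y)‖ := by rw [← norm_pow, ← map_pow, hz]
  have h5 := pow_lt_self_of_lt_one₀ (lt_of_le_of_ne (norm_nonneg _) h3.symm) h1
    (Nat.one_lt_pow (by omega) hp.out.one_lt : 1 < p ^ n)
  exact h5.ne h4

section torus
open Filter Topology
variable {p : ℕ} [hp : Fact p.Prime] {L : Type*} [NormedField L] [NormedAlgebra ℚ_[p] L]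
  [IsUltrametricDist L] [CharZero L] [CompleteSpace L]
  {K : Type*} [Field K] [CharP K p]

theorem pow_mul_of_mem {k : ℕ} {x : K} (hx : x ∈ fixSub K p k) (a : ℕ) : x ^ p ^ (k * a) = x := by
  induction a with
  | zero => simp
  | succ a ih => rw [Nat.mul_succ, pow_add, pow_mul, ih, mem_fixSub.1 hx]

theorem fixSub_le_lev (k n : ℕ) : fixSub K p k ≤ fixSub K p (lev k n) :=
  fun _ hx => mem_fixSub.2 (pow_mul_of_mem hx _)

variable {σ : Type*}

/-- The `N`-th polynomial approximation to the power series `∏_w ∏_i exp (π (T - T ^ p))`, where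
`T` is the `p ^ i`-th power of the Teichmüller lift of the monomial of exponent `w` of `h`. -/
noncomputable def approx (p : ℕ) (π : L) (τ : K →*₀ L) (k : ℕ) (h : MvPolynomial σ K) (N : ℕ) :
    MvPolynomial σ L :=
  ∏ w ∈ h.support, ∏ i ∈ Finset.range k, ∑ l ∈ Finset.range N,
    MvPolynomial.monomial ((l * p ^ i) • w)
      (splitCoeff p π l * (τ (MvPolynomial.coeff w h) ^ p ^ i) ^ l)

variable {π : L} (hπ : π ^ (p - 1) = -(p : L)) {ρ : ℝ} (hρ0 : 0 < ρ) (hρ : ρ ^ p ^ 2 = (p : ℝ)⁻¹)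
  (τ : K →*₀ L) (hτ : ∀ x, ‖τ x‖ ≤ 1) (hτa : ∀ x y, ‖τ (x + y) - τ x - τ y‖ < 1)

include hπ hρ0 hρ hτ in
omit [CharP K p] [CompleteSpace L] in
/-- The coefficients of the approximations decay geometrically, uniformly in `N`. -/
theorem approx_decay (k : ℕ) (h : MvPolynomial σ K) :
    ∃ θ : ℝ, 0 < θ ∧ θ < 1 ∧ ∀ N, GeomDecay θ (approx p π τ k h N) := by
  -- All monomials `p ^ i • w` that occur have degree at most `M`, so decay in the degree of the
  -- one-variable series at rate `ρ` gives decay in the total degree at rate `ρ ^ (1 / M)`.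
  let M : ℕ := 1 + ∑ w ∈ h.support, ∑ i ∈ Finset.range k, p ^ i * w.degree
  have hM : M ≠ 0 := by simp only [M]; omega
  have hρ1 := rho_lt_one hρ
  let θ : ℝ := ρ ^ ((M : ℝ)⁻¹)
  have hθM : θ ^ M = ρ := Real.rpow_inv_natCast_pow hρ0.le hM
  have hθ : 0 < θ := Real.rpow_pos_of_pos hρ0 _
  have hθ1 : θ < 1 := Real.rpow_lt_one hρ0.le hρ1 (by positivity)
  refine ⟨θ, hθ, hθ1, fun N => ?_⟩
  refine GeomDecay.prod hθ.le _ fun w hw => GeomDecay.prod hθ.le _ fun i hi =>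
    GeomDecay.sum hθ.le _ fun l _ => GeomDecay.monomial hθ.le ?_
  have h1 : p ^ i * w.degree ≤ M := by
    refine le_trans ?_ (Nat.le_add_left _ _)
    refine le_trans ?_ (Finset.single_le_sum (fun _ _ => Nat.zero_le _) hw)
    exact Finset.single_le_sum (f := fun i => p ^ i * w.degree) (fun _ _ => Nat.zero_le _) hi
  rw [norm_mul, norm_pow, norm_pow]
  calc _ ≤ ρ ^ l * 1 := by
        refine mul_le_mul (splitCoeff_bound hπ hρ0 hρ l).1 ?_ (by positivity) (by positivity)
        exact pow_le_one₀ (by positivity) (pow_le_one₀ (norm_nonneg _) (hτ _))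
    _ = θ ^ (M * l) := by rw [mul_one, pow_mul, hθM]
    _ ≤ _ := by
        refine pow_le_pow_of_le_one hθ.le hθ1.le ?_
        rw [map_nsmul, smul_eq_mul]
        calc _ = (p ^ i * w.degree) * l := by ring
          _ ≤ _ := Nat.mul_le_mul_right _ h1

omit [CharP K p] [CompleteSpace L] [NormedAlgebra ℚ_[p] L] [IsUltrametricDist L] [CharZero L] hp in
theorem eval_approx [Fintype σ] (k : ℕ) (h : MvPolynomial σ K) (N : ℕ) (t : σ → L) :
    MvPolynomial.eval t (approx p π τ k h N) =
      ∏ w ∈ h.support, ∏ i ∈ Finset.range k, ∑ l ∈ Finset.range N,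
        splitCoeff p π l * ((τ (MvPolynomial.coeff w h) * ∏ j, t j ^ w j) ^ p ^ i) ^ l := by
  simp only [approx, map_prod, map_sum, MvPolynomial.eval_monomial]
  refine Finset.prod_congr rfl fun w _ => Finset.prod_congr rfl fun i _ =>
    Finset.sum_congr rfl fun l _ => ?_
  rw [Finsupp.prod_fintype _ _ fun _ => pow_zero _, mul_pow, mul_pow, ← mul_assoc]
  congr 1
  rw [← Finset.prod_pow, ← Finset.prod_pow]
  refine Finset.prod_congr rfl fun j _ => ?_
  rw [← pow_mul, ← pow_mul, Finsupp.smul_apply, smul_eq_mul]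
  congr 1; ring

include hπ hρ0 hρ in
theorem tendsto_splitVal {t : L} (ht : ‖t‖ ≤ 1) :
    Tendsto (fun N => ∑ l ∈ Finset.range N, splitCoeff p π l * t ^ l) atTop
      (𝓝 (splitVal p π t)) := by
  have h := ((absSum_split hπ hρ0 hρ).norm_summable ht).of_norm.hasSum.tendsto_sum_nat
  simp only [PowerSeries.coeff_mk] at h
  simpa only [splitVal, pev, PowerSeries.coeff_mk] using h

include hπ hρ0 hρ hτ hτa

/-- On Teichmüller points the products of Frobenius twists of the approximations converge to the
additive character of the value of `h`. -/
theorem tendsto_approx [Fintype σ] {k n : ℕ} (hn : 1 ≤ n) (h : MvPolynomial σ K)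
    (hh : ∀ w, MvPolynomial.coeff w h ∈ fixSub K p k) (x : σ → K)
    (hx : ∀ j, x j ∈ fixSub K p (lev k n)) :
    Tendsto (fun N => ∏ a ∈ Finset.range n,
      MvPolynomial.eval (fun j => τ (x j) ^ (p ^ k) ^ a) (approx p π τ k h N)) atTop
      (𝓝 (psi p π τ (lev k n) (MvPolynomial.eval x h))) := by
  have hmem : ∀ w ∈ h.support, MvPolynomial.coeff w h * ∏ j, x j ^ w j ∈ fixSub K p (lev k n) :=
    fun w _ => mul_mem (fixSub_le_lev k n (hh w)) (prod_mem fun j _ => pow_mem (hx j) _)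
  rw [MvPolynomial.eval_eq', psi_sum hπ hρ0 hρ τ hτ hτa _ _ hmem]
  simp only [psi]
  rw [lev_eq k hn]
  simp only [prod_range_mul_eq, eval_approx]
  rw [Finset.prod_comm]
  refine tendsto_finsetProd _ fun a _ => tendsto_finsetProd _ fun w _ =>
    tendsto_finsetProd _ fun i _ => ?_
  -- the coefficients of `h` are fixed by the `p ^ k`-power map, hence so are their lifts
  have hT : τ (MvPolynomial.coeff w h * ∏ j, x j ^ w j) ^ p ^ (k * a + i) =
      (τ (MvPolynomial.coeff w h) * ∏ j, (τ (x j) ^ (p ^ k) ^ a) ^ w j) ^ p ^ i := by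
    rw [pow_add, pow_mul]
    congr 1
    rw [map_mul, mul_pow, ← map_pow, pow_mul_of_mem (hh w) a, map_prod, ← Finset.prod_pow]
    congr 1
    refine Finset.prod_congr rfl fun j _ => ?_
    rw [map_pow, ← pow_mul, ← pow_mul, ← pow_mul, mul_comm]
  rw [hT]
  refine tendsto_splitVal hπ hρ0 hρ ?_
  rw [← hT, norm_pow]
  exact pow_le_one₀ (norm_nonneg _) (hτ _)

variable [IsAlgClosed K]

/-- Sums of the additive character of a polynomial over the points of a torus are `p`-adically
meromorphic. -/
theorem mer_torus [Fintype σ] [DecidableEq σ] (hτi : Function.Injective τ) (k : ℕ) [hk : NeZero k]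
    (h : MvPolynomial σ K) (hh : ∀ w, MvPolynomial.coeff w h ∈ fixSub K p k) :
    Mer fun n => ∑ x : σ → (fixSub K p (lev k n))ˣ,
      psi p π τ (lev k n) (MvPolynomial.eval (fun j => ((x j : fixSub K p (lev k n)) : K)) h) := by
  obtain ⟨θ, hθ, hθ1, hG⟩ := approx_decay hπ hρ0 hρ τ hτ k h
  have hQ : 2 ≤ p ^ k := hp.out.two_le.trans (Nat.le_self_pow hk.out p)
  refine mer_of_limit hθ hθ1 hQ (approx p π τ k h) hG (fun n => (fixSub K p (lev k n))ˣ)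
    (fun n => (τ : K →* L).comp (((fixSub K p (lev k n)).subtype : _ →* K).comp
      (Units.coeHom (fixSub K p (lev k n))))) ?_ ?_ _ ?_
  · intro n x y hxy
    exact Units.ext (Subtype.ext (hτi hxy))
  · intro n hn
    have h1 := card_fixSub K p (lev k n)
    rw [← pow_mul, ← lev_eq k hn, ← h1, ← Nat.card_eq_fintype_card, ← Nat.card_eq_fintype_card,
      Nat.card_units]
    exact Nat.sub_add_cancel (Nat.card_pos)
  · intro n hn
    refine tendsto_finsetSum _ fun x _ => ?_
    exact tendsto_approx hπ hρ0 hρ τ hτ hτa hn h hh _ fun j => Subtype.prop _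

end torus
end Dwork

/-! ### Counting points -/

namespace Dwork

/-- Affine space is the disjoint union of the tori on which exactly the coordinates in a given set
are nonzero. -/
theorem sum_torus_decomp {V E M : Type*} [Fintype V] [DecidableEq V] [Field E] [Fintype E]
    [Fintype Eˣ] [AddCommMonoid M] (F : (V → E) → M) :
    ∑ v : V → E, F v = ∑ S : Finset V, ∑ x : S → Eˣ,
      F fun v => if hv : v ∈ S then (x ⟨v, hv⟩ : E) else 0 := by
  classical
  rw [← Finset.sum_fiberwise Finset.univ (fun v : V → E => Finset.univ.filter fun i => v i ≠ 0)]
  refine Finset.sum_congr rfl fun S _ => ?_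
  symm
  refine Finset.sum_bij (fun x _ => fun v => if hv : v ∈ S then (x ⟨v, hv⟩ : E) else 0) ?_ ?_ ?_ ?_
  · intro x _
    rw [Finset.mem_filter]
    refine ⟨Finset.mem_univ _, ?_⟩
    ext v
    by_cases hv : v ∈ S <;> simp [hv]
  · intro x _ y _ hxy
    ext ⟨v, hv⟩
    have := congrFun hxy v
    simpa [hv] using this
  · intro v hv
    rw [Finset.mem_filter] at hv
    have hS : ∀ i, i ∈ S ↔ v i ≠ 0 := fun i => by rw [← hv.2]; simp
    refine ⟨fun i => Units.mk0 (v i) ((hS i).1 i.2), Finset.mem_univ _, ?_⟩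
    ext i
    by_cases hi : i ∈ S
    · simp [hi]
    · simp only [hi, dite_false]
      by_contra h0
      exact hi ((hS i).2 (Ne.symm h0))
  · intro x _; rfl

section counting
variable {p : ℕ} [hp : Fact p.Prime] {L : Type*} [NormedField L] [NormedAlgebra ℚ_[p] L]
  [IsUltrametricDist L] [CharZero L] [CompleteSpace L]
  {K : Type*} [Field K] [CharP K p]
variable {σ ι : Type*} [Fintype σ] [DecidableEq σ] [Fintype ι] [DecidableEq ι]

/-- The polynomial `∑ yᵢ fᵢ(x)` in the variables `x` and `y`. -/
noncomputable def pairing {E : Type*} [CommSemiring E] (f : ι → MvPolynomial σ E) :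
    MvPolynomial (σ ⊕ ι) E :=
  ∑ i, MvPolynomial.X (Sum.inr i) * MvPolynomial.rename Sum.inl (f i)

omit [Fintype σ] [DecidableEq σ] [DecidableEq ι] in
theorem eval_pairing {E : Type*} [CommSemiring E] (φ : E →+* K) (f : ι → MvPolynomial σ E)
    (v : σ ⊕ ι → K) :
    MvPolynomial.eval v (MvPolynomial.map φ (pairing f)) =
      ∑ i, v (Sum.inr i) *
        MvPolynomial.eval (fun j => v (Sum.inl j)) (MvPolynomial.map φ (f i)) := by
  simp only [pairing, map_sum, map_mul, MvPolynomial.map_X, MvPolynomial.eval_X,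
    MvPolynomial.map_rename, MvPolynomial.eval_rename]
  rfl

variable {π : L} (hπ : π ^ (p - 1) = -(p : L)) {ρ : ℝ} (hρ0 : 0 < ρ) (hρ : ρ ^ p ^ 2 = (p : ℝ)⁻¹)
  (τ : K →*₀ L) (hτ : ∀ x, ‖τ x‖ ≤ 1) (hτa : ∀ x y, ‖τ (x + y) - τ x - τ y‖ < 1)
  [IsAlgClosed K]
include hπ hρ0 hρ hτ hτa

/-- By orthogonality, the sum over `y` of `psi (∑ yᵢ fᵢ(x))` vanishes unless `x` is a common zero of
the `fᵢ`, so the sum over all `(x, y)` counts the common zeros. -/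
theorem sum_psi_pairing (k : ℕ) (f : ι → MvPolynomial σ (fixSub K p k)) (s : ℕ) [NeZero s]
    (hks : fixSub K p k ≤ fixSub K p s) :
    ∑ v : σ ⊕ ι → fixSub K p s, psi p π τ s
        (MvPolynomial.eval (fun j => (v j : K)) (MvPolynomial.map (fixSub K p k).subtype (pairing f))) =
      ((p : L) ^ s) ^ Fintype.card ι *
        (Nat.card {x : σ → fixSub K p s // ∀ i, MvPolynomial.eval (fun j => (x j : K))
          (MvPolynomial.map (fixSub K p k).subtype (f i)) = 0} : L) := by
  classical
  rw [← (Equiv.sumArrowEquivProdArrow σ ι (fixSub K p s)).symm.sum_comp, Fintype.sum_prod_type]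
  have hmem : ∀ (x : σ → fixSub K p s) i, MvPolynomial.eval (fun j => (x j : K))
      (MvPolynomial.map (fixSub K p k).subtype (f i)) ∈ fixSub K p s := fun x i => by
    rw [MvPolynomial.eval_eq']
    refine sum_mem fun w _ => mul_mem ?_ (prod_mem fun j _ => pow_mem (x j).2 _)
    rw [MvPolynomial.coeff_map]
    exact hks (Subtype.prop _)
  have key : ∀ x : σ → fixSub K p s, ∑ y : ι → fixSub K p s, psi p π τ s (MvPolynomial.eval
      (fun j => (((Equiv.sumArrowEquivProdArrow σ ι (fixSub K p s)).symm (x, y) j :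
        fixSub K p s) : K)) (MvPolynomial.map (fixSub K p k).subtype (pairing f))) =
      if ∀ i, MvPolynomial.eval (fun j => (x j : K))
          (MvPolynomial.map (fixSub K p k).subtype (f i)) = 0 then
        ((p : L) ^ s) ^ Fintype.card ι else 0 := by
    intro x
    let a : ι → fixSub K p s := fun i => ⟨_, hmem x i⟩
    have h1 : ∀ y : ι → fixSub K p s, psi p π τ s (MvPolynomial.eval
        (fun j => (((Equiv.sumArrowEquivProdArrow σ ι (fixSub K p s)).symm (x, y) j :
          fixSub K p s) : K)) (MvPolynomial.map (fixSub K p k).subtype (pairing f))) =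
        ∏ i, psi p π τ s ((y i : K) * a i) := by
      intro y
      rw [eval_pairing]
      exact psi_sum hπ hρ0 hρ τ hτ hτa Finset.univ (fun i => (y i : K) * a i)
        fun i _ => mul_mem (y i).2 (a i).2
    rw [Finset.sum_congr rfl fun y _ => h1 y, ← Fintype.piFinset_univ,
      ← Finset.prod_univ_sum (fun _ => Finset.univ) fun i (y : fixSub K p s) =>
        psi p π τ s ((y : K) * a i)]
    simp only [sum_psi_mul hπ hρ0 hρ τ hτ hτa]
    have h2 : ∀ i, a i = 0 ↔ MvPolynomial.eval (fun j => (x j : K))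
        (MvPolynomial.map (fixSub K p k).subtype (f i)) = 0 := fun i => by
      rw [Subtype.ext_iff]; rfl
    simp only [h2]
    split_ifs with h
    · simp [h]
    · push Not at h
      obtain ⟨i, hi⟩ := h
      exact Finset.prod_eq_zero (Finset.mem_univ i) (if_neg hi)
  rw [Finset.sum_congr rfl fun x _ => key x, ← Finset.sum_filter, Finset.sum_const, nsmul_eq_mul,
    mul_comm, Nat.card_eq_fintype_card, Fintype.card_subtype]

/-- The zeta series of an affine variety is `p`-adically meromorphic. -/
theorem mer_count (hτi : Function.Injective τ) (k : ℕ) [hk : NeZero k]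
    (f : ι → MvPolynomial σ (fixSub K p k)) :
    Mer fun n => (Nat.card {x : σ → fixSub K p (lev k n) // ∀ i,
      MvPolynomial.eval (fun j => (x j : K))
        (MvPolynomial.map (fixSub K p k).subtype (f i)) = 0} : L) := by
  let g : (S : Finset (σ ⊕ ι)) → σ ⊕ ι → MvPolynomial S (fixSub K p k) :=
    fun S v => if hv : v ∈ S then MvPolynomial.X ⟨v, hv⟩ else 0
  have h1 := Mer.sum Finset.univ fun (S : Finset (σ ⊕ ι)) _ =>
    mer_torus hπ hρ0 hρ τ hτ hτa hτi k
      (MvPolynomial.map (fixSub K p k).subtype (MvPolynomial.bind₁ (g S) (pairing f)))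
      fun w => by rw [MvPolynomial.coeff_map]; exact Subtype.prop _
  refine (h1.scale ((((p : L) ^ k) ^ Fintype.card ι)⁻¹)).congr fun n hn => ?_
  have hp0 : (p : L) ≠ 0 := Nat.cast_ne_zero.2 hp.out.ne_zero
  have h2 := sum_psi_pairing hπ hρ0 hρ τ hτ hτa k f (lev k n) (fixSub_le_lev k n)
  have h3 : (((p : L) ^ k) ^ Fintype.card ι)⁻¹ ^ n * ((p : L) ^ lev k n) ^ Fintype.card ι = 1 := by
    rw [lev_eq k hn, inv_pow, ← pow_mul, ← pow_mul, ← pow_mul, mul_right_comm k n, mul_assoc k]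
    exact inv_mul_cancel₀ (pow_ne_zero _ hp0)
  rw [← one_mul (Nat.cast _), ← h3, mul_assoc, ← h2, sum_torus_decomp]
  congr 1
  refine Finset.sum_congr rfl fun S _ => Finset.sum_congr rfl fun x _ => congrArg _ ?_
  rw [MvPolynomial.eval_map, MvPolynomial.eval_map]
  have h4 := MvPolynomial.eval₂Hom_bind₁ (fixSub K p k).subtype
    (fun j => ((x j : fixSub K p (lev k n)) : K)) (g S) (pairing f)
  refine Eq.trans ?_ h4.symm
  show MvPolynomial.eval₂ _ _ _ = MvPolynomial.eval₂ _ _ _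
  congr 1
  ext v
  by_cases hv : v ∈ S <;> simp [g, hv]

end counting
end Dwork

/-! ### Rationality -/

namespace Dwork

section frobenius
variable {p : ℕ} [hp : Fact p.Prime] {K : Type*} [Field K] [CharP K p] {σ ι : Type*} {k : ℕ}

/-- The points over `K` of the affine variety cut out by the `f i`. -/
abbrev Zeros (f : ι → MvPolynomial σ (fixSub K p k)) :=
  {x : σ → K // ∀ i, MvPolynomial.eval x (MvPolynomial.map (fixSub K p k).subtype (f i)) = 0}

/-- A polynomial over `𝔽_{p^k}` commutes with the `p ^ k`-power Frobenius. -/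
theorem eval_pow (F : MvPolynomial σ (fixSub K p k)) (x : σ → K) :
    MvPolynomial.eval (fun j => x j ^ p ^ k) (MvPolynomial.map (fixSub K p k).subtype F) =
      MvPolynomial.eval x (MvPolynomial.map (fixSub K p k).subtype F) ^ p ^ k := by
  rw [← iterateFrobenius_def (R := K) p k (MvPolynomial.eval x _), MvPolynomial.eval_map,
    MvPolynomial.eval_map, MvPolynomial.hom_eval₂]
  congr 1
  ext a
  exact (mem_fixSub.1 a.2).symm

/-- The `p ^ k`-power Frobenius acting on the points of a variety defined over `𝔽_{p^k}`. -/
def frob (f : ι → MvPolynomial σ (fixSub K p k)) (x : Zeros f) : Zeros f :=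
  ⟨fun j => x.1 j ^ p ^ k, fun i => by
    rw [eval_pow, x.2 i, zero_pow (pow_ne_zero _ hp.out.ne_zero)]⟩

theorem frob_iterate (f : ι → MvPolynomial σ (fixSub K p k)) (n : ℕ) (x : Zeros f) (j : σ) :
    ((frob f)^[n] x).1 j = x.1 j ^ (p ^ k) ^ n := by
  induction n with
  | zero => simp
  | succ n ih =>
    rw [Function.iterate_succ_apply', pow_succ (p ^ k) n, pow_mul, ← ih]
    rfl

theorem frob_iterate_eq_iff (f : ι → MvPolynomial σ (fixSub K p k)) (n : ℕ) (x : Zeros f) :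
    (frob f)^[n] x = x ↔ ∀ j, x.1 j ^ (p ^ k) ^ n = x.1 j := by
  rw [Subtype.ext_iff, funext_iff]
  simp only [frob_iterate]

/-- The points of a variety with coordinates in `𝔽_{p^{kn}}` are the fixed points of the `n`-th
iterate of Frobenius. -/
def fixedEquiv (f : ι → MvPolynomial σ (fixSub K p k)) {n : ℕ} (hn : 1 ≤ n) :
    {x : σ → fixSub K p (lev k n) // ∀ i, MvPolynomial.eval (fun j => (x j : K))
        (MvPolynomial.map (fixSub K p k).subtype (f i)) = 0} ≃
      {y : Zeros f // (frob f)^[n] y = y} where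
  toFun x := ⟨⟨fun j => x.1 j, x.2⟩, (frob_iterate_eq_iff _ _ _).2 fun j => by
    rw [← pow_mul, ← lev_eq k hn]
    exact mem_fixSub.1 (x.1 j).2⟩
  invFun y := ⟨fun j => ⟨y.1.1 j, mem_fixSub.2 (by
    rw [lev_eq k hn, pow_mul]
    exact (frob_iterate_eq_iff _ _ _).1 y.2 j)⟩, y.1.2⟩
  left_inv _ := rfl
  right_inv _ := rfl

end frobenius

/-- The part of the product formula that is needed: the `p`-part of a nonzero integer is at most its
absolute value. -/
theorem one_le_abs_mul_norm (p : ℕ) [hp : Fact p.Prime] (L : Type*) [NormedField L]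
    [NormedAlgebra ℚ_[p] L] (n : ℤ) (hn : n ≠ 0) : 1 ≤ |(n : ℝ)| * ‖(n : L)‖ := by
  have h0 : n.natAbs ≠ 0 := Int.natAbs_ne_zero.2 hn
  have h1 : ‖(n : L)‖ = ‖(n.natAbs : L)‖ := by
    obtain h | h := Int.natAbs_eq n
    · conv_lhs => rw [h]
      rw [Int.cast_natCast]
    · conv_lhs => rw [h]
      rw [Int.cast_neg, norm_neg, Int.cast_natCast]
  have h2 : |(n : ℝ)| = (n.natAbs : ℝ) := by rw [Nat.cast_natAbs, Int.cast_abs]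
  have h3 : p ^ padicValNat p n.natAbs ≤ n.natAbs :=
    Nat.le_of_dvd (Nat.pos_of_ne_zero h0) pow_padicValNat_dvd
  have h4 : (0 : ℝ) < (p : ℝ) ^ padicValNat p n.natAbs :=
    pow_pos (Nat.cast_pos.2 hp.out.pos) _
  rw [h1, h2, norm_natCast p L h0, inv_pow, ← div_eq_mul_inv, one_le_div h4]
  exact_mod_cast h3

/-- Rationality over a base field presented as the fixed field of a power of Frobenius inside an
algebraic closure of `𝔽_p`. -/
theorem rationality_fixSub {p : ℕ} [hp : Fact p.Prime] {K : Type*} [Field K] [CharP K p]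
    [IsAlgClosed K] (hK : ∀ x : K, ∃ n, 1 ≤ n ∧ x ^ p ^ n = x) {σ ι : Type*} [Fintype σ]
    [DecidableEq σ] [Fintype ι] [DecidableEq ι] (k : ℕ) [hk : NeZero k]
    (f : ι → MvPolynomial σ (fixSub K p k)) :
    ∃ A B : Multiset ℂ, ∀ n, 1 ≤ n →
      (Nat.card {y : Zeros f // (frob f)^[n] y = y} : ℂ) =
        (B.map (· ^ n)).sum - (A.map (· ^ n)).sum := by
  let L := PadicComplex p
  obtain ⟨π, hπ⟩ : ∃ π : L, π ^ (p - 1) = -(p : L) :=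
    IsAlgClosed.exists_pow_nat_eq _ (by have := hp.out.one_lt; omega)
  have hp1 : (0 : ℝ) < (p : ℝ)⁻¹ := norm_inv_lt_one.1
  let ρ : ℝ := (p : ℝ)⁻¹ ^ (((p ^ 2 : ℕ) : ℝ)⁻¹)
  have hρ0 : 0 < ρ := Real.rpow_pos_of_pos hp1 _
  have hρ : ρ ^ p ^ 2 = (p : ℝ)⁻¹ :=
    Real.rpow_inv_natCast_pow hp1.le (pow_ne_zero _ hp.out.ne_zero)
  let _ : Algebra (ZMod p) K := ZMod.algebra K p
  obtain ⟨τ, hτ, hτa⟩ := exists_teichmuller (L := L) p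
    (by rw [norm_p p L]; exact norm_inv_lt_one.2) K hK
  have hτi := teichmuller_injective τ hτa hK
  have hmer := mer_count hπ hρ0 hρ τ hτ hτa hτi k f
  have hfin : ∀ n, 1 ≤ n → Finite {y : Zeros f // (frob f)^[n] y = y} := fun n hn =>
    Finite.of_equiv _ (fixedEquiv f hn)
  obtain ⟨z, hz⟩ := integral_of_locally_finite (frob f) hfin
  refine exists_multiset_of_mer (L := L) _ z hz (((p ^ k) ^ Fintype.card σ : ℕ) : ℝ) ?_ ?_
    (one_le_abs_mul_norm p L) ?_
  · exact_mod_cast Nat.one_le_iff_ne_zero.2 (pow_ne_zero _ (pow_ne_zero _ hp.out.ne_zero))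
  · intro n hn
    rw [← Nat.card_congr (fixedEquiv f hn)]
    have h1 := Nat.card_le_card_of_injective (Subtype.val : {x : σ → fixSub K p (lev k n) //
      ∀ i, MvPolynomial.eval (fun j => (x j : K))
        (MvPolynomial.map (fixSub K p k).subtype (f i)) = 0} → _) Subtype.val_injective
    have h2 : (p ^ lev k n) ^ Fintype.card σ = ((p ^ k) ^ Fintype.card σ) ^ n := by
      rw [lev_eq k hn, pow_mul, pow_right_comm]
    rw [Nat.card_fun, Nat.card_eq_fintype_card (α := fixSub K p (lev k n)), card_fixSub,
      Nat.card_eq_fintype_card (α := σ), h2] at h1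
    exact_mod_cast h1
  · exact hmer.congr fun n hn => by rw [Nat.card_congr (fixedEquiv f hn)]

/-- Every element of the algebraic closure of a finite field lies in a finite subfield. -/
theorem exists_pow_eq_self (p k : ℕ) [hp : Fact p.Prime] (x : AlgebraicClosure (GaloisField p k)) :
    ∃ n, 1 ≤ n ∧ x ^ p ^ n = x := by
  let F := GaloisField p k
  have hx : IsIntegral F x := Algebra.IsIntegral.isIntegral x
  have h1 : FiniteDimensional F (IntermediateField.adjoin F {x}) :=
    IntermediateField.adjoin.finiteDimensional hx
  have h2 : Finite (IntermediateField.adjoin F {x}) := Module.finite_of_finite F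
  have h3 : Fintype (IntermediateField.adjoin F {x}) := Fintype.ofFinite _
  have h4 : CharP (IntermediateField.adjoin F {x}) p :=
    charP_of_injective_algebraMap (algebraMap F _).injective p
  obtain ⟨n, -, hn⟩ := FiniteField.card (IntermediateField.adjoin F {x}) p
  refine ⟨n, n.2, ?_⟩
  have h5 := FiniteField.pow_card (IntermediateField.AdjoinSimple.gen F x)
  rw [hn] at h5
  simpa using congrArg Subtype.val h5

end Dwork

open MvPolynomial

theorem dwork_rationality (p k : ℕ) [Fact p.Prime] (hk : k ≠ 0) (m r : ℕ)
    (f : Fin r → MvPolynomial (Fin m) (GaloisField p k)) :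
    ∃ (s t : ℕ) (α : Fin s → ℂ) (β : Fin t → ℂ),
      ∀ n : ℕ, 1 ≤ n →
        (Nat.card {x : Fin m → AlgebraicClosure (GaloisField p k) //
            (∀ j, x j ^ (p ^ k) ^ n = x j) ∧
            ∀ i, MvPolynomial.eval x
              (MvPolynomial.map
                (algebraMap (GaloisField p k) (AlgebraicClosure (GaloisField p k)))
                (f i)) = 0} : ℂ) =
          (∑ j, β j ^ n) - ∑ i, α i ^ n := by
  have hk0 : NeZero k := ⟨hk⟩
  let K := AlgebraicClosure (GaloisField p k)
  have hchar : CharP K p := charP_of_injective_algebraMap (algebraMap (GaloisField p k) K).injective p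
  have hmem : ∀ a : GaloisField p k, algebraMap (GaloisField p k) K a ∈ Dwork.fixSub K p k := by
    intro a
    have h1 : Fintype (GaloisField p k) := Fintype.ofFinite _
    have h2 := FiniteField.pow_card a
    rw [← Nat.card_eq_fintype_card, GaloisField.card p k hk] at h2
    rw [Dwork.mem_fixSub, ← map_pow, h2]
  let φ : GaloisField p k →+* Dwork.fixSub K p k := (algebraMap (GaloisField p k) K).codRestrict _ hmem
  let g : Fin r → MvPolynomial (Fin m) (Dwork.fixSub K p k) := fun i => map φ (f i)
  have hg : ∀ i, map (Dwork.fixSub K p k).subtype (g i) = map (algebraMap (GaloisField p k) K) (f i) :=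
    fun i => by
      rw [map_map]; rfl
  obtain ⟨A, B, h⟩ := Dwork.rationality_fixSub (Dwork.exists_pow_eq_self p k) k g
  obtain ⟨s, α, hα⟩ := Dwork.multiset_to_fin A
  obtain ⟨t, β, hβ⟩ := Dwork.multiset_to_fin B
  refine ⟨s, t, α, β, fun n hn => ?_⟩
  rw [← hα, ← hβ, ← h n hn]
  congr 1
  refine Nat.card_congr ⟨fun x => ⟨⟨x.1, fun i => ?_⟩, ?_⟩, fun y => ⟨y.1.1, ?_, fun i => ?_⟩,
    fun _ => rfl, fun _ => rfl⟩
  · rw [hg]; exact x.2.2 i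
  · exact (Dwork.frob_iterate_eq_iff _ _ _).2 x.2.1
  · exact (Dwork.frob_iterate_eq_iff _ _ _).1 y.2
  · rw [← hg]; exact y.1.2 i
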